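/- arXiv:2603.06415 — 4 statements merged into one kernel-verified Lean document; each statement's English description precedes it below -/
import Mathlib

section
/- Let r ≥ 3 and n ≥ 2r+2. If H is an intersecting r-uniform hypergraph on n vertices, then σ_r(H) ≤ r·C(n-2, r-2), with equality only when H is a 1-star (the family of all r-subsets of [n] containing a fixed vertex). -/
/-!
The idea is to average `∑_{v ∈ S} deg v` over the non-edges `S`. With `m = |H|` and
`N = n.choose r` this gives `σ (N - m) ≤ (n-1).choose (r-1) * r m - ∑ deg²` (`oreDeg_mul_le`), so a
large Ore-degree forces the degrees to have small variance. For an intersecting family the variance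
is bounded from below by a refinement of Hoffman's ratio bound.

Write the indicator of `H` as an affine function `c + ∑_{v ∈ S} f v` plus a remainder `g` orthogonal
to all affine functions. The affine part is determined by the degrees, and its linear component has
norm proportional to the degree variance. The Kneser form `∑_{S ∩ T = ∅} h S * h T` vanishes at the
indicator, acts on constants and on the linear part by `(n-r).choose r` and `-(n-r-1).choose (r-1)`,
and does not mix affine functions with `g` (`spectral_core`). On `g` it is bounded by
`(n-r-2).choose (r-2)` (`IsHigh.kneser_bound`). This last bound needs no eigenvectors: disjointness
from `S` is inclusion in `Sᶜ`, hence an iterate of the up operator `U` of the Boolean lattice, and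
the norm of `U` on the orthogonal complement of the affine functions is controlled level by level
with `DU - UD = n - 2k` (`upOp_norm_le`).

Inserting the resulting lower bound for the variance into the averaging inequality leaves
`(1 - c) σ + (positive) * (n c - r)² ≤ (1 - c) * r * (n-2).choose (r-2)` with `c = m / N < 1`
(`spectral_arith`, `ore_arith`). This is the inequality. Equality forces `c = r / n`, which makes
`g = 0`, so the indicator of `H` is affine, and an intersecting family with affine indicator is a
star (`star_of_affine`).
-/

open Finset

/-- The degree of a vertex `v`: the number of edges of `H` containing `v`. -/
def hdeg {n : ℕ} (H : Finset (Finset (Fin n))) (v : Fin n) : ℕ :=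
  (H.filter fun e => v ∈ e).card

/-- The Ore-degree `σ_r(H)`: the minimum of `∑_{v ∈ S} deg(v)` over all
    non-edge `r`-subsets `S` of the vertex set. -/
noncomputable def oreDeg {n : ℕ} (r : ℕ) (H : Finset (Finset (Fin n))) : ℕ :=
  sInf {d : ℕ | ∃ S : Finset (Fin n), S.card = r ∧ S ∉ H ∧ d = ∑ v ∈ S, hdeg H v}

/-! ### Up and down operators, and the Kneser form away from affine functions -/

section Operators

variable {α : Type*} [Fintype α] [DecidableEq α]

/-- The up operator of the Boolean lattice: `upOp g T` sums `g` over the sets obtained from `T` by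
deleting one element. -/
def upOp (g : Finset α → ℝ) (T : Finset α) : ℝ := ∑ v ∈ T, g (T.erase v)

/-- The down operator of the Boolean lattice, adjoint to `upOp`: `downOp g S` sums `g` over the sets
obtained from `S` by adding one element. -/
def downOp (g : Finset α → ℝ) (S : Finset α) : ℝ := ∑ v ∈ Sᶜ, g (insert v S)

/-- `g` lives on the `k`-element sets and is orthogonal to the indicator of `{S | v ∈ S}` for every
vertex `v`. For `k ≥ 1` this is orthogonality to all affine functions `S ↦ c + ∑_{v ∈ S} f v`, that
is, to the two lowest eigenspaces `E₀ ⊕ E₁` of the Johnson scheme. -/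
structure IsHigh (k : ℕ) (g : Finset α → ℝ) : Prop where
  supp : ∀ S, S.card ≠ k → g S = 0
  perp : ∀ v, ∑ S, (if v ∈ S then g S else 0) = 0

lemma upOp_adjoint (g φ : Finset α → ℝ) :
    ∑ T, upOp g T * φ T = ∑ S, g S * downOp φ S := by
  simp only [upOp, downOp, sum_mul, mul_sum]
  rw [sum_sigma', sum_sigma']
  refine sum_bij' (fun p _ => ⟨p.1.erase p.2, p.2⟩) (fun p _ => ⟨insert p.2 p.1, p.2⟩) ?_ ?_ ?_ ?_ ?_
  · simp
  · simp
  · rintro ⟨T, v⟩ h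
    simp at h
    simp [insert_erase h]
  · rintro ⟨T, v⟩ h
    simp at h
    simp [erase_insert h]
  · rintro ⟨T, v⟩ h
    simp at h
    simp [insert_erase h]

/-- The commutation relation `DU - UD = n - 2k` on the `k`-th level. -/
lemma downOp_upOp (g : Finset α → ℝ) (S : Finset α) :
    downOp (upOp g) S = upOp (downOp g) S + ((Fintype.card α : ℝ) - 2 * S.card) * g S := by
  have h1 : downOp (upOp g) S
      = ∑ v ∈ Sᶜ, (g S + ∑ w ∈ S, g ((insert v S).erase w)) := by
    refine sum_congr rfl fun v hv => ?_
    have hv' : v ∉ S := by simpa using hv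
    rw [upOp, sum_insert hv', erase_insert hv']
  have h2 : upOp (downOp g) S
      = ∑ w ∈ S, (g S + ∑ v ∈ Sᶜ, g ((insert v S).erase w)) := by
    refine sum_congr rfl fun w hw => ?_
    have hw' : w ∉ Sᶜ := by simpa using hw
    rw [downOp, compl_erase, sum_insert hw', insert_erase hw]
    congr 1
    refine sum_congr rfl fun v hv => ?_
    have : v ≠ w := by rintro rfl; exact hw' hv
    rw [erase_insert_of_ne this]
  rw [h1, h2, sum_add_distrib, sum_add_distrib, sum_comm (s := Sᶜ)]
  simp only [sum_const, card_compl, nsmul_eq_mul]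
  rw [Nat.cast_sub (card_le_univ S)]
  ring

lemma IsHigh.sum_affine {k : ℕ} {g : Finset α → ℝ} (hg : IsHigh k g) (hk : 1 ≤ k)
    (a : ℝ) (f : α → ℝ) : ∑ S, g S * (a + ∑ v ∈ S, f v) = 0 := by
  have key : ∀ f : α → ℝ, ∑ S, g S * ∑ v ∈ S, f v = 0 := by
    intro f
    have : ∀ S : Finset α, g S * ∑ v ∈ S, f v = ∑ v, f v * (if v ∈ S then g S else 0) := by
      intro S
      simp_rw [mul_ite, mul_zero]
      rw [Finset.sum_ite_mem, univ_inter, mul_sum]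
      exact sum_congr rfl fun v _ => mul_comm _ _
    simp_rw [this]
    rw [sum_comm]
    simp_rw [← mul_sum, hg.perp]
    simp
  have h0 : ∑ S, g S = 0 := by
    have h := key (fun _ => 1)
    have h' : ∑ S, g S * ∑ v ∈ S, (1 : ℝ) = k * ∑ S, g S := by
      rw [mul_sum]
      refine sum_congr rfl fun S _ => ?_
      by_cases hS : S.card = k
      · simp [hS, mul_comm]
      · simp [hg.supp S hS]
    rw [h'] at h
    have : (k : ℝ) ≠ 0 := by positivity
    simpa [this] using h
  simp_rw [mul_add, sum_add_distrib, key, ← sum_mul, h0]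
  simp

lemma IsHigh.up {k : ℕ} {g : Finset α → ℝ} (hg : IsHigh k g) (hk : 1 ≤ k) :
    IsHigh (k + 1) (upOp g) := by
  refine ⟨fun S hS => sum_eq_zero fun v hv => hg.supp _ ?_, fun v => ?_⟩
  · rw [card_erase_of_mem hv]
    have := card_pos.2 ⟨v, hv⟩
    omega
  · have h := upOp_adjoint g (fun S => if v ∈ S then 1 else 0)
    simp only [mul_ite, mul_one, mul_zero] at h
    rw [h]
    have := hg.sum_affine hk 1
      (fun w => if w = v then (Fintype.card α - k - 1 : ℝ) else 0)
    refine Eq.trans ?_ this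
    refine sum_congr rfl fun S _ => ?_
    by_cases hS : S.card = k
    · congr 1
      rw [downOp]
      by_cases hv : v ∈ S
      · simp [hv, card_compl, hS, ← hS ▸ Nat.cast_sub (R := ℝ) (card_le_univ S)]
      · simp [hv, sum_ite_eq']
    · simp [hg.supp S hS]

lemma IsHigh.down {k : ℕ} {g : Finset α → ℝ} (hg : IsHigh (k + 1) g) :
    IsHigh k (downOp g) := by
  refine ⟨fun S hS => sum_eq_zero fun v hv => hg.supp _ ?_, fun v => ?_⟩
  · rw [card_insert_of_notMem (by simpa using hv)]
    omega
  · have h := upOp_adjoint (fun S => if v ∈ S then 1 else 0) g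
    simp only [ite_mul, one_mul, zero_mul] at h
    rw [← h]
    have := hg.sum_affine (by omega) 0 (fun w => if w = v then (k : ℝ) else 0)
    refine Eq.trans ?_ this
    refine sum_congr rfl fun S _ => ?_
    by_cases hS : S.card = k + 1
    · rw [mul_comm]
      congr 1
      rw [upOp]
      by_cases hv : v ∈ S
      · simp only [mem_erase, hv, and_true, sum_ite_eq', if_true, zero_add]
        have h1 : ∀ w ∈ S, (if v ≠ w then (1 : ℝ) else 0) = 1 - if v = w then 1 else 0 := by
          intro w _
          by_cases h : v = w <;> simp [h]
        rw [sum_congr rfl h1, sum_sub_distrib]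
        simp [hv, hS]
      · simp [hv]
    · simp [hg.supp S hS]

/-- On `(E₀ ⊕ E₁)^⊥` the up operator from level `k` to level `k + 1` has squared norm at most
`(k - 1)(n - k - 2)`. The induction on `k` bounds `downOp`, the adjoint of the previous `upOp`, and
transfers the bound to the next `upOp` through the commutation relation. -/
lemma upOp_norm_le {k : ℕ} (hk : 1 ≤ k) (hkn : k + 2 ≤ Fintype.card α)
    {g : Finset α → ℝ} (hg : IsHigh k g) :
    ∑ S, upOp g S ^ 2 ≤ ((k : ℝ) - 1) * (Fintype.card α - k - 2) * ∑ S, g S ^ 2 := by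
  induction k, hk using Nat.le_induction generalizing g with
  | base =>
    have h0 : ∀ S, g S = 0 := by
      intro S
      by_cases hS : S.card = 1
      · obtain ⟨a, rfl⟩ := card_eq_one.1 hS
        have h := hg.perp a
        rw [sum_eq_single {a}] at h
        · simpa using h
        · intro T _ hT
          split_ifs with ha
          · refine hg.supp T fun hc => hT ?_
            obtain ⟨b, rfl⟩ := card_eq_one.1 hc
            rw [mem_singleton.1 ha]
          · rfl
        · simp
      · exact hg.supp S hS
    simp [upOp, h0]
  | succ k hk ih =>
    have hd := hg.down
    have hU := ih (by omega) hd
    set G := ∑ S, g S ^ 2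
    set X := ∑ S, downOp g S ^ 2 with hX
    have hG0 : 0 ≤ G := sum_nonneg fun _ _ => sq_nonneg _
    have hX0 : 0 ≤ X := sum_nonneg fun _ _ => sq_nonneg _
    have hXg : ∑ S, upOp (downOp g) S * g S = X := by
      rw [upOp_adjoint]; simp [hX, sq]
    have hcs := sum_mul_sq_le_sq_mul_sq univ (upOp (downOp g)) g
    rw [hXg] at hcs
    have hM : 0 ≤ ((k : ℝ) - 1) * (Fintype.card α - k - 2) := by
      have h1 : (1 : ℝ) ≤ k := by exact_mod_cast hk
      have h2 : (k : ℝ) + 1 + 2 ≤ Fintype.card α := by exact_mod_cast hkn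
      exact mul_nonneg (by linarith) (by linarith)
    set M := ((k : ℝ) - 1) * (Fintype.card α - k - 2) with hMdef
    -- The operator norm of `downOp` equals that of its adjoint `upOp` one level below.
    have hXM : X ≤ M * G := by
      rcases hX0.eq_or_lt with h | h
      · rw [← h]; positivity
      · have : X * X ≤ X * (M * G) := by
          calc X * X = X ^ 2 := by ring
            _ ≤ _ := hcs
            _ ≤ (M * X) * G := by gcongr
            _ = _ := by ring
        exact le_of_mul_le_mul_left this h
    have hmain : ∑ S, upOp g S ^ 2 = X + (Fintype.card α - 2 * (k + 1 : ℝ)) * G := by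
      have h := upOp_adjoint g (upOp g)
      simp_rw [← sq] at h
      rw [h, ← hXg, mul_sum, ← sum_add_distrib]
      refine sum_congr rfl fun S _ => ?_
      rw [downOp_upOp]
      by_cases hS : S.card = k + 1
      · rw [hS]; push_cast; ring
      · simp [hg.supp S hS]
    rw [hmain]
    push_cast
    have : ((k : ℝ) + 1 - 1) * (Fintype.card α - (k + 1) - 2) * G
      = M * G + (Fintype.card α - 2 * (k + 1 : ℝ)) * G := by rw [hMdef]; ring
    rw [this]
    linarith

lemma IsHigh.iterate {k : ℕ} {g : Finset α → ℝ} (hg : IsHigh k g) (hk : 1 ≤ k) (j : ℕ) :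
    IsHigh (k + j) (upOp^[j] g) := by
  induction j with
  | zero => simpa
  | succ j ih =>
    rw [Function.iterate_succ_apply']
    exact ih.up (by omega)

/-- The product of the bounds in `upOp_norm_le` over the levels `a + 2, …, a + 1 + j`, with the
factorials cleared from the denominator. -/
lemma upOp_iterate_norm_le (a : ℕ) {g : Finset α → ℝ} (hg : IsHigh (a + 2) g) (j : ℕ) :
    ∀ b, Fintype.card α = a + 2 + j + b + 2 →
    (∑ S, (upOp^[j] g) S ^ 2) * (a.factorial * b.factorial) ≤
      (a + j).factorial * (b + j).factorial * ∑ S, g S ^ 2 := by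
  induction j with
  | zero => intro b _; simp; linarith
  | succ j ih =>
    intro b hb
    have h := ih (b + 1) (by omega)
    rw [Function.iterate_succ_apply']
    have h2 := upOp_norm_le (by omega) (by omega) (hg.iterate (by omega) j)
    rw [hb] at h2
    push_cast at h2
    set s := ∑ S, (upOp^[j] g) S ^ 2
    calc _ ≤ (((a + j + 1 : ℝ) * (b + 1)) * s) * (a.factorial * b.factorial) := by
          gcongr
          refine h2.trans (le_of_eq ?_)
          ring
      _ = (a + j + 1 : ℝ) * (s * (a.factorial * (b + 1).factorial)) := by
          rw [Nat.factorial_succ]; push_cast; ring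
      _ ≤ (a + j + 1 : ℝ) * ((a + j).factorial * (b + 1 + j).factorial * ∑ S, g S ^ 2) := by
          gcongr
      _ = _ := by
          rw [← add_assoc a, Nat.factorial_succ (a + j), show b + (j + 1) = b + 1 + j by ring]
          push_cast; ring

omit [Fintype α] in
/-- Iterating `upOp` counts each subset `S ⊆ T` once for every order of removing `T \ S`. -/
lemma upOp_iterate_apply {k : ℕ} {g : Finset α → ℝ} (hg : ∀ S, S.card ≠ k → g S = 0) (j : ℕ) :
    ∀ T : Finset α, T.card = k + j →
      (upOp^[j] g) T = j.factorial * ∑ S ∈ T.powerset, g S := by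
  induction j with
  | zero =>
    intro T hT
    rw [sum_eq_single T]
    · simp
    · intro S hS hne
      refine hg S fun hc => hne ?_
      exact eq_of_subset_of_card_le (mem_powerset.1 hS) (by omega)
    · simp
  | succ j ih =>
    intro T hT
    rw [Function.iterate_succ_apply', upOp]
    have h1 : ∀ v ∈ T, (upOp^[j] g) (T.erase v)
        = j.factorial * ∑ S ∈ T.powerset, if v ∈ S then 0 else g S := by
      intro v hv
      rw [ih _ (by rw [card_erase_of_mem hv]; omega)]
      congr 1
      have h2 : (T.erase v).powerset = T.powerset.filter (v ∉ ·) := by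
        ext S
        simp [subset_erase]
      rw [h2, sum_filter]
      exact sum_congr rfl fun S _ => by by_cases h : v ∈ S <;> simp [h]
    rw [sum_congr rfl h1, ← mul_sum, sum_comm, Nat.factorial_succ, mul_sum, mul_sum]
    refine sum_congr rfl fun S hS => ?_
    by_cases hc : S.card = k
    · have h2 : ∑ v ∈ T, (if v ∈ S then 0 else g S) = (j + 1 : ℕ) * g S := by
        simp_rw [← ite_not (p := _ ∈ S)]
        rw [← sum_filter, sum_const, nsmul_eq_mul, ← sdiff_eq_filter,
          card_sdiff_of_subset (mem_powerset.1 hS), hT, hc]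
        congr 2
        omega
      rw [h2]; push_cast; ring
    · simp [hg S hc]

/-- The disjointness (Kneser) form is bounded on `(E₀ ⊕ E₁)^⊥` by `(n-r-2).choose (r-2)`, where
`r = a + 2` and `n = 2r + j`. Disjointness from `S` means inclusion in `Sᶜ`, which is the `j`-fold
iterate of `upOp` up to the factor `j!`, followed by complementation. -/
lemma IsHigh.kneser_bound {a j : ℕ} (hn : Fintype.card α = 2 * (a + 2) + j)
    {g : Finset α → ℝ} (hg : IsHigh (a + 2) g) :
    |∑ S, g S * ∑ T ∈ Sᶜ.powerset, g T| ≤ (a + j).choose a * ∑ S, g S ^ 2 := by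
  have h1 := upOp_iterate_norm_le a hg j a (by omega)
  set s := ∑ S, (upOp^[j] g) S ^ 2 with hs
  set G := ∑ S, g S ^ 2 with hG
  have hG0 : 0 ≤ G := sum_nonneg fun _ _ => sq_nonneg _
  have hE : (j.factorial : ℝ) * ∑ S, g S * ∑ T ∈ Sᶜ.powerset, g T
      = ∑ S, g S * (upOp^[j] g) Sᶜ := by
    rw [mul_sum]
    refine sum_congr rfl fun S _ => ?_
    by_cases hS : S.card = a + 2
    · rw [upOp_iterate_apply hg.supp j Sᶜ (by rw [card_compl]; omega)]
      ring
    · simp [hg.supp S hS]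
  have hs' : ∑ S, (upOp^[j] g) Sᶜ ^ 2 = s :=
    Equiv.sum_comp (compl_involutive.toPerm (compl : Finset α → Finset α))
      (fun S => (upOp^[j] g) S ^ 2)
  have hcs := sum_mul_sq_le_sq_mul_sq univ g (fun S => (upOp^[j] g) Sᶜ)
  rw [hs', ← hE] at hcs
  have hch : ((a + j).choose a : ℝ) * (a.factorial * j.factorial) = (a + j).factorial := by
    have := Nat.add_choose_mul_factorial_mul_factorial a j
    rw [← this, Nat.choose_symm_add]; push_cast; ring
  set B := ∑ S, g S * ∑ T ∈ Sᶜ.powerset, g T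
  refine abs_le_of_sq_le_sq ?_ (by positivity)
  have hpos : (0 : ℝ) < (a.factorial * j.factorial) ^ 2 := by positivity
  refine le_of_mul_le_mul_right ?_ hpos
  calc B ^ 2 * (a.factorial * j.factorial : ℝ) ^ 2
      = ((j.factorial : ℝ) * B) ^ 2 * a.factorial ^ 2 := by ring
    _ ≤ (G * s) * a.factorial ^ 2 := by gcongr
    _ = G * (s * (a.factorial * a.factorial)) := by ring
    _ ≤ G * ((a + j).factorial * (a + j).factorial * G) := by gcongr
    _ = _ := by rw [← hch]; ring

end Operators

/-! ### Counting in the slice and the spectral decomposition of an intersecting family -/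

section Decomposition

variable {α : Type*} [Fintype α] [DecidableEq α]

omit [Fintype α] in
lemma sum_powersetCard_mem (A : Finset α) {v : α} (hv : v ∈ A) (k : ℕ) (F : Finset α → ℝ) :
    ∑ S ∈ powersetCard (k + 1) A, (if v ∈ S then F S else 0)
      = ∑ S ∈ powersetCard k (A.erase v), F (insert v S) := by
  rw [← sum_filter]
  refine sum_bij' (fun S _ => S.erase v) (fun S _ => insert v S) ?_ ?_ ?_ ?_ ?_
  · intro S hS
    simp only [mem_filter, mem_powersetCard] at hS
    rw [mem_powersetCard, card_erase_of_mem hS.2, hS.1.2]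
    exact ⟨erase_subset_erase _ hS.1.1, rfl⟩
  · intro S hS
    simp only [mem_powersetCard, subset_erase] at hS
    simp [card_insert_of_notMem hS.1.2, hS.2, insert_subset_iff, hv, hS.1.1]
  · intro S hS
    simp only [mem_filter] at hS
    exact insert_erase hS.2
  · intro S hS
    simp only [mem_powersetCard, subset_erase] at hS
    exact erase_insert hS.1.2
  · intro S hS
    simp only [mem_filter] at hS
    simp [insert_erase hS.2]

omit [Fintype α] in
lemma sum_powersetCard_sum (A : Finset α) (k : ℕ) (f : α → ℝ) :
    ∑ S ∈ powersetCard (k + 1) A, ∑ v ∈ S, f v = (#A - 1).choose k * ∑ v ∈ A, f v := by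
  have h : ∀ S ∈ powersetCard (k + 1) A,
      ∑ v ∈ S, f v = ∑ v ∈ A, if v ∈ S then f v else 0 := by
    intro S hS
    rw [sum_ite_mem, inter_eq_right.2 (mem_powersetCard.1 hS).1]
  rw [sum_congr rfl h, sum_comm, mul_sum]
  refine sum_congr rfl fun v hv => ?_
  rw [sum_powersetCard_mem A hv k (fun _ => f v)]
  simp [card_erase_of_mem hv]

lemma sum_powersetCard_mem_sum (k : ℕ) (v : α) (f : α → ℝ) :
    ∑ S ∈ powersetCard (k + 2) (univ : Finset α), (if v ∈ S then ∑ w ∈ S, f w else 0)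
      = (Fintype.card α - 1).choose (k + 1) * f v
        + (Fintype.card α - 2).choose k * (∑ w, f w - f v) := by
  rw [sum_powersetCard_mem univ (mem_univ v) (k + 1)]
  have h : ∀ S ∈ powersetCard (k + 1) ((univ : Finset α).erase v),
      ∑ w ∈ insert v S, f w = f v + ∑ w ∈ S, f w := by
    intro S hS
    rw [mem_powersetCard, subset_erase] at hS
    exact sum_insert hS.1.2
  rw [sum_congr rfl h, sum_add_distrib, sum_powersetCard_sum]
  have := add_sum_erase univ f (mem_univ v)
  rw [← this]
  simp [card_erase_of_mem, card_univ, Nat.sub_sub]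

lemma sum_edges_sum {H : Finset (Finset α)} {d : α → ℝ} (hd : ∀ v, d v = #{e ∈ H | v ∈ e})
    (φ : α → ℝ) : ∑ S ∈ H, ∑ v ∈ S, φ v = ∑ v, φ v * d v := by
  simp_rw [hd, card_filter]
  push_cast
  simp_rw [mul_sum]
  rw [sum_comm]
  refine sum_congr rfl fun S _ => ?_
  simp [sum_ite_mem]

lemma sum_degree {r : ℕ} {H : Finset (Finset α)} (hunif : ∀ e ∈ H, #e = r) {d : α → ℝ}
    (hd : ∀ v, d v = #{e ∈ H | v ∈ e}) : ∑ v, d v = r * #H := by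
  have h := sum_edges_sum hd (fun _ => 1)
  simp only [one_mul] at h
  rw [← h, sum_congr rfl (fun S hS => by rw [sum_const, hunif S hS])]
  simp [mul_comm]

/-- The quadratic form of the Kneser graph: the sum of `x S * y T` over disjoint pairs `S`, `T`. -/
def disjForm (x y : Finset α → ℝ) : ℝ := ∑ S, x S * ∑ T ∈ Sᶜ.powerset, y T

lemma disjForm_comm (x y : Finset α → ℝ) : disjForm x y = disjForm y x := by
  have h : ∀ x y : Finset α → ℝ,
      disjForm x y = ∑ S, ∑ T, if Disjoint S T then x S * y T else 0 := by
    intro x y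
    refine sum_congr rfl fun S _ => ?_
    rw [← sum_filter, mul_sum]
    refine sum_congr ?_ fun _ _ => rfl
    ext T
    simp [subset_compl_iff_disjoint_left]
  rw [h, h, sum_comm]
  simp_rw [disjoint_comm, mul_comm]

lemma disjForm_sub_left (x y z : Finset α → ℝ) :
    disjForm (fun S => x S - y S) z = disjForm x z - disjForm y z := by
  simp [disjForm, sub_mul]

/-- The function `S ↦ c + ∑_{v ∈ S} f v` on the `r`-element sets, extended by zero. -/
def affineOn (r : ℕ) (c : ℝ) (f : α → ℝ) (S : Finset α) : ℝ :=
  if #S = r then c + ∑ v ∈ S, f v else 0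

lemma IsHigh.sum_affineOn {r : ℕ} {g : Finset α → ℝ} (hg : IsHigh r g) (hr : 1 ≤ r)
    (c : ℝ) (f : α → ℝ) : ∑ S, g S * affineOn r c f S = 0 := by
  rw [← hg.sum_affine hr c f]
  refine sum_congr rfl fun S _ => ?_
  by_cases hS : #S = r
  · simp [affineOn, hS]
  · simp [hg.supp S hS]

/-- The Kneser operator maps affine functions to affine functions: constants are scaled by
`(n-r).choose r`, and linear parts with `∑ f = 0` by `-(n-r-1).choose (r-1)`. -/
lemma sum_affineOn_compl {r : ℕ} (c : ℝ) {f : α → ℝ} (hf : ∑ v, f v = 0) {S : Finset α}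
    (hS : #S = r + 1) :
    ∑ T ∈ Sᶜ.powerset, affineOn (r + 1) c f T
      = (Fintype.card α - (r + 1)).choose (r + 1) * c
        + ∑ v ∈ S, -((Fintype.card α - (r + 1) - 1).choose r : ℝ) * f v := by
  have h := sum_powersetCard_sum Sᶜ r f
  simp only [affineOn]
  rw [← sum_filter, ← powersetCard_eq_filter, sum_add_distrib, h, ← mul_sum]
  have := sum_add_sum_compl S f
  simp [card_compl, hS, show ∑ v ∈ Sᶜ, f v = -∑ v ∈ S, f v by linarith]

/-- The indicator of an intersecting family splits as an affine function plus a remainder `g` in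
`(E₀ ⊕ E₁)^⊥`. The affine part is read off from the degrees, with `V` the total squared deviation
of the degrees from their mean `μ`. The value of the Kneser form at `g` is then determined, because
that form vanishes at the indicator. -/
lemma spectral_core {a j : ℕ} (hn : Fintype.card α = 2 * (a + 2) + j)
    (H : Finset (Finset α)) (hunif : ∀ e ∈ H, #e = a + 2)
    (hint : ∀ e ∈ H, ∀ f ∈ H, (e ∩ f).Nonempty)
    (d : α → ℝ) (hd : ∀ v, d v = #{e ∈ H | v ∈ e})
    {c D N μ : ℝ} (hμ : μ = (a + 2) * #H / Fintype.card α)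
    (hD : D = (Fintype.card α - 2).choose (a + 1))
    (hN : N = (Fintype.card α).choose (a + 2)) (hc : c = #H / N)
    {f : α → ℝ} (hf : ∀ v, f v = (d v - μ) / D)
    {V : ℝ} (hV : V = ∑ v, (d v - μ) ^ 2)
    {g : Finset α → ℝ}
    (hg : ∀ S, g S = (if S ∈ H then 1 else 0) - affineOn (a + 2) c f S) :
    IsHigh (a + 2) g ∧ ∑ S, g S ^ 2 = #H - c * #H - V / D ∧
    disjForm g g = (Fintype.card α - (a + 2) - 1).choose (a + 1) * (V / D)
       - (Fintype.card α - (a + 2)).choose (a + 2) * c * #H := by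
  set n := Fintype.card α with hndef
  have hn0 : (n : ℝ) ≠ 0 := by rw [hn]; positivity
  have hD0 : D ≠ 0 := by
    rw [hD]; exact_mod_cast (Nat.choose_pos (by omega)).ne'
  have hN0 : N ≠ 0 := by
    rw [hN]; exact_mod_cast (Nat.choose_pos (by omega)).ne'
  set ind : Finset α → ℝ := fun S => if S ∈ H then 1 else 0 with hind
  set aff := affineOn (a + 2) c f with haff
  have hg' : ∀ S, g S = ind S - aff S := hg
  have hdc : ∀ v, ∑ S, (if v ∈ S then ind S else 0) = d v := by
    intro v
    rw [hd, card_filter]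
    push_cast
    rw [← univ_inter H, ← sum_ite_mem]
    refine sum_congr rfl fun S _ => ?_
    simp only [hind]
    split_ifs <;> rfl
  have hHf := sum_edges_sum hd
  have hdsum : ∑ v, d v = (a + 2) * #H := by
    rw [sum_degree hunif hd]; push_cast; ring
  have hdev : ∑ v, (d v - μ) = 0 := by
    rw [sum_sub_distrib, hdsum, sum_const, card_univ, ← hndef, hμ, nsmul_eq_mul]
    field_simp
    ring
  have hfsum : ∑ v, f v = 0 := by
    simp_rw [hf, ← sum_div, hdev]; simp
  have hfd : ∑ v, f v * d v = V / D := by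
    have : ∀ v, f v * d v = (d v - μ) ^ 2 / D + μ * f v := by
      intro v; rw [hf]; field_simp; ring
    simp_rw [this, sum_add_distrib, ← mul_sum, hfsum, ← sum_div, hV]
    simp
  have hindaff : ∑ S, ind S * aff S = c * #H + V / D := by
    simp only [hind, ite_mul, one_mul, zero_mul]
    rw [sum_ite_mem, univ_inter]
    have : ∀ S ∈ H, aff S = c + ∑ v ∈ S, f v := by
      intro S hS
      simp [haff, affineOn, hunif S hS]
    rw [sum_congr rfl this, sum_add_distrib, hHf, hfd]
    simp [mul_comm]
  have hbin1 : ((n - 1).choose (a + 1) : ℝ) = (n - 2).choose a + D := by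
    rw [hD, show n - 1 = n - 2 + 1 by omega, Nat.choose_succ_succ]; push_cast; ring
  have hbin2 : (n : ℝ) * (n - 1).choose (a + 1) = N * (a + 2) := by
    have := Nat.add_one_mul_choose_eq (n - 1) (a + 1)
    rw [show n - 1 + 1 = n by omega] at this
    rw [hN]; exact_mod_cast this
  have hhigh : IsHigh (a + 2) g := by
    refine ⟨fun S hS => ?_, fun v => ?_⟩
    · have : S ∉ H := fun h => hS (hunif S h)
      simp [hg, haff, affineOn, hS, this]
    · have h1 : ∀ S, (if v ∈ S then g S else 0)
          = (if v ∈ S then ind S else 0) - (if v ∈ S then aff S else 0) := by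
        intro S; rw [hg']; split_ifs <;> simp
      have h2 : ∑ S, (if v ∈ S then aff S else 0)
          = ∑ S ∈ powersetCard (a + 2) univ, (if v ∈ S then c + ∑ w ∈ S, f w else 0) := by
        have : ∀ S, (if v ∈ S then aff S else 0)
            = if #S = a + 2 then (if v ∈ S then c + ∑ w ∈ S, f w else 0) else 0 := by
          intro S; simp only [haff, affineOn]; split_ifs <;> rfl
        simp_rw [this]
        rw [← sum_filter, powersetCard_eq_filter, powerset_univ]
      have h3 : ∀ S : Finset α, (if v ∈ S then c + ∑ w ∈ S, f w else 0)
          = (if v ∈ S then c else 0) + (if v ∈ S then ∑ w ∈ S, f w else 0) := by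
        intro S; split_ifs <;> simp
      simp_rw [h1, sum_sub_distrib, hdc, h2, h3]
      rw [sum_add_distrib, sum_powersetCard_mem_sum, hfsum,
        sum_powersetCard_mem univ (mem_univ v) (a + 1) (fun _ => c), sum_const,
        card_powersetCard, card_erase_of_mem (mem_univ v), card_univ, ← hndef, nsmul_eq_mul]
      have h4 : ((n - 1).choose (a + 1) : ℝ) * c = μ := by
        rw [hc, hμ]
        field_simp
        linear_combination (#H : ℝ) * hbin2
      rw [h4, hbin1, hf]
      field_simp
      ring
  have hgaff : ∑ S, g S * aff S = 0 := hhigh.sum_affineOn (by omega) c f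
  refine ⟨hhigh, ?_, ?_⟩
  · have h1 : ∀ S, g S ^ 2 = ind S - ind S * aff S - g S * aff S := by
      intro S
      have : ind S * ind S = ind S := by simp only [hind]; split_ifs <;> simp
      rw [hg']
      linear_combination this
    simp_rw [h1, sum_sub_distrib, hgaff, hindaff]
    simp [hind]
    ring
  · have hgfun : g = fun S => ind S - aff S := funext hg'
    have hii : disjForm ind ind = 0 := by
      refine sum_eq_zero fun S _ => ?_
      by_cases hS : S ∈ H
      · rw [sum_eq_zero, mul_zero]
        intro T hT
        simp only [hind, ite_eq_right_iff, one_ne_zero, imp_false]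
        intro hTH
        obtain ⟨x, hx⟩ := hint S hS T hTH
        have := mem_powerset.1 hT (mem_inter.1 hx).2
        exact mem_compl.1 this (mem_inter.1 hx).1
      · simp [hind, hS]
    have hgA : disjForm g aff = 0 := by
      rw [← hhigh.sum_affine (by omega) ((n - (a + 2)).choose (a + 2) * c)
        (fun v => -((n - (a + 2) - 1).choose (a + 1) : ℝ) * f v)]
      refine sum_congr rfl fun S _ => ?_
      by_cases hS : #S = a + 2
      · rw [sum_affineOn_compl c hfsum hS]
      · simp [hhigh.supp S hS]
    have hiA : disjForm ind aff = (n - (a + 2)).choose (a + 2) * c * #H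
        - (n - (a + 2) - 1).choose (a + 1) * (V / D) := by
      simp only [disjForm, hind, ite_mul, one_mul, zero_mul]
      rw [sum_ite_mem, univ_inter,
        sum_congr rfl (fun S hS => sum_affineOn_compl c hfsum (hunif S hS)),
        sum_add_distrib, ← hfd]
      simp_rw [← mul_sum, hHf]
      simp
      ring
    have e1 : disjForm g g = disjForm ind g - disjForm aff g := by
      conv_lhs => rw [hgfun]
      rw [disjForm_sub_left, ← hgfun]
    have e2 : disjForm ind g = disjForm ind ind - disjForm ind aff := by
      rw [disjForm_comm, hgfun, disjForm_sub_left, disjForm_comm aff]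
    rw [e1, e2, disjForm_comm aff, hgA, hii, hiA]
    ring

end Decomposition

/-! ### Families with affine indicator, and the averaging argument -/

section Star

variable {α : Type*} [Fintype α] [DecidableEq α]

/-- An intersecting family whose indicator is affine is a star. Exchanging `v` for `w` in a set shows
that `f` takes differences in `{-1, 0, 1}`; if `f v` and `f u` both exceed `f w`, then all sets
containing `v` or `u` but not `w` are edges, and two of these are disjoint. -/
lemma star_of_affine {r : ℕ} (hr : 1 ≤ r) (hn : 2 * r + 1 ≤ Fintype.card α)
    {H : Finset (Finset α)} (hunif : ∀ e ∈ H, #e = r)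
    (hint : ∀ e ∈ H, ∀ f ∈ H, (e ∩ f).Nonempty)
    (c : ℝ) (f : α → ℝ)
    (haff : ∀ S : Finset α, #S = r → (if S ∈ H then (1 : ℝ) else 0) = c + ∑ v ∈ S, f v)
    (hne : H.Nonempty) (hfull : ∃ S : Finset α, #S = r ∧ S ∉ H) :
    ∃ x : α, H = (univ.powersetCard r).filter fun e => x ∈ e := by
  have swap : ∀ (S : Finset α) (v w : α), #S = r → v ∈ S → w ∉ S →
      (if S ∈ H then (1 : ℝ) else 0) - (if insert w (S.erase v) ∈ H then 1 else 0)
        = f v - f w := by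
    intro S v w hS hv hw
    have hw' : w ∉ S.erase v := fun h => hw (mem_of_mem_erase h)
    have hc : #(insert w (S.erase v)) = r := by
      rw [card_insert_of_notMem hw', card_erase_of_mem hv]; omega
    rw [haff S hS, haff _ hc, sum_insert hw', ← add_sum_erase S f hv]
    ring
  have tri : ∀ v w, f v - f w = 1 ∨ f v - f w = 0 ∨ f v - f w = -1 := by
    intro v w
    by_cases hvw : v = w
    · simp [hvw]
    obtain ⟨S, hvS, hSw, hS⟩ := exists_subsuperset_card_eq (s := {v}) (t := univ.erase w) (n := r)
      (by simpa using hvw) (by simpa) (by rw [card_erase_of_mem (mem_univ w), card_univ]; omega)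
    rw [← swap S v w hS (by simpa using hvS) (subset_erase.1 hSw).2]
    split_ifs <;> simp
  have memH : ∀ (S : Finset α) (v w : α), #S = r → v ∈ S → w ∉ S → f v - f w = 1 → S ∈ H := by
    intro S v w hS hv hw h
    by_contra hSH
    have := swap S v w hS hv hw
    rw [h, if_neg hSH] at this
    split_ifs at this <;> norm_num at this
  have notMemH : ∀ (S : Finset α) (v w : α), #S = r → w ∈ S → v ∉ S → f v - f w = 1 → S ∉ H := by
    intro S v w hS hw hv h hSH
    have := swap S w v hS hw hv
    rw [if_pos hSH] at this
    split_ifs at this <;> linarith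
  have hex : ∃ v w, f v - f w = 1 := by
    by_contra! hcon
    have hconst : ∀ v w, f v = f w := by
      intro v w
      rcases tri v w with h | h | h
      · exact absurd h (hcon v w)
      · linarith
      · exact absurd (by linarith : f w - f v = 1) (hcon w v)
    obtain ⟨S, hS⟩ := hne
    obtain ⟨T, hT, hTH⟩ := hfull
    have h1 := haff S (hunif S hS)
    have h2 := haff T hT
    obtain ⟨x, hx⟩ : S.Nonempty := card_pos.1 (by rw [hunif S hS]; omega)
    rw [if_pos hS, sum_congr rfl (fun v _ => hconst v x), sum_const, hunif S hS] at h1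
    rw [if_neg hTH, sum_congr rfl (fun v _ => hconst v x), sum_const, hT] at h2
    linarith
  obtain ⟨v, w, hvw⟩ := hex
  have hall : ∀ u, u ≠ v → f v - f u = 1 := by
    intro u huv
    rcases tri v u with h | h | h
    · exact h
    · exfalso
      have huw : f u - f w = 1 := by linarith
      have hvw' : v ≠ w := by rintro rfl; simp at hvw
      have huw' : u ≠ w := by rintro rfl; simp at huw
      obtain ⟨S, hvS, hSw, hS⟩ := exists_subsuperset_card_eq (s := {v})
        (t := univ \ {u, w}) (n := r)
        (by simp [huv.symm, hvw']) (by simpa)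
        (by rw [card_sdiff_of_subset (subset_univ _), card_univ, card_pair huw']; omega)
      have huS : u ∉ S := fun h => by simpa using hSw h
      have hwS : w ∉ S := fun h => by simpa using hSw h
      obtain ⟨T, huT, hTw, hT⟩ := exists_subsuperset_card_eq (s := {u})
        (t := univ \ insert w S) (n := r)
        (by simp [huS, huw']) (by simpa)
        (by rw [card_sdiff_of_subset (subset_univ _), card_univ, card_insert_of_notMem hwS]; omega)
      have hwT : w ∉ T := fun h => by simpa using hTw h
      obtain ⟨x, hx⟩ := hint S (memH S v w hS (by simpa using hvS) hwS hvw)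
        T (memH T u w hT (by simpa using huT) hwT huw)
      rw [mem_inter] at hx
      have := hTw hx.2
      simp [hx.1] at this
    · rcases tri u w with h' | h' | h' <;> linarith
  refine ⟨v, ext fun S => ?_⟩
  rw [mem_filter, mem_powersetCard]
  constructor
  · intro hSH
    have hS := hunif S hSH
    refine ⟨⟨subset_univ _, hS⟩, ?_⟩
    by_contra hv
    obtain ⟨x, hx⟩ : S.Nonempty := card_pos.1 (by omega)
    exact notMemH S v x hS hx hv (hall x (by rintro rfl; exact hv hx)) hSH
  · rintro ⟨⟨-, hS⟩, hv⟩
    obtain ⟨x, -, hx⟩ := exists_mem_notMem_of_card_lt_card (s := S) (t := univ)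
      (by rw [card_univ]; omega)
    exact memH S v x hS hv hx (hall x (by rintro rfl; exact hx hv))

end Star

/-- The Ore-degree is at most the average of `∑_{v ∈ S} deg v` over the non-edges `S`. -/
lemma oreDeg_mul_le {n a : ℕ} (H : Finset (Finset (Fin n))) (hunif : ∀ e ∈ H, #e = a + 2) :
    (oreDeg (a + 2) H : ℝ) * (n.choose (a + 2) - #H)
      ≤ (n - 1).choose (a + 1) * ((a + 2) * #H) - ∑ v, (hdeg H v : ℝ) ^ 2 := by
  have hsub : H ⊆ powersetCard (a + 2) univ := fun e he =>
    mem_powersetCard.2 ⟨subset_univ _, hunif e he⟩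
  have hcard : (#(powersetCard (a + 2) (univ : Finset (Fin n)) \ H) : ℝ)
      = n.choose (a + 2) - #H := by
    rw [cast_card_sdiff hsub, card_powersetCard, card_univ, Fintype.card_fin]
  have hsum := sum_sdiff (f := fun S => ∑ v ∈ S, (hdeg H v : ℝ)) hsub
  rw [sum_edges_sum (d := fun v => (hdeg H v : ℝ)) (fun _ => rfl), sum_powersetCard_sum,
    sum_degree hunif (d := fun v => (hdeg H v : ℝ)) (fun _ => rfl), card_univ, Fintype.card_fin] at hsum
  simp_rw [← sq] at hsum
  push_cast at hsum
  rw [← hsum, add_sub_cancel_right, ← hcard, mul_comm, ← nsmul_eq_mul]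
  refine card_nsmul_le_sum _ _ _ fun S hS => ?_
  rw [mem_sdiff, mem_powersetCard] at hS
  have : oreDeg (a + 2) H ≤ ∑ v ∈ S, hdeg H v := Nat.sInf_le ⟨S, hS.1.2, hS.2, rfl⟩
  exact_mod_cast this

/-- Numerical content of the spectral inequality. Here `c = |H| / N` is the density, `G` the squared
norm of the remainder, `W` that of the linear part, and `k0`, `-k1`, `±k2` stand for the Kneser
eigenvalues of orders `0`, `1`, `2`. Only `k2 / k1 ≤ (r - 2) / (r - 1)` is used for the bound on
`W`; this is where `n ≥ 2r + 2` enters. -/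
lemma spectral_arith {r n N c W G k0 k1 k2 : ℝ} (hr : 3 ≤ r) (hn : 2 * r + 2 ≤ n) (hN : 0 < N)
    (hc0 : 0 ≤ c) (hk1 : 0 < k1) (hb0 : k0 * r = (n - r) * k1)
    (hb2 : k2 * (n - r - 1) = k1 * (r - 1)) (hG0 : 0 ≤ G) (hG : G = c * N - c * (c * N) - W)
    (hlow : k0 * c * (c * N) ≤ k1 * W + k2 * G) :
    c < 1 ∧
    (r - 1) * (n - r) * c * (c * N) - r * (r - 2) * ((1 - c) * (c * N)) ≤ r * W ∧
    (n * c = r → G = 0) := by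
  have hr1 : 0 < r - 1 := by linarith
  have hr2 : 0 < r - 2 := by linarith
  have hr0 : 0 < r := by linarith
  have hnr : 0 < n - r := by linarith
  have hk2le : k2 * (r - 1) ≤ k1 * (r - 2) := by
    have h3 : 0 < n - r - 1 := by linarith
    refine le_of_mul_le_mul_right ?_ h3
    calc k2 * (r - 1) * (n - r - 1) = k1 * ((r - 1) * (r - 1)) := by
          linear_combination (r - 1) * hb2
      _ ≤ k1 * ((r - 2) * (n - r - 1)) := by
          refine mul_le_mul_of_nonneg_left ?_ hk1.le
          nlinarith
      _ = _ := by ring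
  have hspec : (r - 1) * ((n - r) * c * (c * N)) ≤ r * ((r - 1) * W + (r - 2) * G) := by
    refine le_of_mul_le_mul_left ?_ hk1
    have e2 := mul_le_mul_of_nonneg_right hk2le hG0
    calc k1 * ((r - 1) * ((n - r) * c * (c * N)))
        = r * (r - 1) * (k0 * c * (c * N)) := by
          linear_combination -(r - 1) * c * (c * N) * hb0
      _ ≤ r * (r - 1) * (k1 * W + k2 * G) := by gcongr
      _ = r * ((r - 1) * (k1 * W) + k2 * (r - 1) * G) := by ring
      _ ≤ r * ((r - 1) * (k1 * W) + k1 * (r - 2) * G) := by gcongr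
      _ = _ := by ring
  have hW : (r - 1) * (n - r) * c * (c * N) - r * (r - 2) * ((1 - c) * (c * N)) ≤ r * W := by
    rw [hG] at hspec
    linarith
  refine ⟨?_, hW, fun hnc => le_antisymm ?_ hG0⟩
  · by_contra! h
    have hx : (c * N) * 1 ≤ (c * N) * c := mul_le_mul_of_nonneg_left h (by positivity)
    have hWneg : W ≤ 0 := by linarith
    have e1 : 0 ≤ r * (r - 2) * ((c - 1) * (c * N)) := by
      have : 0 ≤ c - 1 := by linarith
      positivity
    have e2 : 0 < (r - 1) * (n - r) * c * (c * N) := by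
      have h3 : 0 < c := by linarith
      positivity
    have e3 : r * W ≤ 0 := mul_nonpos_of_nonneg_of_nonpos hr0.le hWneg
    linarith
  · have e1 : (n - r) * c = r * (1 - c) := by linear_combination hnc
    rw [e1] at hspec
    have e3 : (r - 1) * ((1 - c) * (c * N)) ≤ (r - 1) * W + (r - 2) * G := by
      refine le_of_mul_le_mul_left ?_ hr0
      linarith
    have e4 : (r - 1) * G = (r - 1) * ((1 - c) * (c * N)) - (r - 1) * W := by rw [hG]; ring
    linarith

/-- The averaging bound combined with the lower bound on the degree variance. The slack is a
nonnegative multiple of the perfect square `(n c - r)²`. -/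
lemma ore_arith {n r N c W σ : ℝ} (hr : 3 ≤ r) (hn : r < n) (hN : 0 < N) (hc : c < 1)
    (hW : (r - 1) * (n - r) * c * (c * N) - r * (r - 2) * ((1 - c) * (c * N)) ≤ r * W)
    (hσ : σ * (N - c * N) ≤ r ^ 2 * (c * N) * (N - c * N) / n
      - W * (N * r * (n - r) / (n * (n - 1)))) :
    σ ≤ r * (N * r * (r - 1) / (n * (n - 1))) ∧
    (σ = r * (N * r * (r - 1) / (n * (n - 1))) → n * c = r) := by
  have hn0 : 0 < n := by linarith
  have hn1 : 0 < n - 1 := by linarith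
  have h1 : σ * (1 - c) ≤ r ^ 2 * c * N * (1 - c) / n - W * (r * (n - r) / (n * (n - 1))) := by
    refine le_of_mul_le_mul_left ?_ hN
    calc N * (σ * (1 - c)) = σ * (N - c * N) := by ring
      _ ≤ _ := hσ
      _ = _ := by ring
  have h2 := mul_le_mul_of_nonneg_right hW
    (show 0 ≤ (n - r) / (n * (n - 1)) from div_nonneg (by linarith) (by positivity))
  have h3 : (1 - c) * (r * (N * r * (r - 1) / (n * (n - 1))))
      - N * (r - 1) * (n * c - r) ^ 2 / (n * (n - 1))
      = r ^ 2 * c * N * (1 - c) / n -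
        ((r - 1) * (n - r) * c * (c * N) - r * (r - 2) * ((1 - c) * (c * N)))
          * ((n - r) / (n * (n - 1))) := by
    field_simp
    ring
  have h4 : r * W * ((n - r) / (n * (n - 1))) = W * (r * (n - r) / (n * (n - 1))) := by ring
  have h5 : (1 - c) * σ + N * (r - 1) * (n * c - r) ^ 2 / (n * (n - 1)) ≤
      (1 - c) * (r * (N * r * (r - 1) / (n * (n - 1)))) := by linarith
  have hc' : 0 < 1 - c := by linarith
  have hr1 : 0 < r - 1 := by linarith
  have h6 : 0 ≤ N * (r - 1) * (n * c - r) ^ 2 / (n * (n - 1)) := by positivity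
  refine ⟨le_of_mul_le_mul_left (by linarith) hc', fun heq => ?_⟩
  rw [heq] at h5
  have h7 : N * (r - 1) * (n * c - r) ^ 2 / (n * (n - 1)) = 0 := by linarith
  have h8 : N * (r - 1) ≠ 0 := by positivity
  have h9 : n * (n - 1) ≠ 0 := by positivity
  rw [div_eq_zero_iff, or_iff_left h9, mul_eq_zero, or_iff_right h8] at h7
  linarith [pow_eq_zero_iff two_ne_zero |>.1 h7]

theorem stmt4 (n r : ℕ) (hr : 3 ≤ r) (hn : 2*r+2 ≤ n) (H : Finset (Finset (Fin n)))
    (hunif : ∀ e ∈ H, e.card = r)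
    (hint : ∀ e ∈ H, ∀ f ∈ H, (e ∩ f).Nonempty) :
    oreDeg r H ≤ r * (n-2).choose (r-2) ∧
    (oreDeg r H = r * (n-2).choose (r-2) →
      ∃ x : Fin n, H = (Finset.univ.powersetCard r).filter fun e => x ∈ e) := by
  obtain ⟨a, rfl⟩ : ∃ a, r = a + 2 := ⟨r - 2, by omega⟩
  obtain ⟨j, hndef⟩ : ∃ j, n = 2 * (a + 2) + j := ⟨n - 2 * (a + 2), by omega⟩
  have hcardn : Fintype.card (Fin n) = n := Fintype.card_fin n
  set N : ℝ := ((n.choose (a + 2) : ℕ) : ℝ) with hN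
  set D : ℝ := (((n - 2).choose (a + 1) : ℕ) : ℝ) with hD
  set c : ℝ := #H / N with hc
  set μ : ℝ := (a + 2) * #H / n with hμ
  set V : ℝ := ∑ v, ((hdeg H v : ℝ) - μ) ^ 2 with hV
  set f : Fin n → ℝ := fun v => ((hdeg H v : ℝ) - μ) / D with hf
  set g : Finset (Fin n) → ℝ :=
    fun S => (if S ∈ H then 1 else 0) - affineOn (a + 2) c f S with hg
  obtain ⟨hhigh, hG, hform⟩ := spectral_core (α := Fin n) (hcardn.trans hndef) H hunif hint
    (fun v => (hdeg H v : ℝ)) (fun v => rfl) (by rw [hcardn]) (by rw [hcardn])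
    (by rw [hcardn]) hc (fun v => rfl) hV (fun S => rfl)
  rw [hcardn] at hform
  have hkn := hhigh.kneser_bound (hcardn.trans hndef)
  have hG0 : 0 ≤ ∑ S, g S ^ 2 := sum_nonneg fun _ _ => sq_nonneg _
  set G := ∑ S, g S ^ 2 with hGdef
  set W := V / D with hWdef
  have hlow : -((a + j).choose a * G) ≤ disjForm g g := neg_le_of_abs_le hkn
  rw [hform] at hlow
  have ha1 : (1 : ℝ) ≤ a := by exact_mod_cast (by omega : 1 ≤ a)
  have hj2 : (2 : ℝ) ≤ j := by exact_mod_cast (by omega : 2 ≤ j)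
  have hnr : (n : ℝ) = 2 * (a + 2) + j := by rw [hndef]; push_cast; ring
  have hn0 : (0 : ℝ) < n := by linarith
  have hNpos : 0 < N := by rw [hN]; exact_mod_cast Nat.choose_pos (by omega)
  have hDpos : 0 < D := by rw [hD]; exact_mod_cast Nat.choose_pos (by omega)
  have hmN : (#H : ℝ) = c * N := by rw [hc]; field_simp
  set k0 : ℝ := (((n - (a + 2)).choose (a + 2) : ℕ) : ℝ) with hk0
  set k1 : ℝ := (((n - (a + 2) - 1).choose (a + 1) : ℕ) : ℝ) with hk1
  set k2 : ℝ := (((a + j).choose a : ℕ) : ℝ) with hk2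
  have hk1pos : 0 < k1 := by rw [hk1]; exact_mod_cast Nat.choose_pos (by omega)
  have hb0 : k0 * (a + 2) = (n - (a + 2)) * k1 := by
    have := Nat.add_one_mul_choose_eq (n - (a + 2) - 1) (a + 1)
    rw [show n - (a + 2) - 1 + 1 = n - (a + 2) by omega] at this
    have h := congrArg (Nat.cast (R := ℝ)) this
    push_cast [Nat.cast_sub (show a + 2 ≤ n by omega)] at h
    rw [hk0, hk1]
    linear_combination -h
  have hb2 : k2 * (n - (a + 2) - 1) = k1 * (a + 1) := by
    have := Nat.add_one_mul_choose_eq (a + j) a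
    rw [show a + j + 1 = n - (a + 2) - 1 by omega] at this
    have h := congrArg (Nat.cast (R := ℝ)) this
    push_cast at h
    rw [show ((n - (a + 2) - 1 : ℕ) : ℝ) = n - (a + 2) - 1 by
      rw [show n - (a + 2) - 1 = a + j + 1 by omega, hnr]; push_cast; ring] at h
    rw [hk1, hk2]
    linear_combination h
  have hD1 : (n : ℝ) * (n - 1).choose (a + 1) = N * (a + 2) := by
    have := Nat.add_one_mul_choose_eq (n - 1) (a + 1)
    rw [show n - 1 + 1 = n by omega] at this
    rw [hN]; exact_mod_cast this
  have hD2 : ((n : ℝ) - 1) * (n - 2).choose a = (n - 1).choose (a + 1) * (a + 1) := by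
    have := Nat.add_one_mul_choose_eq (n - 2) a
    rw [show n - 2 + 1 = n - 1 by omega] at this
    have h := congrArg (Nat.cast (R := ℝ)) this
    push_cast [Nat.cast_sub (show 1 ≤ n by omega)] at h
    exact h
  have hD12 : ((n - 1).choose (a + 1) : ℝ) = (n - 2).choose a + D := by
    rw [hD, show n - 1 = n - 2 + 1 by omega, Nat.choose_succ_succ]; push_cast; ring
  have hn1 : (0 : ℝ) < n - 1 := by linarith
  clear_value G W k0 k1 k2 V μ c N D
  have hD1' : ((n - 1).choose (a + 1) : ℝ) = N * (a + 2) / n := by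
    rw [eq_div_iff hn0.ne']; linarith
  have hD2' : ((n - 2).choose a : ℝ) = N * (a + 2) * ((a + 2) - 1) / (n * (n - 1)) := by
    rw [eq_div_iff (by positivity)]
    linear_combination (n : ℝ) * hD2 + (a + 1) * hD1
  have hD' : D = N * (a + 2) * (n - (a + 2)) / (n * (n - 1)) := by
    rw [show D = (n - 1).choose (a + 1) - (n - 2).choose a by linarith, hD1', hD2']
    field_simp
    ring
  rw [hmN] at hG hlow
  have hc0 : 0 ≤ c := by rw [hc]; exact div_nonneg (Nat.cast_nonneg _) hNpos.le
  have hr3 : (3 : ℝ) ≤ a + 2 := by linarith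
  obtain ⟨hc1, hW, hGz⟩ := spectral_arith (r := a + 2) (n := n) (k2 := k2) hr3 (by linarith) hNpos hc0
    hk1pos hb0 (by linarith) hG0 hG (by linarith)
  have havg := oreDeg_mul_le H hunif
  have hdsum : ∑ v, (hdeg H v : ℝ) = (a + 2) * #H := by
    have := sum_degree hunif (d := fun v => (hdeg H v : ℝ)) (fun _ => rfl)
    push_cast at this
    exact this
  have hVd : ∑ v, (hdeg H v : ℝ) ^ 2 = V + (a + 2) ^ 2 * #H ^ 2 / n := by
    have : ∀ v, (hdeg H v : ℝ) ^ 2 = (hdeg H v - μ) ^ 2 + 2 * μ * hdeg H v - μ ^ 2 := by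
      intro v; ring
    simp_rw [this, sum_sub_distrib, sum_add_distrib, ← mul_sum, hdsum, ← hV, sum_const, card_univ,
      hcardn, nsmul_eq_mul, hμ]
    field_simp
    ring
  rw [hVd, hmN, hD1', ← hN] at havg
  have hσ : (oreDeg (a + 2) H : ℝ) * (N - c * N) ≤ (a + 2) ^ 2 * (c * N) * (N - c * N) / n
      - W * (N * (a + 2) * (n - (a + 2)) / (n * (n - 1))) := by
    rw [← hD', hWdef, div_mul_cancel₀ _ hDpos.ne']
    refine havg.trans (le_of_eq ?_)
    ring
  obtain ⟨hle, heqc⟩ := ore_arith hr3 (by linarith) hNpos hc1 hW hσ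
  rw [← hD2'] at hle heqc
  simp only [Nat.add_sub_cancel]
  refine ⟨by exact_mod_cast hle, fun heq => ?_⟩
  have hnc : (n : ℝ) * c = a + 2 := heqc (by rw [heq]; push_cast; ring)
  have hgz : ∀ S, g S = 0 := by
    intro S
    have := (sum_eq_zero_iff_of_nonneg (fun S _ => sq_nonneg (g S)))
        |>.1 (hGdef.symm.trans (hGz hnc)) S (mem_univ S)
    exact pow_eq_zero_iff two_ne_zero |>.1 this
  have hcpos : 0 < c := by
    refine lt_of_le_of_ne hc0 fun h => ?_
    rw [← h] at hnc
    linarith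
  refine star_of_affine (by omega) (by rw [hcardn]; omega) hunif hint c f ?_ ?_ ?_
  · intro S hS
    have := hgz S
    simp only [hg, affineOn, hS, if_true] at this
    linarith only [this]
  · rw [nonempty_iff_ne_empty]
    rintro rfl
    simp [hc] at hcpos
  · by_contra! hall
    have : powersetCard (a + 2) univ ⊆ H := fun S hS => hall S (mem_powersetCard.1 hS).2
    have := card_le_card this
    rw [card_powersetCard, card_univ, hcardn] at this
    have h' : N ≤ #H := by rw [hN]; exact_mod_cast this
    rw [hmN] at h'
    have := mul_lt_mul_of_pos_right hc1 hNpos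
    linarith only [this, h']
end

section
/- Let r ≥ 3 and n ≥ 4r². If H is a non-trivial intersecting r-uniform hypergraph on n vertices, then σ_r(H) ≤ r·(C(n-2, r-2) − C(n-r-2, r-2)). -/
open Finset

/-!
Write `M = C(n-3, r-3)`, `C = C(n-2, r-2)` and `D = C(n-2, r-2) - C(n-r-2, r-2)`; the last is the
degree of an outer vertex in the Hilton-Milner family. An `r`-set disjoint from an edge `E` is not
an edge, so it suffices to find an edge `E` and a set `W` of at least `r` vertices disjoint from `E`
on which the average degree is at most `D` (`oreDeg_le_of_avg`). The hypothesis `n ≥ 4 r²` gives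
`D ≥ (3/4) r M` and `C ≥ 25 M` (`numerics`).

*Almost a star.* Suppose at most `C / 5` edges avoid some vertex `x`, and let `E` be one of them. A
vertex `v ∉ E ∪ {x}` lies in at most `D` edges through `x`, since these all meet `E`. A second edge
`E'` avoiding `x` destroys so many sets through `x` which meet `E` but not `E'` that the edges
avoiding `x` are paid for (`oreDeg_le_of_miss_le`).

Otherwise call a pair `{x, y}` heavy if fewer than `C(n-5, r-3) ≤ M` edges avoid both `x` and `y`.
By Kruskal-Katona, applied to the complements of the edges avoiding both, a pair that is not heavy
lies in at most `3 M` edges (`codeg_add_le`). There are three cases.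

* No heavy pair: branching twice on edges gives at most `3 r² M` edges (`oreDeg_le_of_codeg_le`).
* Heavy pairs `{x, y}` and `{x, z}`: apart from at most `2 M` exceptions, an edge avoiding `x`
  contains `y` and `z`. There are more than `C / 5 ≥ 5 M` edges avoiding `x`, so `{y, z}` lies in
  more than `3 M` edges and is heavy too. Thus nearly all edges contain two of `x`, `y`, `z`, and
  outer degrees are about `3 M` (`oreDeg_le_of_triangle`). For `r = 3` there are no exceptions,
  and `D = 3 M`.
* A heavy pair `{x, y}` disjoint from all others: there are few edges outside those containing both
  `x` and `y`, of which there are at most `C` (`oreDeg_le_of_pair`).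
-/

/-! ### Binomial estimates -/

lemma choose_add_lower (m k j : ℕ) :
    m.choose (k + 1) + j * m.choose k ≤ (m + j).choose (k + 1) := by
  induction j with
  | zero => simp
  | succ j ih =>
    have h1 : (m + (j + 1)).choose (k + 1) = (m + j).choose k + (m + j).choose (k + 1) :=
      Nat.choose_succ_succ (m + j) k
    have h2 : m.choose k ≤ (m + j).choose k := Nat.choose_le_choose k (by omega)
    rw [h1]
    linarith [add_one_mul j (m.choose k)]

lemma choose_add_upper (m k j : ℕ) :
    (m + j).choose (k + 1) ≤ m.choose (k + 1) + j * (m + j - 1).choose k := by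
  induction j with
  | zero => simp
  | succ j ih =>
    have h1 : (m + (j + 1)).choose (k + 1) = (m + j).choose k + (m + j).choose (k + 1) :=
      Nat.choose_succ_succ (m + j) k
    have h2 : (m + j - 1).choose k ≤ (m + j).choose k := Nat.choose_le_choose k (by omega)
    rw [h1, show m + (j + 1) - 1 = m + j by omega]
    nlinarith [Nat.mul_le_mul_left j h2]

/-- A Bernoulli-type inequality for binomial coefficients:
`C(m, k) ≥ (1 - jk / (m + j)) C(m + j, k)`. -/
lemma choose_bernoulli (m k j : ℕ) :
    (m + j) * (m + j).choose k ≤ (m + j) * m.choose k + j * k * (m + j).choose k := by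
  rcases k with _ | k
  · simp
  rcases Nat.eq_zero_or_pos (m + j) with h0 | hpos
  · simp [h0]
  have h1 := choose_add_upper m k j
  have h2 : (m + j) * (m + j - 1).choose k = (m + j).choose (k + 1) * (k + 1) := by
    obtain ⟨q, hq⟩ : ∃ q, m + j = q + 1 := ⟨m + j - 1, by omega⟩
    rw [hq]
    exact Nat.add_one_mul_choose_eq q k
  calc (m + j) * (m + j).choose (k + 1)
      ≤ (m + j) * (m.choose (k + 1) + j * (m + j - 1).choose k) := Nat.mul_le_mul_left _ h1
    _ = (m + j) * m.choose (k + 1) + j * ((m + j) * (m + j - 1).choose k) := by ring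
    _ = _ := by rw [h2]; ring

/-- The numerical facts about `M = C(n-3, r-3)`, `C = C(n-2, r-2)` and
`D = C(n-2, r-2) - C(n-r-2, r-2)` on which the estimates rest. -/
lemma numerics (n r : ℕ) (hr : 3 ≤ r) (hn : 4 * r ^ 2 ≤ n) :
    (n - 2) * (n - 3).choose (r - 3) = (r - 2) * (n - 2).choose (r - 2) ∧
    r * (n - r - 2).choose (r - 3) + (n - r - 2).choose (r - 2) ≤ (n - 2).choose (r - 2) ∧
    3 * (n - 3).choose (r - 3) ≤ 4 * (n - r - 2).choose (r - 3) ∧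
    (n - 3).choose (r - 3) ≤ 2 * (n - 2 * r - 1).choose (r - 3) ∧
    (n - 2).choose (r - 2) ≤ (n - 5).choose (r - 2) + 3 * (n - 3).choose (r - 3) ∧
    25 * (n - 3).choose (r - 3) ≤ (n - 2).choose (r - 2) := by
  obtain ⟨k, rfl⟩ : ∃ k, r = k + 3 := ⟨r - 3, by omega⟩
  have hn' : 4 * (k * k) + 24 * k + 36 ≤ n := by nlinarith
  obtain ⟨m, rfl⟩ : ∃ m, n = m + 2 * k + 10 := ⟨n - 2 * k - 10, by omega⟩
  have hm : 4 * (k * k) + 22 * k + 26 ≤ m := by omega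
  have e1 : (m + 2 * k + 8) * (m + 2 * k + 7).choose k
      = (m + 2 * k + 8).choose (k + 1) * (k + 1) := Nat.add_one_mul_choose_eq _ _
  have e2 := choose_add_lower (m + k + 5) k (k + 3)
  have e3 := choose_bernoulli (m + k + 5) k (k + 2)
  have e4 := choose_bernoulli (m + 3) k (2 * k + 4)
  have e5 := choose_add_upper (m + 2 * k + 5) k 3
  rw [show m + k + 5 + (k + 3) = m + 2 * k + 8 by ring] at e2
  rw [show m + k + 5 + (k + 2) = m + 2 * k + 7 by ring] at e3
  rw [show m + 3 + (2 * k + 4) = m + 2 * k + 7 by ring] at e4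
  rw [show m + 2 * k + 5 + 3 - 1 = m + 2 * k + 7 by omega] at e5
  simp only [show k + 3 - 3 = k by omega, show k + 3 - 2 = k + 1 by omega,
    show m + 2 * k + 10 - 2 = m + 2 * k + 8 by omega,
    show m + 2 * k + 10 - 3 = m + 2 * k + 7 by omega,
    show m + 2 * k + 10 - (k + 3) - 2 = m + k + 5 by omega,
    show m + 2 * k + 10 - 2 * (k + 3) - 1 = m + 3 by omega,
    show m + 2 * k + 10 - 5 = m + 2 * k + 5 by omega]
  set M := (m + 2 * k + 7).choose k
  set C := (m + 2 * k + 8).choose (k + 1)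
  set A := (m + k + 5).choose k
  set B := (m + 3).choose k
  refine ⟨by linarith, by linarith, ?_, ?_, e5, ?_⟩
  · have : 4 * ((k + 2) * k * M) ≤ (m + 2 * k + 7) * M := by
      rw [← mul_assoc]; exact Nat.mul_le_mul_right _ (by nlinarith)
    refine Nat.le_of_mul_le_mul_left (c := m + 2 * k + 7) ?_ (by omega)
    nlinarith
  · have : 2 * ((2 * k + 4) * k * M) ≤ (m + 2 * k + 7) * M := by
      rw [← mul_assoc]; exact Nat.mul_le_mul_right _ (by nlinarith)
    refine Nat.le_of_mul_le_mul_left (c := m + 2 * k + 7) ?_ (by omega)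
    nlinarith
  · have : (25 * (k + 1)) * M ≤ (m + 2 * k + 8) * M :=
      Nat.mul_le_mul_right _ (by
        rcases Nat.lt_or_ge k 1 with h | h
        · interval_cases k; omega
        · nlinarith)
    refine Nat.le_of_mul_le_mul_left (c := k + 1) ?_ (by omega)
    nlinarith

/-! ### Averaging over a set disjoint from an edge -/

/-- A set with average value at most `D` has an `r`-subset with average value at most `D`: discard
elements of value at least `D` one at a time. -/
lemma exists_light_subset {α : Type*} [DecidableEq α] (f : α → ℕ) (r D : ℕ) (W : Finset α)
    (hr : r ≤ W.card) (hW : ∑ v ∈ W, f v ≤ W.card * D) :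
    ∃ S ⊆ W, S.card = r ∧ ∑ v ∈ S, f v ≤ r * D := by
  induction W using Finset.strongInduction with
  | H W ih =>
    rcases hr.eq_or_lt with h | h
    · exact ⟨W, Subset.rfl, h.symm, by rwa [h]⟩
    by_cases hbig : ∃ m ∈ W, D ≤ f m
    · obtain ⟨m, hm, hD⟩ := hbig
      have hc := card_erase_add_one hm
      have hs := add_sum_erase W f hm
      have hle : ∑ v ∈ W.erase m, f v ≤ (W.erase m).card * D := by
        rw [← hc, add_one_mul] at hW
        omega
      obtain ⟨S, hS, hS'⟩ := ih _ (erase_ssubset hm) (by omega) hle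
      exact ⟨S, hS.trans (erase_subset _ _), hS'⟩
    · push Not at hbig
      obtain ⟨S, hS, hc⟩ := exists_subset_card_eq hr
      refine ⟨S, hS, hc, ?_⟩
      rw [← hc, ← smul_eq_mul]
      exact sum_le_card_nsmul _ _ _ fun v hv => (hbig v (hS hv)).le

lemma sum_hdeg {n : ℕ} (H : Finset (Finset (Fin n))) (W : Finset (Fin n)) :
    ∑ v ∈ W, hdeg H v = ∑ F ∈ H, (F ∩ W).card := by
  have := sum_card_bipartiteAbove_eq_sum_card_bipartiteBelow (s := W) (t := H)
    (r := fun v F => v ∈ F)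
  simp only [bipartiteAbove, bipartiteBelow] at this
  unfold hdeg
  rw [this]
  refine sum_congr rfl fun F _ => ?_
  rw [inter_comm, filter_mem_eq_inter]

/-- If the average degree over a set disjoint from some edge is at most `D`, the Ore-degree is at
most `r * D`: an `r`-subset of that set misses an edge, so it is itself not an edge. -/
lemma oreDeg_le_of_avg {n r D : ℕ} {H : Finset (Finset (Fin n))}
    (hint : ∀ e ∈ H, ∀ f ∈ H, (e ∩ f).Nonempty) {E W : Finset (Fin n)} (hE : E ∈ H)
    (hd : Disjoint E W) (hr : r ≤ W.card) (hW : ∑ v ∈ W, hdeg H v ≤ W.card * D) :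
    oreDeg r H ≤ r * D := by
  obtain ⟨S, hS, hc, hsum⟩ := exists_light_subset _ r D W hr hW
  refine le_trans (Nat.sInf_le ⟨S, hc, fun hSH => ?_, rfl⟩) hsum
  obtain ⟨v, hv⟩ := hint E hE S hSH
  rw [mem_inter] at hv
  exact disjoint_left.mp hd hv.1 (hS hv.2)

/-! ### Counting edges through a given set -/

lemma card_le_of_forall_superset {n r : ℕ} (G : Finset (Finset (Fin n))) (A : Finset (Fin n))
    (hG : ∀ F ∈ G, F.card = r ∧ A ⊆ F) : G.card ≤ (n - A.card).choose (r - A.card) := by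
  have h : (powersetCard (r - A.card) (univ \ A)).card = (n - A.card).choose (r - A.card) := by
    rw [card_powersetCard, card_sdiff_of_subset (subset_univ _), card_univ, Fintype.card_fin]
  rw [← h]
  refine card_le_card_of_injOn (fun F => F \ A) (fun F hF => ?_) (fun F hF G₁ hG₁ h => ?_)
  · have := hG F hF
    rw [mem_coe, mem_powersetCard]
    exact ⟨sdiff_subset_sdiff (subset_univ _) Subset.rfl,
      by rw [card_sdiff_of_subset this.2, this.1]⟩
  · simp only at h
    rw [← sdiff_union_of_subset (hG F hF).2, h,
      sdiff_union_of_subset (hG G₁ hG₁).2]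

/-- The sets `A ∪ T` with `T` a member of `𝒯`. -/
def joinFam {n : ℕ} (A : Finset (Fin n)) (𝒯 : Finset (Finset (Fin n))) :
    Finset (Finset (Fin n)) :=
  𝒯.image (A ∪ ·)

lemma card_joinFam {n : ℕ} (A : Finset (Fin n)) (𝒯 : Finset (Finset (Fin n)))
    (h : ∀ T ∈ 𝒯, Disjoint A T) : (joinFam A 𝒯).card = 𝒯.card := by
  refine card_image_of_injOn fun T hT T' hT' hh => ?_
  change A ∪ T = A ∪ T' at hh
  rw [← union_sdiff_cancel_left (h T hT), hh, union_sdiff_cancel_left (h T' hT')]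

lemma card_of_mem_joinFam {n k : ℕ} {A F : Finset (Fin n)} {𝒯 : Finset (Finset (Fin n))}
    (h : ∀ T ∈ 𝒯, Disjoint A T ∧ T.card = k) (hF : F ∈ joinFam A 𝒯) :
    F.card = A.card + k ∧ A ⊆ F := by
  obtain ⟨T, hT, rfl⟩ := mem_image.mp hF
  exact ⟨by rw [card_union_of_disjoint (h T hT).1, (h T hT).2], subset_union_left⟩

/-- The number of edges containing both `x` and `y`. -/
def codeg {n : ℕ} (H : Finset (Finset (Fin n))) (x y : Fin n) : ℕ :=
  (H.filter fun F => x ∈ F ∧ y ∈ F).card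

/-- The number of edges containing neither `x` nor `y`. -/
def comiss {n : ℕ} (H : Finset (Finset (Fin n))) (x y : Fin n) : ℕ :=
  (H.filter fun F => x ∉ F ∧ y ∉ F).card

/-- The number of edges not containing `x`. -/
def miss {n : ℕ} (H : Finset (Finset (Fin n))) (x : Fin n) : ℕ :=
  (H.filter fun F => x ∉ F).card

lemma comiss_comm {n : ℕ} (H : Finset (Finset (Fin n))) (x y : Fin n) :
    comiss H x y = comiss H y x := by
  simp only [comiss, and_comm]

/-- The branching bound: if all members of `G` meet `E`, then `G` is covered by its stars at the
vertices of `E`. -/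
lemma card_le_sum_of_inter {n : ℕ} {G : Finset (Finset (Fin n))} {E : Finset (Fin n)}
    (h : ∀ F ∈ G, (F ∩ E).Nonempty) :
    G.card ≤ ∑ w ∈ E, (G.filter fun F => w ∈ F).card := by
  refine le_trans (card_le_card fun F hF => ?_) (card_biUnion_le (s := E))
  obtain ⟨w, hw⟩ := h F hF
  rw [mem_inter] at hw
  exact mem_biUnion.mpr ⟨w, hw.2, mem_filter.mpr ⟨hF, hw.1⟩⟩

section

variable {n r : ℕ} {H : Finset (Finset (Fin n))}

lemma codeg_le (hunif : ∀ e ∈ H, e.card = r) {x y : Fin n} (hxy : x ≠ y) :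
    codeg H x y ≤ (n - 2).choose (r - 2) := by
  rw [← card_pair hxy]
  refine card_le_of_forall_superset _ _ fun F hF => ?_
  rw [mem_filter] at hF
  exact ⟨hunif F hF.1, by simp [insert_subset_iff, hF.2]⟩

/-- Kruskal-Katona step: if many edges avoid both `x` and `y`, the complements of those edges have a
large iterated shadow on level `r - 2`, and no member of that shadow extends to an edge through `x`
and `y`. -/
lemma codeg_add_le (hr : 3 ≤ r) (hn : 4 * r ^ 2 ≤ n) (hunif : ∀ e ∈ H, e.card = r)
    (hint : ∀ e ∈ H, ∀ f ∈ H, (e ∩ f).Nonempty) {x y : Fin n} (hxy : x ≠ y)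
    (hbig : (n - 5).choose (r - 3) ≤ comiss H x y) :
    codeg H x y + (n - 5).choose (r - 2) ≤ (n - 2).choose (r - 2) := by
  have hn2 : 2 * r + 5 ≤ n := by nlinarith
  have hc2 : ({x, y} : Finset (Fin n)).card = 2 := card_pair hxy
  set P := H.filter fun F => x ∉ F ∧ y ∉ F with hP
  set 𝒜 := P.image fun F => (univ \ {x, y}) \ F with h𝒜
  have hsub : ∀ F ∈ P, F ⊆ univ \ {x, y} := by
    intro F hF v hv
    have hF := (mem_filter.mp hF).2
    simp only [mem_sdiff, mem_univ, true_and, mem_insert, mem_singleton, not_or]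
    exact ⟨fun h => hF.1 (h ▸ hv), fun h => hF.2 (h ▸ hv)⟩
  have hsized : (𝒜 : Set (Finset (Fin n))).Sized (n - 2 - r) := by
    intro A hA
    obtain ⟨F, hF, rfl⟩ := mem_image.mp (mem_coe.mp hA)
    rw [card_sdiff_of_subset (hsub F hF), card_sdiff_of_subset (subset_univ _), hc2, card_univ,
      Fintype.card_fin, hunif F (mem_filter.mp hF).1]
  have hcard : 𝒜.card = comiss H x y := by
    refine card_image_of_injOn fun F hF F' hF' h => ?_
    change (univ \ {x, y}) \ F = (univ \ {x, y}) \ F' at h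
    rw [← Finset.sdiff_sdiff_eq_self (hsub F hF), h, Finset.sdiff_sdiff_eq_self (hsub F' hF')]
  have hKK := kruskal_katona_lovasz_form (𝒜 := 𝒜) (i := n - 2 * r) (r := n - 2 - r) (k := n - 5)
    (by omega) (by omega) (by omega) hsized (by
      rw [hcard, show n - 2 - r = n - 5 - (r - 3) by omega, Nat.choose_symm (by omega)]
      exact hbig)
  -- The shadow sits on level `(n - 2 - r) - (n - 2r) = r - 2`.
  rw [show n - 2 - r - (n - 2 * r) = r - 2 by omega] at hKK
  set 𝒯 := Finset.shadow^[n - 2 * r] 𝒜 with h𝒯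
  have hT : ∀ T ∈ 𝒯, (Disjoint {x, y} T ∧ T.card = r - 2) ∧ ∃ F ∈ P, Disjoint F T := by
    intro T hT
    refine ⟨⟨?_, ?_⟩, ?_⟩
    · obtain ⟨A, hA, hTA, -⟩ := mem_shadow_iterate_iff_exists_sdiff.mp hT
      obtain ⟨F, hF, rfl⟩ := mem_image.mp hA
      exact disjoint_of_subset_right (hTA.trans sdiff_subset) disjoint_sdiff
    · have := hsized.shadow_iterate (k := n - 2 * r) (mem_coe.mpr hT)
      omega
    · obtain ⟨A, hA, hTA, -⟩ := mem_shadow_iterate_iff_exists_sdiff.mp hT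
      obtain ⟨F, hF, rfl⟩ := mem_image.mp hA
      exact ⟨F, hF, disjoint_of_subset_right hTA disjoint_sdiff⟩
  have hdisj : Disjoint (H.filter fun F => x ∈ F ∧ y ∈ F) (joinFam {x, y} 𝒯) := by
    rw [disjoint_left]
    intro G hG hG'
    obtain ⟨T, hT', rfl⟩ := mem_image.mp hG'
    obtain ⟨F, hF, hFT⟩ := (hT T hT').2
    obtain ⟨v, hv⟩ := hint _ (mem_filter.mp hG).1 F (mem_filter.mp hF).1
    rw [mem_inter, mem_union] at hv
    rcases hv with ⟨hv | hv, hvF⟩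
    · have := hsub F hF hvF
      rw [mem_sdiff] at this
      exact this.2 hv
    · exact disjoint_left.mp hFT hvF hv
  have hfin := card_le_of_forall_superset (r := r)
    ((H.filter fun F => x ∈ F ∧ y ∈ F) ∪ joinFam {x, y} 𝒯) {x, y} (by
      intro F hF
      rcases mem_union.mp hF with hF | hF
      · rw [mem_filter] at hF
        exact ⟨hunif F hF.1, by simp [insert_subset_iff, hF.2]⟩
      · have := card_of_mem_joinFam (fun T h => (hT T h).1) hF
        exact ⟨by omega, this.2⟩)
  rw [card_union_of_disjoint hdisj, card_joinFam _ _ fun T h => (hT T h).1.1, hc2] at hfin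
  change codeg H x y + _ ≤ _ at hfin
  omega

lemma card_joinFam_powersetCard {A U : Finset (Fin n)} (h : Disjoint A U) (k : ℕ) :
    (joinFam A (powersetCard k U)).card = U.card.choose k := by
  rw [card_joinFam, card_powersetCard]
  exact fun T hT => disjoint_of_subset_right (mem_powersetCard.mp hT).1 h

lemma mem_joinFam_powersetCard {A U F : Finset (Fin n)} (h : Disjoint A U) {k : ℕ}
    (hF : F ∈ joinFam A (powersetCard k U)) : F.card = A.card + k ∧ A ⊆ F ∧ F ⊆ A ∪ U := by
  obtain ⟨T, hT, rfl⟩ := mem_image.mp hF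
  rw [mem_powersetCard] at hT
  refine ⟨?_, subset_union_left, union_subset_union_right hT.1⟩
  rw [card_union_of_disjoint (disjoint_of_subset_right hT.1 h), hT.2]

/-- The edges through `x` and `v` all meet the edge `E`; this bounds their number by the degree of
an outer vertex in the Hilton-Milner family. -/
lemma codeg_add_avoid_le (hr : 3 ≤ r) (hunif : ∀ e ∈ H, e.card = r)
    (hint : ∀ e ∈ H, ∀ f ∈ H, (e ∩ f).Nonempty) {x v : Fin n} (hxv : x ≠ v)
    {E : Finset (Fin n)} (hE : E ∈ H) (hxE : x ∉ E) (hvE : v ∉ E) :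
    codeg H x v + (n - r - 2).choose (r - 2) ≤ (n - 2).choose (r - 2) := by
  have hc2 : ({x, v} : Finset (Fin n)).card = 2 := card_pair hxv
  have hd : Disjoint ({x, v} : Finset (Fin n)) (univ \ ({x, v} ∪ E)) :=
    disjoint_of_subset_left subset_union_left disjoint_sdiff
  have hAE : Disjoint ({x, v} : Finset (Fin n)) E := by simp [hxE, hvE]
  have hUc : (univ \ ({x, v} ∪ E)).card = n - r - 2 := by
    rw [card_sdiff_of_subset (subset_univ _), card_union_of_disjoint hAE, hc2, hunif E hE, card_univ,
      Fintype.card_fin]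
    omega
  have hdisj : Disjoint (H.filter fun F => x ∈ F ∧ v ∈ F)
      (joinFam {x, v} (powersetCard (r - 2) (univ \ ({x, v} ∪ E)))) := by
    rw [disjoint_left]
    intro G hG hG'
    obtain ⟨u, hu⟩ := hint G (mem_filter.mp hG).1 E hE
    rw [mem_inter] at hu
    have h1 := (mem_joinFam_powersetCard hd hG').2.2 hu.1
    rcases mem_union.mp h1 with h1 | h1
    · exact disjoint_left.mp hAE h1 hu.2
    · exact (mem_sdiff.mp h1).2 (mem_union_right _ hu.2)
  have hfin := card_le_of_forall_superset (r := r)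
    ((H.filter fun F => x ∈ F ∧ v ∈ F) ∪
      joinFam {x, v} (powersetCard (r - 2) (univ \ ({x, v} ∪ E)))) {x, v} (by
      intro F hF
      rcases mem_union.mp hF with hF | hF
      · rw [mem_filter] at hF
        exact ⟨hunif F hF.1, by simp [insert_subset_iff, hF.2]⟩
      · have := mem_joinFam_powersetCard hd hF
        exact ⟨by omega, this.2.1⟩)
  rw [card_union_of_disjoint hdisj, card_joinFam_powersetCard hd, hUc, hc2] at hfin
  exact hfin

/-- A second edge `E'` avoiding `x` and `v` improves `codeg_add_avoid_le`: it rules out the sets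
through `x`, `v` and a fixed `u ∈ E \ E'` that miss the rest of `E ∪ E'`. -/
lemma codeg_add_avoid_two_le (hr : 3 ≤ r) (hunif : ∀ e ∈ H, e.card = r)
    (hint : ∀ e ∈ H, ∀ f ∈ H, (e ∩ f).Nonempty) {x v : Fin n} (hxv : x ≠ v)
    {E E' : Finset (Fin n)} (hE : E ∈ H) (hxE : x ∉ E) (hvE : v ∉ E)
    (hE' : E' ∈ H) (hxE' : x ∉ E') (hvE' : v ∉ E') (hne : E ≠ E') :
    codeg H x v + (n - r - 2).choose (r - 2) + (n - 2 * r - 1).choose (r - 3)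
      ≤ (n - 2).choose (r - 2) := by
  have hc2 : ({x, v} : Finset (Fin n)).card = 2 := card_pair hxv
  have hEc := hunif E hE
  have hEc' := hunif E' hE'
  obtain ⟨u, huE, huE'⟩ : ∃ u ∈ E, u ∉ E' := by
    by_contra! h
    exact hne (eq_of_subset_of_card_le h (by omega))
  have hux : u ≠ x := fun h => hxE (h ▸ huE)
  have huv : u ≠ v := fun h => hvE (h ▸ huE)
  have hc3 : ({u, x, v} : Finset (Fin n)).card = 3 := by
    rw [card_insert_of_notMem (by simp [hux, huv]), hc2]
  have hd : Disjoint ({x, v} : Finset (Fin n)) (univ \ ({x, v} ∪ E)) :=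
    disjoint_of_subset_left subset_union_left disjoint_sdiff
  have hd' : Disjoint ({u, x, v} : Finset (Fin n)) (univ \ ({u, x, v} ∪ (E ∪ E'))) :=
    disjoint_of_subset_left subset_union_left disjoint_sdiff
  have hAE : Disjoint ({x, v} : Finset (Fin n)) E := by simp [hxE, hvE]
  have hAE' : Disjoint ({u, x, v} : Finset (Fin n)) E' := by simp [hxE', hvE', huE']
  have hUc : (univ \ ({x, v} ∪ E)).card = n - r - 2 := by
    rw [card_sdiff_of_subset (subset_univ _), card_union_of_disjoint hAE, hc2, hunif E hE, card_univ,
      Fintype.card_fin]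
    omega
  have hUc' : n - 2 * r - 1 ≤ (univ \ ({u, x, v} ∪ (E ∪ E'))).card := by
    have h1 : ({u, x, v} : Finset (Fin n)) ∪ (E ∪ E') = {x, v} ∪ (E ∪ E') := by
      ext w
      simp only [mem_union, mem_insert, mem_singleton]
      constructor
      · rintro ((rfl | h) | h)
        · exact Or.inr (Or.inl huE)
        · exact Or.inl h
        · exact Or.inr h
      · tauto
    have h2 := card_union_le ({x, v} : Finset (Fin n)) (E ∪ E')
    have h3 := card_union_add_card_inter E E'
    have h4 : 0 < (E ∩ E').card := card_pos.mpr (hint E hE E' hE')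
    rw [card_sdiff_of_subset (subset_univ _), h1, card_univ, Fintype.card_fin]
    omega
  set G₁ := H.filter fun F => x ∈ F ∧ v ∈ F with hG₁
  set G₂ := joinFam {x, v} (powersetCard (r - 2) (univ \ ({x, v} ∪ E))) with hG₂
  set G₃ := joinFam {u, x, v} (powersetCard (r - 3) (univ \ ({u, x, v} ∪ (E ∪ E')))) with hG₃
  have hdisj : Disjoint G₁ G₂ := by
    rw [disjoint_left]
    intro G hG hG'
    obtain ⟨u, hu⟩ := hint G (mem_filter.mp hG).1 E hE
    rw [mem_inter] at hu
    have h1 := (mem_joinFam_powersetCard hd hG').2.2 hu.1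
    rcases mem_union.mp h1 with h1 | h1
    · exact disjoint_left.mp hAE h1 hu.2
    · exact (mem_sdiff.mp h1).2 (mem_union_right _ hu.2)
  have hdisj' : Disjoint (G₁ ∪ G₂) G₃ := by
    rw [disjoint_left]
    intro G hG hG'
    have hG3 := mem_joinFam_powersetCard hd' hG'
    rcases mem_union.mp hG with hG | hG
    · obtain ⟨w, hw⟩ := hint G (mem_filter.mp hG).1 E' hE'
      rw [mem_inter] at hw
      rcases mem_union.mp (hG3.2.2 hw.1) with h1 | h1
      · exact disjoint_left.mp hAE' h1 hw.2
      · exact (mem_sdiff.mp h1).2 (mem_union_right _ (mem_union_right _ hw.2))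
    · have h1 := (mem_joinFam_powersetCard hd hG).2.2 (hG3.2.1 (mem_insert_self u _))
      rcases mem_union.mp h1 with h1 | h1
      · simp [hux, huv] at h1
      · exact (mem_sdiff.mp h1).2 (mem_union_right _ huE)
  have hfin := card_le_of_forall_superset (r := r) (G₁ ∪ G₂ ∪ G₃) {x, v} (by
      intro F hF
      rcases mem_union.mp hF with hF | hF
      · rcases mem_union.mp hF with hF | hF
        · rw [hG₁, mem_filter] at hF
          exact ⟨hunif F hF.1, by simp [insert_subset_iff, hF.2]⟩
        · have := mem_joinFam_powersetCard hd hF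
          exact ⟨by omega, this.2.1⟩
      · have := mem_joinFam_powersetCard hd' hF
        exact ⟨by omega, (subset_insert _ _).trans this.2.1⟩)
  rw [card_union_of_disjoint hdisj', card_union_of_disjoint hdisj, hG₂, hG₃,
    card_joinFam_powersetCard hd, card_joinFam_powersetCard hd', hUc, hc2] at hfin
  exact le_trans (Nat.add_le_add_left (Nat.choose_le_choose _ hUc') _) hfin

end

/-! ### The four cases -/

section

variable {n r : ℕ} {H : Finset (Finset (Fin n))}

lemma card_inter_add_le {A F W : Finset (Fin n)} (hAF : A ⊆ F) (hAW : Disjoint A W) :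
    (F ∩ W).card + A.card ≤ F.card := by
  rw [← card_union_of_disjoint (disjoint_of_subset_left inter_subset_right hAW.symm)]
  exact card_le_card (union_subset inter_subset_left hAF)

lemma card_inter_lt (hunif : ∀ e ∈ H, e.card = r) (hint : ∀ e ∈ H, ∀ f ∈ H, (e ∩ f).Nonempty)
    {E F W : Finset (Fin n)} (hE : E ∈ H) (hF : F ∈ H) (hd : Disjoint E W) :
    (F ∩ W).card ≤ r - 1 := by
  have h1 := card_inter_add_le (A := F ∩ E) (F := F) (W := W) inter_subset_left
    (disjoint_of_subset_left inter_subset_right hd)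
  have h2 : 0 < (F ∩ E).card := card_pos.mpr (hint F hF E hE)
  have h3 := hunif F hF
  omega

lemma hdeg_eq_codeg_add (x v : Fin n) :
    hdeg H v = codeg H x v + hdeg (H.filter fun F => x ∉ F) v := by
  unfold hdeg codeg
  rw [← card_filter_add_card_filter_not (s := H.filter fun F => v ∈ F) (fun F => x ∈ F),
    filter_filter, filter_filter, filter_filter]
  simp only [and_comm]

/-- If few edges avoid `x`, the vertices outside `x` and an edge `E ∌ x` have average degree at
most `D`: the edges avoiding `x` other than `E` add less to the degree sum than the loss they force
among the edges through `x`. -/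
lemma oreDeg_le_of_miss_le (hr : 3 ≤ r) (hn : 4 * r ^ 2 ≤ n) (hunif : ∀ e ∈ H, e.card = r)
    (hint : ∀ e ∈ H, ∀ f ∈ H, (e ∩ f).Nonempty) {D : ℕ}
    (hD : D + (n - r - 2).choose (r - 2) = (n - 2).choose (r - 2))
    {x : Fin n} {E : Finset (Fin n)} (hE : E ∈ H) (hxE : x ∉ E)
    (hmiss : 5 * miss H x ≤ (n - 2).choose (r - 2)) : oreDeg r H ≤ r * D := by
  have hn2 : 10 * r ≤ n + 8 := by nlinarith
  set W := univ \ insert x E with hW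
  have hEW : Disjoint E W := disjoint_of_subset_left (subset_insert _ _) disjoint_sdiff
  have hWc : W.card = n - r - 1 := by
    rw [hW, card_sdiff_of_subset (subset_univ _), card_insert_of_notMem hxE, hunif E hE, card_univ,
      Fintype.card_fin]
    omega
  have hWmem : ∀ v ∈ W, x ≠ v ∧ v ∉ E := by
    intro v hv
    simp only [hW, mem_sdiff, mem_insert, not_or] at hv
    exact ⟨fun h => hv.2.1 h.symm, hv.2.2⟩
  refine oreDeg_le_of_avg hint hE hEW (by omega) ?_
  set B := H.filter fun F => x ∉ F with hB
  have hEB : E ∈ B := mem_filter.mpr ⟨hE, hxE⟩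
  have hBsum : ∑ v ∈ W, hdeg B v ≤ (B.erase E).card * (r - 1) := by
    rw [sum_hdeg, ← add_sum_erase _ _ hEB, disjoint_iff_inter_eq_empty.mp hEW, card_empty, zero_add,
      ← smul_eq_mul]
    refine sum_le_card_nsmul _ _ _ fun F hF => ?_
    exact card_inter_lt hunif hint hE (mem_filter.mp (mem_of_mem_erase hF)).1 hEW
  rw [sum_congr rfl fun v _ => hdeg_eq_codeg_add (H := H) x v, sum_add_distrib]
  change _ + ∑ v ∈ W, hdeg B v ≤ _
  by_cases hE' : ∃ E' ∈ B, E' ≠ E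
  · obtain ⟨E', hE'B, hne⟩ := hE'
    obtain ⟨hE', hxE'⟩ := mem_filter.mp hE'B
    set L := (n - 2 * r - 1).choose (r - 3) with hL
    have hsum : ∑ v ∈ W, codeg H x v + (W.filter fun v => v ∉ E').card * L ≤ W.card * D := by
      rw [← smul_eq_mul (W.card), ← sum_const, card_filter, sum_mul, ← sum_add_distrib]
      refine sum_le_sum fun v hv => ?_
      obtain ⟨hxv, hvE⟩ := hWmem v hv
      split_ifs with hvE'
      · have := codeg_add_avoid_le hr hunif hint hxv hE hxE hvE
        omega
      · have := codeg_add_avoid_two_le hr hunif hint hxv hE hxE hvE hE' hxE' hvE' hne.symm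
        omega
    have hW2 : n - 2 * r ≤ (W.filter fun v => v ∉ E').card := by
      have h1 : (W.filter fun v => v ∉ E') = univ \ insert x (E ∪ E') := by
        ext v
        simp only [hW, mem_filter, mem_sdiff, mem_univ, true_and, mem_insert, mem_union]
        tauto
      have h2 := card_insert_le x (E ∪ E')
      have h3 := card_union_add_card_inter E E'
      have h4 : 0 < (E ∩ E').card := card_pos.mpr (hint E hE E' hE')
      have h5 := hunif E hE
      have h6 := hunif E' hE'
      rw [h1, card_sdiff_of_subset (subset_univ _), card_univ, Fintype.card_fin]
      omega
    obtain ⟨e1, -, -, e4, -, -⟩ := numerics n r hr hn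
    have hfin : (B.erase E).card * (r - 1) ≤ (n - 2 * r) * L := by
      have hb : (B.erase E).card ≤ miss H x := card_erase_le
      set b := (B.erase E).card
      have h1 : 5 * b * (r - 2) ≤ (n - 2) * (2 * L) :=
        calc 5 * b * (r - 2) ≤ (n - 2).choose (r - 2) * (r - 2) :=
              Nat.mul_le_mul_right _ (by omega)
          _ = (n - 2) * (n - 3).choose (r - 3) := by rw [e1, mul_comm]
          _ ≤ _ := Nat.mul_le_mul_left _ e4
      have h2 : b * (r - 1) ≤ b * (2 * (r - 2)) := Nat.mul_le_mul_left _ (by omega)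
      have h3 : 4 * (n - 2) * L ≤ 5 * (n - 2 * r) * L := Nat.mul_le_mul_right _ (by omega)
      nlinarith
    have := Nat.mul_le_mul_right L hW2
    omega
  · have h0 : B.erase E = ∅ := by
      ext F
      simp only [mem_erase, notMem_empty, iff_false, not_and]
      exact fun h1 h2 => hE' ⟨F, h2, h1⟩
    rw [h0, card_empty, zero_mul] at hBsum
    have : ∑ v ∈ W, codeg H x v ≤ W.card * D := by
      rw [← smul_eq_mul]
      refine sum_le_card_nsmul _ _ _ fun v hv => ?_
      have := codeg_add_avoid_le hr hunif hint (hWmem v hv).1 hE hxE (hWmem v hv).2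
      omega
    omega

/-- If all pairs have codegree at most `3 M`, branching twice on edges gives `|H| ≤ 3 r² M`. -/
lemma oreDeg_le_of_codeg_le (hr : 3 ≤ r) (hn : 4 * r ^ 2 ≤ n) (hunif : ∀ e ∈ H, e.card = r)
    (hint : ∀ e ∈ H, ∀ f ∈ H, (e ∩ f).Nonempty) (hnt : ∀ x : Fin n, ∃ e ∈ H, x ∉ e) {D M : ℕ}
    (hD : 3 * (r * M) ≤ 4 * D) {E : Finset (Fin n)} (hE : E ∈ H)
    (hlight : ∀ x y : Fin n, x ≠ y → codeg H x y ≤ 3 * M) : oreDeg r H ≤ r * D := by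
  have hdeg_le : ∀ u, hdeg H u ≤ r * (3 * M) := by
    intro u
    obtain ⟨F, hF, huF⟩ := hnt u
    refine le_trans (card_le_sum_of_inter (E := F)
      fun G hG => hint G (mem_filter.mp hG).1 F hF) ?_
    rw [← hunif F hF, ← smul_eq_mul]
    refine sum_le_card_nsmul _ _ _ fun w hw => ?_
    rw [filter_filter]
    exact hlight u w fun h => huF (h ▸ hw)
  have hH : H.card ≤ r * (r * (3 * M)) := by
    refine le_trans (card_le_sum_of_inter (E := E) fun G hG => hint G hG E hE) ?_
    rw [← hunif E hE, ← smul_eq_mul]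
    refine sum_le_card_nsmul _ _ _ fun w _ => ?_
    rw [hunif E hE]
    exact hdeg_le w
  have hEW : Disjoint E (univ \ E) := disjoint_sdiff
  have hWc : (univ \ E).card = n - r := by
    rw [card_sdiff_of_subset (subset_univ _), hunif E hE, card_univ, Fintype.card_fin]
  have hn' : 4 * (r * r) ≤ n := by nlinarith
  have hn2 : 4 * r ≤ n := by nlinarith
  refine oreDeg_le_of_avg hint hE hEW (by omega) ?_
  have h1 : ∑ v ∈ univ \ E, hdeg H v ≤ H.card * (r - 1) := by
    rw [sum_hdeg, ← smul_eq_mul]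
    exact sum_le_card_nsmul _ _ _ fun F hF => card_inter_lt hunif hint hE hF hEW
  have h2 : H.card * (r - 1) ≤ r * (r * (3 * M)) * (r - 1) := Nat.mul_le_mul_right _ hH
  rw [hWc]
  obtain ⟨m, hm⟩ : ∃ m, n = m + r := ⟨n - r, by omega⟩
  obtain ⟨q, rfl⟩ : ∃ q, r = q + 1 := ⟨r - 1, by omega⟩
  have h3 : 4 * ((q + 1) * q) ≤ m := by nlinarith
  rw [show n - (q + 1) = m by omega]
  rw [show q + 1 - 1 = q by omega] at h1 h2
  have h4 : (4 * ((q + 1) * q)) * (3 * ((q + 1) * M)) ≤ m * (4 * D) := Nat.mul_le_mul h3 hD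
  nlinarith

/-- If `y` is the only vertex whose codegree with `x` may exceed `3 M`, then few edges contain `x`
but not `y`: branch on an edge avoiding `x`. -/
lemma card_filter_mem_notMem_le (hunif : ∀ e ∈ H, e.card = r)
    (hint : ∀ e ∈ H, ∀ f ∈ H, (e ∩ f).Nonempty) (hnt : ∀ x : Fin n, ∃ e ∈ H, x ∉ e) {M : ℕ}
    {x y : Fin n} (hlight : ∀ w : Fin n, w ≠ x → w ≠ y → codeg H x w ≤ 3 * M) :
    (H.filter fun F => x ∈ F ∧ y ∉ F).card ≤ r * (3 * M) := by
  obtain ⟨F, hF, hxF⟩ := hnt x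
  refine le_trans (card_le_sum_of_inter (E := F) fun G hG => hint G (mem_filter.mp hG).1 F hF) ?_
  rw [← hunif F hF, ← smul_eq_mul]
  refine sum_le_card_nsmul _ _ _ fun w hw => ?_
  rw [filter_filter]
  by_cases hwy : w = y
  · subst hwy
    rw [filter_eq_empty_iff.mpr fun G _ h => h.1.2 h.2]
    simp
  · refine le_trans (card_le_card fun G hG => ?_) (hlight w (fun h => hxF (h ▸ hw)) hwy)
    rw [mem_filter] at hG ⊢
    exact ⟨hG.1, hG.2.1.1, hG.2.2⟩

/-- The case in which `{x, y}` meets almost all edges, and is the only pair at `x` or at `y` with a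
large codegree. -/
lemma oreDeg_le_of_pair (hr : 3 ≤ r) (hn : 4 * r ^ 2 ≤ n) (hunif : ∀ e ∈ H, e.card = r)
    (hint : ∀ e ∈ H, ∀ f ∈ H, (e ∩ f).Nonempty) (hnt : ∀ x : Fin n, ∃ e ∈ H, x ∉ e) {D M : ℕ}
    (hD : 3 * (r * M) ≤ 4 * D) (hD3 : 3 * M ≤ D)
    (hM : (n - 2) * M = (r - 2) * (n - 2).choose (r - 2)) {E : Finset (Fin n)} (hE : E ∈ H)
    {x y : Fin n} (hxy : x ≠ y) (hco : comiss H x y ≤ M)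
    (hx : ∀ w : Fin n, w ≠ x → w ≠ y → codeg H x w ≤ 3 * M)
    (hy : ∀ w : Fin n, w ≠ y → w ≠ x → codeg H y w ≤ 3 * M) : oreDeg r H ≤ r * D := by
  have hn' : 4 * (r * r) ≤ n := by nlinarith
  have hn2 : 4 * r ≤ n := by nlinarith
  set W := univ \ ({x, y} ∪ E) with hW
  have hEW : Disjoint E W := disjoint_of_subset_left subset_union_right disjoint_sdiff
  have hAW : Disjoint {x, y} W := disjoint_of_subset_left subset_union_left disjoint_sdiff
  have hWc : n - r - 2 ≤ W.card := by
    have h1 := card_union_le ({x, y} : Finset (Fin n)) E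
    rw [card_pair hxy, hunif E hE] at h1
    rw [hW, card_sdiff_of_subset (subset_univ _), card_univ, Fintype.card_fin]
    omega
  refine oreDeg_le_of_avg hint hE hEW (by omega) ?_
  -- An edge containing `x` and `y` has at most `r - 2` vertices in `W`, any other at most `r - 1`.
  have h1 : ∑ F ∈ H with (x ∈ F ∧ y ∈ F), (F ∩ W).card ≤ codeg H x y * (r - 2) := by
    rw [← smul_eq_mul]
    refine sum_le_card_nsmul _ _ _ fun F hF => ?_
    rw [mem_filter] at hF
    have := card_inter_add_le (A := {x, y}) (F := F) (by simp [insert_subset_iff, hF.2]) hAW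
    rw [card_pair hxy, hunif F hF.1] at this
    omega
  have h2 : ∑ F ∈ H with ¬ (x ∈ F ∧ y ∈ F), (F ∩ W).card
      ≤ (H.filter fun F => ¬ (x ∈ F ∧ y ∈ F)).card * (r - 1) := by
    rw [← smul_eq_mul]
    exact sum_le_card_nsmul _ _ _ fun F hF =>
      card_inter_lt hunif hint hE (mem_filter.mp hF).1 hEW
  have h3 : (H.filter fun F => ¬ (x ∈ F ∧ y ∈ F)).card ≤ r * (3 * M) + r * (3 * M) + M := by
    have hA := card_filter_mem_notMem_le hunif hint hnt hx
    have hB := card_filter_mem_notMem_le hunif hint hnt hy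
    have hsub : (H.filter fun F => ¬ (x ∈ F ∧ y ∈ F)) ⊆
        (H.filter fun F => x ∈ F ∧ y ∉ F) ∪ (H.filter fun F => y ∈ F ∧ x ∉ F) ∪
          (H.filter fun F => x ∉ F ∧ y ∉ F) := by
      intro F hF
      simp only [mem_union, mem_filter] at hF ⊢
      tauto
    refine (card_le_card hsub).trans ((card_union_le _ _).trans ?_)
    refine Nat.add_le_add ((card_union_le _ _).trans (Nat.add_le_add hA hB)) hco
  have h4 : (H.filter fun F => ¬ (x ∈ F ∧ y ∈ F)).card * (r - 1)
      ≤ (r * (3 * M) + r * (3 * M) + M) * (r - 1) := Nat.mul_le_mul_right _ h3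
  have h5 : codeg H x y * (r - 2) ≤ (n - 2) * M := by
    rw [hM, mul_comm]
    exact Nat.mul_le_mul_left _ (codeg_le hunif hxy)
  have h6 : (n - 2) * M + (r * (3 * M) + r * (3 * M) + M) * (r - 1) ≤ (n - r - 2) * D := by
    rcases hr.eq_or_lt with rfl | hr4
    · have : (n - 2 + 38) * M ≤ ((n - 3 - 2) * 3) * M := Nat.mul_le_mul_right _ (by omega)
      have := Nat.mul_le_mul_left (n - 3 - 2) hD3
      simp only [show 3 - 1 = 2 from rfl]
      nlinarith
    · obtain ⟨q, rfl⟩ : ∃ q, r = q + 4 := ⟨r - 4, by omega⟩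
      obtain ⟨m, rfl⟩ : ∃ m, n = m + q + 6 := ⟨n - q - 6, by omega⟩
      rw [show m + q + 6 - (q + 4) - 2 = m by omega, show m + q + 6 - 2 = m + q + 4 by omega,
        show q + 4 - 1 = q + 3 by omega]
      have hm : 4 * (q * q) + 31 * q + 58 ≤ m := by nlinarith
      have hk : 4 * ((m + q + 4) + (6 * (q + 4) + 1) * (q + 3)) ≤ m * (3 * (q + 4)) := by
        nlinarith [Nat.mul_le_mul_right q hm]
      have := Nat.mul_le_mul_right M hk
      have := Nat.mul_le_mul_left m hD
      nlinarith
  have h7 := Nat.mul_le_mul_right D hWc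
  rw [sum_hdeg, ← sum_filter_add_sum_filter_not H fun F => x ∈ F ∧ y ∈ F]
  omega

/-- The case in which almost all edges contain at least two of the vertices `x`, `y`, `z`. -/
lemma oreDeg_le_of_triangle (hr : 3 ≤ r) (hn : 4 * r ^ 2 ≤ n) (hunif : ∀ e ∈ H, e.card = r)
    (hint : ∀ e ∈ H, ∀ f ∈ H, (e ∩ f).Nonempty) {D : ℕ}
    (hD3 : 3 * (n - 3).choose (r - 3) ≤ D) (hD4 : 4 ≤ r → 7 * (n - 3).choose (r - 3) ≤ 2 * D)
    {E : Finset (Fin n)} (hE : E ∈ H) {x y z : Fin n} (hxy : x ≠ y) (hxz : x ≠ z) (hyz : y ≠ z)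
    (cxy : comiss H x y < (n - 5).choose (r - 3)) (cxz : comiss H x z < (n - 5).choose (r - 3))
    (cyz : comiss H y z < (n - 5).choose (r - 3)) : oreDeg r H ≤ r * D := by
  have hn' : 4 * (r * r) ≤ n := by nlinarith
  have hn2 : 7 * r + 3 ≤ n := by nlinarith
  have hc3 : ({x, y, z} : Finset (Fin n)).card = 3 :=
    card_eq_three.mpr ⟨x, y, z, hxy, hxz, hyz, rfl⟩
  set W := univ \ ({x, y, z} ∪ E) with hW
  have hEW : Disjoint E W := disjoint_of_subset_left subset_union_right disjoint_sdiff
  have hAW : Disjoint {x, y, z} W := disjoint_of_subset_left subset_union_left disjoint_sdiff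
  have hWc : n - r - 3 ≤ W.card := by
    have h1 := card_union_le ({x, y, z} : Finset (Fin n)) E
    rw [hc3, hunif E hE] at h1
    rw [hW, card_sdiff_of_subset (subset_univ _), card_univ, Fintype.card_fin]
    omega
  refine oreDeg_le_of_avg hint hE hEW (by omega) ?_
  set M := (n - 3).choose (r - 3) with hM
  set bad := (H.filter fun F => x ∉ F ∧ y ∉ F) ∪ (H.filter fun F => x ∉ F ∧ z ∉ F) ∪
    (H.filter fun F => y ∉ F ∧ z ∉ F) with hbad
  have hbadc : bad.card ≤ comiss H x y + comiss H x z + comiss H y z :=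
    (card_union_le _ _).trans (Nat.add_le_add_right (card_union_le _ _) _)
  have htriple : ∀ a b v : Fin n, a ≠ b → a ≠ v → b ≠ v →
      (H.filter fun F => a ∈ F ∧ b ∈ F ∧ v ∈ F).card ≤ M := by
    intro a b v hab hav hbv
    have h3 : ({a, b, v} : Finset (Fin n)).card = 3 :=
      card_eq_three.mpr ⟨a, b, v, hab, hav, hbv, rfl⟩
    rw [hM, ← h3]
    refine card_le_of_forall_superset _ _ fun F hF => ?_
    rw [mem_filter] at hF
    exact ⟨hunif F hF.1, by simp [insert_subset_iff, hF.2]⟩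
  have hv : ∀ v ∈ W, hdeg H v ≤ 3 * M + hdeg bad v := by
    intro v hv
    have hvA : v ∉ ({x, y, z} : Finset (Fin n)) := disjoint_right.mp hAW hv
    simp only [mem_insert, mem_singleton, not_or] at hvA
    have hsub : (H.filter fun F => v ∈ F) ⊆ ((H.filter fun F => x ∈ F ∧ y ∈ F ∧ v ∈ F) ∪
        (H.filter fun F => x ∈ F ∧ z ∈ F ∧ v ∈ F) ∪ (H.filter fun F => y ∈ F ∧ z ∈ F ∧ v ∈ F)) ∪
        bad.filter fun F => v ∈ F := by
      intro F hF
      simp only [hbad, mem_union, mem_filter] at hF ⊢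
      by_cases hx : x ∈ F <;> by_cases hy : y ∈ F <;> by_cases hz : z ∈ F <;> simp [hx, hy, hz, hF]
    have t1 := htriple x y v hxy (Ne.symm hvA.1) (Ne.symm hvA.2.1)
    have t2 := htriple x z v hxz (Ne.symm hvA.1) (Ne.symm hvA.2.2)
    have t3 := htriple y z v hyz (Ne.symm hvA.2.1) (Ne.symm hvA.2.2)
    refine (card_le_card hsub).trans ((card_union_le _ _).trans (Nat.add_le_add_right ?_ _))
    refine (card_union_le _ _).trans ?_
    have := card_union_le (H.filter fun F => x ∈ F ∧ y ∈ F ∧ v ∈ F)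
      (H.filter fun F => x ∈ F ∧ z ∈ F ∧ v ∈ F)
    omega
  have hbadsum : ∑ v ∈ W, hdeg bad v ≤ bad.card * r := by
    rw [sum_hdeg, ← smul_eq_mul]
    refine sum_le_card_nsmul _ _ _ fun F hF => ?_
    have hFH : F ∈ H := by
      simp only [hbad, mem_union, mem_filter] at hF
      rcases hF with (hF | hF) | hF <;> exact hF.1
    exact (card_le_card inter_subset_left).trans (hunif F hFH).le
  have hsum : ∑ v ∈ W, hdeg H v ≤ W.card * (3 * M) + bad.card * r := by
    refine (sum_le_sum hv).trans ?_
    rw [sum_add_distrib, sum_const, smul_eq_mul]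
    omega
  refine hsum.trans ?_
  rcases hr.eq_or_lt with rfl | hr4
  · -- For `r = 3` there are no exceptional edges, because `C(n-5, 0) = 1`.
    simp only [Nat.sub_self, Nat.choose_zero_right] at cxy cxz cyz
    have h0 : bad.card = 0 := by omega
    rw [h0, zero_mul, add_zero]
    exact Nat.mul_le_mul_left _ hD3
  · have h1 : (n - 5).choose (r - 3) ≤ M := Nat.choose_le_choose _ (by omega)
    have h2 : bad.card * r ≤ (3 * M) * r := Nat.mul_le_mul_right _ (by omega)
    have h3 : 6 * r ≤ W.card := by omega
    have h4 := Nat.mul_le_mul_left W.card (hD4 hr4)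
    have h5 := Nat.mul_le_mul_right M h3
    nlinarith

end

theorem stmt7 (n r : ℕ) (hr : 3 ≤ r) (hn : 4*r^2 ≤ n) (H : Finset (Finset (Fin n)))
    (hunif : ∀ e ∈ H, e.card = r)
    (hint : ∀ e ∈ H, ∀ f ∈ H, (e ∩ f).Nonempty)
    (hnt : ¬ ∃ x : Fin n, ∀ e ∈ H, x ∈ e) :
    oreDeg r H ≤ r * ((n-2).choose (r-2) - (n-r-2).choose (r-2)) := by
  have hnt' : ∀ x : Fin n, ∃ e ∈ H, x ∉ e := by
    push Not at hnt
    exact hnt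
  have hn36 : 36 ≤ n := by nlinarith
  obtain ⟨E, hE, -⟩ := hnt' ⟨0, by omega⟩
  obtain ⟨e1, e2, e3, -, e5, e6⟩ := numerics n r hr hn
  set D := (n-2).choose (r-2) - (n-r-2).choose (r-2) with hDdef
  have hD : D + (n - r - 2).choose (r - 2) = (n - 2).choose (r - 2) := by omega
  have hDr : r * (n - r - 2).choose (r - 3) ≤ D := by omega
  set M := (n - 3).choose (r - 3) with hM
  have hD1 : 3 * (r * M) ≤ 4 * D := by nlinarith [Nat.mul_le_mul_left r e3]
  have hD3 : 3 * M ≤ D := by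
    rcases hr.eq_or_lt with h | h
    · subst h
      simpa [hM] using hDr
    · nlinarith
  have hD4 : 4 ≤ r → 7 * M ≤ 2 * D := by
    intro h
    rcases h.eq_or_lt with h | h
    · subst h
      simp only [hM, show 4 - 3 = 1 from rfl, Nat.choose_one_right] at hDr ⊢
      omega
    · nlinarith
  by_cases hstar : ∃ x, 5 * miss H x ≤ (n - 2).choose (r - 2)
  · obtain ⟨x, hx⟩ := hstar
    obtain ⟨F, hF, hxF⟩ := hnt' x
    exact oreDeg_le_of_miss_le hr hn hunif hint hD hF hxF hx
  push Not at hstar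
  have hlight : ∀ x y : Fin n, x ≠ y → (n - 5).choose (r - 3) ≤ comiss H x y →
      codeg H x y ≤ 3 * M := by
    intro x y hxy h
    have := codeg_add_le hr hn hunif hint hxy h
    omega
  have hm0 : (n - 5).choose (r - 3) ≤ M := Nat.choose_le_choose _ (by omega)
  by_cases hpath : ∃ x y z : Fin n, x ≠ y ∧ x ≠ z ∧ y ≠ z ∧
      comiss H x y < (n - 5).choose (r - 3) ∧ comiss H x z < (n - 5).choose (r - 3)
  · obtain ⟨x, y, z, hxy, hxz, hyz, cxy, cxz⟩ := hpath
    refine oreDeg_le_of_triangle hr hn hunif hint hD3 hD4 hE hxy hxz hyz cxy cxz ?_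
    -- If `{y, z}` were not heavy, at most `5 M ≤ C / 5` edges would avoid `x`.
    by_contra! hcon
    have h1 := hlight y z hyz hcon
    have h2 : miss H x ≤ codeg H y z + comiss H x y + comiss H x z := by
      have hsub : (H.filter fun F => x ∉ F) ⊆ (H.filter fun F => y ∈ F ∧ z ∈ F) ∪
          (H.filter fun F => x ∉ F ∧ y ∉ F) ∪ (H.filter fun F => x ∉ F ∧ z ∉ F) := by
        intro F hF
        simp only [mem_union, mem_filter] at hF ⊢
        tauto
      exact (card_le_card hsub).trans
        ((card_union_le _ _).trans (Nat.add_le_add_right (card_union_le _ _) _))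
    have := hstar x
    omega
  push Not at hpath
  by_cases hpair : ∃ x y : Fin n, x ≠ y ∧ comiss H x y < (n - 5).choose (r - 3)
  · obtain ⟨x, y, hxy, cxy⟩ := hpair
    refine oreDeg_le_of_pair hr hn hunif hint hnt' hD1 hD3 e1 hE hxy (by omega) ?_ ?_
    · intro w hwx hwy
      exact hlight x w hwx.symm (hpath x y w hxy hwx.symm hwy.symm cxy)
    · intro w hwy hwx
      exact hlight y w hwy.symm
        (hpath y x w hxy.symm hwy.symm hwx.symm (by rwa [comiss_comm]))
  · push Not at hpair
    exact oreDeg_le_of_codeg_le hr hn hunif hint hnt' hD1 hE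
      fun x y hxy => hlight x y hxy (hpair x y hxy)
end

section
/- Let s ≥ 2, r ≥ 2, and n ≥ 3r²(s−1). If H is an r-uniform hypergraph on n vertices with σ_r(H) > r·(C(n-1, r-1) − C(n-s, r-1)), then H contains s pairwise disjoint edges. -/
/-!
Write `s = t + 1` and let `c = C(n - 2, r - 2)`, which bounds the number of edges through two given
vertices.

If some vertex `x` has degree above `r t c`, delete it. The Ore condition passes to `H - x` with
`(n - 1, s - 1)`, because each degree drops by at most `c` and
`C(n - 1, r - 1) = C(n - 2, r - 1) + c`. By induction `H - x` has `t` disjoint edges, and more than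
`r t c` edges through `x` cannot all meet the `r t` vertices they cover.

Otherwise all degrees are at most `r t c`. Summing the Ore condition over all non-edges and applying
Cauchy–Schwarz (`lt_card_of_ore`), the average degree exceeds `C(n - 1, r - 1) - C(n - s, r - 1)`.
For `n ≥ 3 r² t` this yields more than `(3 r - 2) t² c` edges (`numeric_bound`). Call a vertex heavy
if its degree exceeds `2 t c`. If at most `t` vertices are heavy, then fewer edges than that meet
any given `r t` vertices, so `s` disjoint edges can be chosen greedily. If at least `s` vertices
are heavy, choose `s` of them; after discarding the edges through two of them, each still has more
than `t c` edges, and the links are `(r - 1)`-uniform families to which a rainbow matching theorem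
applies.

That theorem (`rainbowBound`) says that `s` families of `k`-sets in an `n`-set, each with more than
`t C(n - 1, k - 1)` members, have a rainbow matching when `n ≥ 3 k² t`. It follows from the same
dichotomy, by induction on `k` and `s`. Either some family has a vertex of degree above `k t c`,
and the other families are matched outside this vertex; or the families with at least `s` heavy
vertices are matched through links at distinct heavy vertices, and the remaining ones are served
greedily. This common step is `rainbow_of_small_degrees`.
-/

open Finset

/-! ### Rainbow matchings and degrees -/

/-- A rainbow matching: one edge from each family `F i`, `i ∈ I`, pairwise disjoint.
It is a choice function on all of `ι`, of which only the values on `I` matter. -/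
def Rainbow {ι α : Type*} (I : Finset ι) (F : ι → Finset (Finset α)) : Prop :=
  ∃ e : ι → Finset α, (∀ i ∈ I, e i ∈ F i) ∧ ∀ i ∈ I, ∀ j ∈ I, i ≠ j → Disjoint (e i) (e j)

/-- The degree of `x` in the family `F`, over an arbitrary vertex type. -/
def dg {α : Type*} [DecidableEq α] (F : Finset (Finset α)) (x : α) : ℕ :=
  (F.filter fun e => x ∈ e).card

section

variable {ι α : Type*} [DecidableEq α]

lemma dg_le {a : ℕ} {V : Finset α} {F : Finset (Finset α)}
    (hF : F ⊆ powersetCard (a + 1) V) (x : α) : dg F x ≤ (V.card - 1).choose a := by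
  unfold dg
  by_cases hx : x ∈ V
  · rw [← card_erase_of_mem hx, ← card_powersetCard]
    apply card_le_card_of_injOn (fun e => e.erase x)
    · intro e he
      simp only [coe_filter, Set.mem_ofPred_eq] at he
      have h := mem_powersetCard.1 (hF he.1)
      simp only [mem_coe, mem_powersetCard]
      refine ⟨erase_subset_erase _ h.1, ?_⟩
      rw [card_erase_of_mem he.2, h.2]; rfl
    · intro e he f hf hef
      simp only [coe_filter, Set.mem_ofPred_eq] at he hf
      rw [← insert_erase he.2, ← insert_erase hf.2]
      exact congrArg _ hef
  · rw [filter_eq_empty_iff.2]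
    · simp
    · intro e he hxe
      exact hx ((mem_powersetCard.1 (hF he)).1 hxe)

/-- At most `C(|V| - 2, a)` edges of an `(a + 2)`-uniform family contain two given vertices. -/
lemma codg_le {a : ℕ} {V : Finset α} {F : Finset (Finset α)}
    (hF : F ⊆ powersetCard (a + 2) V) {x y : α} (hxy : x ≠ y) :
    dg (F.filter fun e => x ∈ e) y ≤ (V.card - 2).choose a := by
  by_cases hx : x ∈ V
  · have h1 : ((F.filter fun e => x ∈ e).image fun e => e.erase x)
        ⊆ powersetCard (a + 1) (V.erase x) := by
      intro f hf
      obtain ⟨e, he, rfl⟩ := mem_image.1 hf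
      rw [mem_filter] at he
      have h := mem_powersetCard.1 (hF he.1)
      refine mem_powersetCard.2 ⟨erase_subset_erase _ h.1, ?_⟩
      rw [card_erase_of_mem he.2, h.2]; rfl
    have h2 := dg_le h1 y
    rw [card_erase_of_mem hx, Nat.sub_sub] at h2
    refine le_trans ?_ h2
    unfold dg
    apply card_le_card_of_injOn (fun e => e.erase x)
    · intro e he
      simp only [coe_filter, Set.mem_ofPred_eq, mem_filter] at he
      simp only [coe_filter, Set.mem_ofPred_eq, mem_image, mem_filter, mem_erase]
      exact ⟨⟨e, he.1, rfl⟩, hxy.symm, he.2⟩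
    · intro e he f hf hef
      simp only [coe_filter, Set.mem_ofPred_eq, mem_filter] at he hf
      rw [← insert_erase he.1.2, ← insert_erase hf.1.2]
      exact congrArg _ hef
  · have : (F.filter fun e => x ∈ e) = ∅ := by
      rw [filter_eq_empty_iff]
      intro e he hxe
      exact hx ((mem_powersetCard.1 (hF he)).1 hxe)
    simp [this, dg]

lemma card_hit_le (F : Finset (Finset α)) (U : Finset α) :
    (F.filter fun e => ¬ Disjoint e U).card ≤ ∑ x ∈ U, dg F x := by
  refine le_trans (card_le_card ?_) card_biUnion_le
  intro e he
  rw [mem_filter, not_disjoint_iff] at he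
  obtain ⟨he, x, hx, hxU⟩ := he
  exact mem_biUnion.2 ⟨x, hxU, mem_filter.2 ⟨he, hx⟩⟩

lemma exists_disjoint_of_lt {F : Finset (Finset α)} {U : Finset α}
    (h : ∑ x ∈ U, dg F x < F.card) : ∃ e ∈ F, Disjoint e U := by
  by_contra! hc
  have := card_hit_le F U
  rw [filter_true_of_mem hc] at this
  omega

/-! ### Links and greedy choices -/

/-- The rainbow matching property for `(a + 1)`-uniform families: families with more than
`(|I| - 1) * C(|V| - 1, a)` members have a rainbow matching once `|V| ≥ 3 (a + 1)² (|I| - 1)`.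
The uniformity is written `a + 1` so that no subtraction occurs in the binomial coefficient; an
empty `I` is trivial and unaffected by the truncation of `|I| - 1`. -/
def RainbowBound (ι α : Type*) (a : ℕ) : Prop :=
  ∀ (V : Finset α) (I : Finset ι) (F : ι → Finset (Finset α)),
    (∀ i ∈ I, F i ⊆ powersetCard (a + 1) V) →
    (∀ i ∈ I, (I.card - 1) * (V.card - 1).choose a < (F i).card) →
    3 * (a + 1) ^ 2 * (I.card - 1) ≤ V.card → Rainbow I F

/-- Families with distinct vertices of large degree are matched through the links of these
vertices, whose uniformity is one smaller. -/
lemma rainbow_of_links {a t : ℕ} {V : Finset α} {R : Finset ι} {F : ι → Finset (Finset α)}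
    (hrb : RainbowBound ι α a)
    (hF : ∀ i ∈ R, F i ⊆ powersetCard (a + 2) V) (hR : R.card ≤ t + 1)
    (hV : 3 * (a + 2) ^ 2 * t ≤ V.card) {x : ι → α}
    (hx : ∀ i ∈ R, 2 * t * (V.card - 2).choose a < dg (F i) (x i))
    (hinj : ∀ i ∈ R, ∀ j ∈ R, x i = x j → i = j) : Rainbow R F := by
  set X := R.image x with hX
  have hXc : X.card ≤ R.card := card_image_le
  set G : ι → Finset (Finset α) := fun i =>
    (((F i).filter fun e => x i ∈ e).filter fun e => Disjoint e (X.erase (x i))).image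
      fun e => e.erase (x i) with hG
  have hmem : ∀ i ∈ R, ∀ g ∈ G i, insert (x i) g ∈ F i ∧ x i ∉ g ∧ Disjoint g X := by
    intro i hi g hg
    obtain ⟨e, he, rfl⟩ := mem_image.1 hg
    rw [mem_filter, mem_filter] at he
    refine ⟨by rw [insert_erase he.1.2]; exact he.1.1, notMem_erase _ _, ?_⟩
    rw [disjoint_left]
    intro y hy hyX
    rw [mem_erase] at hy
    exact disjoint_left.1 he.2 hy.2 (mem_erase.2 ⟨hy.1, hyX⟩)
  have hRG : Rainbow R G := by
    apply hrb (V \ X)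
    · intro i hi g hg
      obtain ⟨h1, h2, h3⟩ := hmem i hi g hg
      have h4 := mem_powersetCard.1 (hF i hi h1)
      rw [card_insert_of_notMem h2] at h4
      refine mem_powersetCard.2 ⟨?_, by omega⟩
      intro y hy
      exact mem_sdiff.2 ⟨h4.1 (mem_insert_of_mem hy), disjoint_left.1 h3 hy⟩
    · intro i hi
      have hxX : x i ∈ X := mem_image_of_mem _ hi
      have hxV : x i ∈ V := by
        have h0 : 0 < dg (F i) (x i) := lt_of_le_of_lt (Nat.zero_le _) (hx i hi)
        obtain ⟨e, he⟩ := card_pos.1 h0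
        rw [mem_filter] at he
        exact (mem_powersetCard.1 (hF i hi he.1)).1 he.2
      have hVX : (V \ X).card ≤ V.card - 1 := by
        rw [← card_erase_of_mem hxV]
        apply card_le_card
        intro y hy
        rw [mem_sdiff] at hy
        exact mem_erase.2 ⟨fun h => hy.2 (h ▸ hxX), hy.1⟩
      have hGc : (G i).card = (((F i).filter fun e => x i ∈ e).filter
          fun e => Disjoint e (X.erase (x i))).card := by
        apply card_image_of_injOn
        intro e he f hf hef
        simp only [coe_filter, Set.mem_ofPred_eq, mem_filter] at he hf
        rw [← insert_erase he.1.2, ← insert_erase hf.1.2]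
        exact congrArg _ hef
      have hsplit := card_filter_add_card_filter_not (s := (F i).filter fun e => x i ∈ e)
        (fun e => Disjoint e (X.erase (x i)))
      have hhit := card_hit_le ((F i).filter fun e => x i ∈ e) (X.erase (x i))
      have hsum : ∑ y ∈ X.erase (x i), dg ((F i).filter fun e => x i ∈ e) y
          ≤ t * (V.card - 2).choose a := by
        refine le_trans (sum_le_card_nsmul _ _ ((V.card - 2).choose a) ?_) ?_
        · intro y hy
          exact codg_le (hF i hi) (ne_of_mem_erase hy).symm
        · rw [smul_eq_mul, card_erase_of_mem hxX]
          exact Nat.mul_le_mul_right _ (by omega)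
      have hdeg := hx i hi
      unfold dg at hdeg
      have hle : (R.card - 1) * ((V \ X).card - 1).choose a ≤ t * (V.card - 2).choose a :=
        Nat.mul_le_mul (by omega) (Nat.choose_le_choose _ (by omega))
      rw [hGc]
      rw [mul_assoc] at hdeg
      omega
    · have h1 : V.card - X.card ≤ (V \ X).card := le_card_sdiff _ _
      have h2 : 3 * (a + 1) ^ 2 * (R.card - 1) ≤ 3 * (a + 1) ^ 2 * t :=
        Nat.mul_le_mul_left _ (by omega)
      have h3 : 3 * (a + 2) ^ 2 * t = 3 * (a + 1) ^ 2 * t + (6 * a + 9) * t := by ring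
      rcases Nat.eq_zero_or_pos t with rfl | ht
      · omega
      · have h4 : 9 * t ≤ (6 * a + 9) * t := Nat.mul_le_mul_right _ (by omega)
        omega
  obtain ⟨g, hg, hgd⟩ := hRG
  refine ⟨fun i => insert (x i) (g i), fun i hi => (hmem i hi _ (hg i hi)).1, ?_⟩
  intro i hi j hj hij
  have hxi : x i ∈ X := mem_image_of_mem _ hi
  have hxj : x j ∈ X := mem_image_of_mem _ hj
  have h1 := disjoint_right.1 (hmem i hi _ (hg i hi)).2.2 hxj
  have h2 := disjoint_right.1 (hmem j hj _ (hg j hj)).2.2 hxi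
  have hne : x i ≠ x j := fun h => hij (hinj i hi j hj h)
  rw [disjoint_insert_left, disjoint_insert_right, mem_insert]
  exact ⟨by tauto, h1, hgd i hi j hj hij⟩

variable [DecidableEq ι]

lemma Rainbow.insert {J : Finset ι} {F : ι → Finset (Finset α)} {e : ι → Finset α}
    (he : ∀ i ∈ J, e i ∈ F i) (hd : ∀ i ∈ J, ∀ j ∈ J, i ≠ j → Disjoint (e i) (e j))
    {i : ι} (hi : i ∉ J) {f : Finset α} (hf : f ∈ F i) (hfd : Disjoint f (J.biUnion e)) :
    Rainbow (insert i J) F := by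
  rw [disjoint_biUnion_right] at hfd
  have hne : ∀ j ∈ J, j ≠ i := fun j hj h => hi (h ▸ hj)
  refine ⟨Function.update e i f, ?_, ?_⟩
  · intro j hj
    rcases mem_insert.1 hj with rfl | hj
    · simpa using hf
    · rw [Function.update_of_ne (hne j hj)]; exact he j hj
  · intro j hj l hl hjl
    rcases mem_insert.1 hj with rfl | hj' <;> rcases mem_insert.1 hl with rfl | hl'
    · exact absurd rfl hjl
    · rw [Function.update_self, Function.update_of_ne (hne l hl')]; exact hfd l hl'
    · rw [Function.update_self, Function.update_of_ne (hne j hj')]; exact (hfd j hj').symm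
    · rw [Function.update_of_ne (hne j hj'), Function.update_of_ne (hne l hl')]
      exact hd j hj' l hl' hjl

/-- Greedy completion: families which always have an edge avoiding any `k * t` vertices can be
served last. -/
lemma rainbow_greedy {k t : ℕ} {V : Finset α} {I R : Finset ι} {F : ι → Finset (Finset α)}
    (hF : ∀ i ∈ I, F i ⊆ powersetCard k V) (hI : I.card ≤ t + 1) (hRI : R ⊆ I)
    (hR : Rainbow R F)
    (h : ∀ i ∈ I, i ∉ R → ∀ U : Finset α, U.card ≤ k * t → ∃ e ∈ F i, Disjoint e U) :
    Rainbow I F := by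
  have key : ∀ J : Finset ι, J ⊆ I → Rainbow (R ∪ J) F := by
    intro J
    induction J using Finset.induction_on with
    | empty => intro _; simpa using hR
    | insert i J hiJ ih =>
      intro hJ
      have hiI : i ∈ I := hJ (mem_insert_self _ _)
      have hJI : J ⊆ I := fun j hj => hJ (mem_insert_of_mem hj)
      have ih := ih hJI
      rw [union_insert]
      by_cases hi : i ∈ R ∪ J
      · rwa [insert_eq_of_mem hi]
      · obtain ⟨e, he, hd⟩ := ih
        have hsub : insert i (R ∪ J) ⊆ I := insert_subset hiI (union_subset hRI hJI)
        have hc := card_le_card hsub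
        rw [card_insert_of_notMem hi] at hc
        have hU : ((R ∪ J).biUnion e).card ≤ k * t := by
          refine le_trans (card_biUnion_le_card_mul _ _ k ?_) ?_
          · intro j hj
            exact (mem_powersetCard.1
              (hF j (hsub (mem_insert_of_mem hj)) (he j hj))).2.le
          · rw [mul_comm]; exact Nat.mul_le_mul_left _ (by omega)
        obtain ⟨f, hf, hfd⟩ := h i hiI (fun h => hi (mem_union_left _ h)) _ hU
        exact Rainbow.insert he hd hi hf hfd
  have := key I subset_rfl
  rwa [union_eq_right.2 hRI] at this

/-- If `x` has degree above `k * t` times the maximal codegree in one of `t + 1` families, then it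
suffices to match the other families outside `x`. -/
lemma rainbow_of_large_degree {a t : ℕ} {V : Finset α} {I : Finset ι} {F : ι → Finset (Finset α)}
    (hF : ∀ i ∈ I, F i ⊆ powersetCard (a + 2) V) (hI : I.card ≤ t + 1) {i : ι} (hi : i ∈ I) {x : α}
    (hx : (a + 2) * t * (V.card - 2).choose a < dg (F i) x)
    (hR : Rainbow (I.erase i) fun j => (F j).filter fun e => x ∉ e) : Rainbow I F := by
  obtain ⟨e, he, hd⟩ := hR
  have hU : ((I.erase i).biUnion e).card ≤ (a + 2) * t := by
    refine le_trans (card_biUnion_le_card_mul _ _ (a + 2) ?_) ?_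
    · intro j hj
      exact (mem_powersetCard.1 (hF j (mem_of_mem_erase hj) (mem_filter.1 (he j hj)).1)).2.le
    · rw [mul_comm, card_erase_of_mem hi]; exact Nat.mul_le_mul_left _ (by omega)
  have hxU : x ∉ (I.erase i).biUnion e := by
    intro h
    obtain ⟨j, hj, hxj⟩ := mem_biUnion.1 h
    exact (mem_filter.1 (he j hj)).2 hxj
  have : ∃ f ∈ (F i).filter (fun e => x ∈ e), Disjoint f ((I.erase i).biUnion e) := by
    apply exists_disjoint_of_lt
    refine lt_of_le_of_lt ?_ hx
    refine le_trans (sum_le_card_nsmul _ _ ((V.card - 2).choose a) ?_) ?_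
    · intro y hy
      exact codg_le (hF i hi) (fun h => hxU (h ▸ hy))
    · rw [smul_eq_mul]; exact Nat.mul_le_mul_right _ hU
  obtain ⟨f, hf, hfd⟩ := this
  have := Rainbow.insert (F := F) (fun j hj => (mem_filter.1 (he j hj)).1) hd
    (notMem_erase i I) (mem_filter.1 hf).1 hfd
  rwa [insert_erase hi] at this

/-- Sets with at least as many elements as there are sets have distinct representatives. The index
set is nonempty because `x` is a total function, which needs an element of `α`. -/
lemma exists_sdr {I : Finset ι} (hne : I.Nonempty) (W : ι → Finset α)
    (h : ∀ i ∈ I, I.card ≤ (W i).card) :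
    ∃ x : ι → α, (∀ i ∈ I, x i ∈ W i) ∧ ∀ i ∈ I, ∀ j ∈ I, x i = x j → i = j := by
  have hR : Rainbow I fun i => (W i).image fun x => ({x} : Finset α) := by
    refine rainbow_greedy (k := 1) (t := I.card - 1) (V := I.biUnion W) (R := ∅) ?_ (by omega)
      (empty_subset _) ⟨fun _ => ∅, by simp, by simp⟩ ?_
    · intro i hi e he
      obtain ⟨x, hx, rfl⟩ := mem_image.1 he
      exact mem_powersetCard.2 ⟨singleton_subset_iff.2 (mem_biUnion.2 ⟨i, hi, hx⟩), by simp⟩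
    · intro i hi _ U hU
      have h1 := h i hi
      have h2 : 0 < I.card := card_pos.2 ⟨i, hi⟩
      obtain ⟨x, hx, hxU⟩ := exists_mem_notMem_of_card_lt_card (s := U) (t := W i) (by omega)
      exact ⟨{x}, mem_image_of_mem _ hx, by simpa using hxU⟩
  obtain ⟨e, he, hd⟩ := hR
  have : ∀ i, ∃ x, i ∈ I → x ∈ W i ∧ ({x} : Finset α) = e i := by
    intro i
    by_cases hi : i ∈ I
    · obtain ⟨x, hx⟩ := mem_image.1 (he i hi)
      exact ⟨x, fun _ => hx⟩
    · obtain ⟨j, hj⟩ := hne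
      obtain ⟨x, -⟩ := mem_image.1 (he j hj)
      exact ⟨x, fun h => absurd h hi⟩
  choose x hx using this
  refine ⟨x, fun i hi => (hx i hi).1, fun i hi j hj hij => ?_⟩
  by_contra hne
  have := hd i hi j hj hne
  rw [← (hx i hi).2, ← (hx j hj).2, hij] at this
  simp at this

/-! ### The rainbow matching theorem -/

/-- If no degree is huge and all families are large, a rainbow matching exists: a family with
more than `t` vertices of degree above `2 * t * c` gets such a vertex of its own and is matched
through its link, and in any other family few edges meet `(a + 2) * t` given vertices, so that it
can be served greedily at the end. -/
lemma rainbow_of_small_degrees {a t : ℕ} {V : Finset α} {I : Finset ι} {F : ι → Finset (Finset α)}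
    (hrb : RainbowBound ι α a)
    (hF : ∀ i ∈ I, F i ⊆ powersetCard (a + 2) V) (hI : I.card = t + 1)
    (hV : 3 * (a + 2) ^ 2 * t ≤ V.card)
    (hdeg : ∀ i ∈ I, ∀ x, dg (F i) x ≤ (a + 2) * t * (V.card - 2).choose a)
    (hbig : ∀ i ∈ I, (3 * a + 4) * t ^ 2 * (V.card - 2).choose a < (F i).card) :
    Rainbow I F := by
  set c := (V.card - 2).choose a with hc
  set W : ι → Finset α := fun i => V.filter fun x => 2 * t * c < dg (F i) x with hW
  set R := I.filter fun i => t + 1 ≤ (W i).card with hR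
  have hRI : R ⊆ I := filter_subset _ _
  refine rainbow_greedy (k := a + 2) hF hI.le hRI ?_ ?_
  · rcases R.eq_empty_or_nonempty with hRe | hRne
    · rw [hRe]; exact ⟨fun _ => ∅, by simp, by simp⟩
    obtain ⟨x, hx, hinj⟩ := exists_sdr hRne W (by
      intro i hi
      have := (mem_filter.1 hi).2
      have := card_le_card hRI
      omega)
    exact rainbow_of_links hrb (fun i hi => hF i (hRI hi)) (hI ▸ card_le_card hRI) hV
      (fun i hi => (mem_filter.1 (hx i hi)).2) hinj
  · intro i hi hiR U hU
    apply exists_disjoint_of_lt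
    refine lt_of_le_of_lt ?_ (hbig i hi)
    have hWc : (W i).card ≤ t := by
      by_contra h
      exact hiR (mem_filter.2 ⟨hi, by omega⟩)
    -- Heavy vertices exceed the threshold `2 * t * c` by at most `a * t * c`.
    have hpt : ∀ x ∈ U, dg (F i) x ≤ 2 * t * c + if x ∈ W i then a * t * c else 0 := by
      intro x _
      have h1 := hdeg i hi x
      split_ifs with hxW
      · refine h1.trans (le_of_eq (by ring))
      · by_contra hlt
        apply hxW
        refine mem_filter.2 ⟨?_, by omega⟩
        obtain ⟨e, he⟩ : (((F i).filter fun e => x ∈ e)).Nonempty := by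
          apply card_pos.1
          change 0 < dg (F i) x
          omega
        rw [mem_filter] at he
        exact (mem_powersetCard.1 (hF i hi he.1)).1 he.2
    calc ∑ x ∈ U, dg (F i) x ≤ ∑ x ∈ U, (2 * t * c + if x ∈ W i then a * t * c else 0) :=
          sum_le_sum hpt
      _ = U.card * (2 * t * c) + (U ∩ W i).card * (a * t * c) := by
          rw [sum_add_distrib, sum_const, smul_eq_mul, ← sum_filter, sum_const, smul_eq_mul,
            filter_mem_eq_inter]
      _ ≤ ((a + 2) * t) * (2 * t * c) + t * (a * t * c) := by
          refine Nat.add_le_add (Nat.mul_le_mul_right _ hU) (Nat.mul_le_mul_right _ ?_)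
          exact (card_le_card inter_subset_right).trans hWc
      _ = (3 * a + 4) * t ^ 2 * c := by ring

/-- The rainbow matching theorem, by induction on the uniformity and on the number of families. -/
theorem rainbowBound (a : ℕ) : RainbowBound ι α a := by
  induction a with
  | zero =>
    intro V I F hF hbig _
    refine rainbow_greedy (k := 1) (t := I.card - 1) (R := ∅) hF (by omega) (empty_subset _)
      ⟨fun _ => ∅, by simp, by simp⟩ ?_
    intro i hi _ U hU
    apply exists_disjoint_of_lt
    refine lt_of_le_of_lt ?_ (hbig i hi)
    refine le_trans (sum_le_card_nsmul _ _ ((V.card - 1).choose 0) ?_) ?_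
    · intro y _
      exact dg_le (hF i hi) y
    · rw [smul_eq_mul]; exact Nat.mul_le_mul_right _ (by omega)
  | succ a iha =>
    intro V I
    induction hI : I.card generalizing V I with
    | zero =>
      intro F _ _ _
      rw [card_eq_zero] at hI
      subst hI
      exact ⟨fun _ => ∅, by simp, by simp⟩
    | succ t iht =>
      intro F hF hbig hV
      simp only [Nat.add_sub_cancel] at hbig hV
      by_cases hA : ∃ i ∈ I, ∃ x, (a + 2) * t * (V.card - 2).choose a < dg (F i) x
      · obtain ⟨i, hi, x, hx⟩ := hA
        have hxV : x ∈ V := by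
          have h0 : 0 < dg (F i) x := lt_of_le_of_lt (Nat.zero_le _) hx
          obtain ⟨e, he⟩ := card_pos.1 h0
          rw [mem_filter] at he
          exact (mem_powersetCard.1 (hF i hi he.1)).1 he.2
        refine rainbow_of_large_degree hF hI.le hi hx ?_
        have hc : (I.erase i).card = t := by rw [card_erase_of_mem hi, hI]; rfl
        refine iht (V.erase x) (I.erase i) hc _ ?_ ?_ ?_
        · intro j hj e he
          rw [mem_filter] at he
          have h := mem_powersetCard.1 (hF j (mem_of_mem_erase hj) he.1)
          exact mem_powersetCard.2 ⟨subset_erase.2 ⟨h.1, he.2⟩, h.2⟩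
        · intro j hj
          have hjI := mem_of_mem_erase hj
          have ht : 0 < t := hc ▸ card_pos.2 ⟨j, hj⟩
          obtain ⟨u, rfl⟩ : ∃ u, t = u + 1 := ⟨t - 1, by omega⟩
          have h1 := hbig j hjI
          have h2 := dg_le (hF j hjI) x
          have h3 := card_filter_add_card_filter_not (s := F j) (fun e => x ∈ e)
          unfold dg at h2
          have h4 : u * ((V.erase x).card - 1).choose (a + 1)
              ≤ u * (V.card - 1).choose (a + 1) :=
            Nat.mul_le_mul_left _ (Nat.choose_le_choose _
              (by have := card_le_card (erase_subset x V); omega))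
          rw [Nat.add_sub_cancel]
          rw [add_mul, one_mul] at h1
          omega
        · rw [card_erase_of_mem hxV]
          rcases Nat.eq_zero_or_pos t with rfl | ht
          · simp
          · obtain ⟨u, rfl⟩ : ∃ u, t = u + 1 := ⟨t - 1, by omega⟩
            rw [Nat.add_sub_cancel]
            have : 0 < 3 * (a + 1 + 1) ^ 2 := by positivity
            rw [Nat.mul_succ] at hV
            omega
      · push Not at hA
        refine rainbow_of_small_degrees iha hF hI hV hA ?_
        intro i hi
        refine lt_of_le_of_lt ?_ (hbig i hi)
        rcases Nat.eq_zero_or_pos t with rfl | ht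
        · simp
        have hV2 : 2 ≤ V.card := by nlinarith [Nat.zero_le a]
        obtain ⟨m, hm⟩ : ∃ m, V.card = m + 2 := ⟨V.card - 2, by omega⟩
        have hid := Nat.add_one_mul_choose_eq m a
        have e1 : V.card - 2 = m := by omega
        have e2 : V.card - 1 = m + 1 := by omega
        rw [e1, e2]
        rw [hm] at hV
        have h1 : (3 * a + 4) * t * (a + 1) ≤ m + 1 := by nlinarith
        have h2 : (3 * a + 4) * t * m.choose a ≤ (m + 1).choose (a + 1) := by
          apply Nat.le_of_mul_le_mul_right _ (Nat.succ_pos a)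
          rw [Nat.succ_eq_add_one, ← hid]
          calc _ = ((3 * a + 4) * t * (a + 1)) * m.choose a := by ring
            _ ≤ _ := Nat.mul_le_mul_right _ h1
        calc _ = t * ((3 * a + 4) * t * m.choose a) := by ring
          _ ≤ _ := Nat.mul_le_mul_left _ h2

/-! ### The Ore condition and the average degree -/

lemma sum_sum_eq {V : Finset α} {F : Finset (Finset α)} (hF : ∀ e ∈ F, e ⊆ V) (d : α → ℕ) :
    ∑ e ∈ F, ∑ v ∈ e, d v = ∑ v ∈ V, d v * dg F v := by
  have h1 : ∀ e ∈ F, ∑ v ∈ e, d v = ∑ v ∈ V, if v ∈ e then d v else 0 := by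
    intro e he
    rw [← sum_filter, filter_mem_eq_inter, inter_eq_right.2 (hF e he)]
  rw [sum_congr rfl h1, sum_comm]
  refine sum_congr rfl fun v _ => ?_
  rw [← sum_filter, sum_const, smul_eq_mul, mul_comm]
  rfl

/-- The Ore condition forces the average degree above `D`. Summing it over all non-edges gives
`∑ d(v) (N - d(v)) > D ∑ (N - d(v))`, where `N` is the maximal possible degree, and by
Cauchy–Schwarz the left side is at most what it would be if all degrees were equal. -/
lemma lt_card_of_ore {b D : ℕ} {V : Finset α} {H : Finset (Finset α)}
    (hH : H ⊆ powersetCard (b + 1) V) (hV : b + 1 ≤ V.card) (hD : D < (V.card - 1).choose b)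
    (hore : ∀ S ∈ powersetCard (b + 1) V, S ∉ H → (b + 1) * D < ∑ v ∈ S, dg H v) :
    V.card * D < (b + 1) * H.card := by
  set P := powersetCard (b + 1) V with hP
  set N := (V.card - 1).choose b with hN
  have hPV : ∀ e ∈ P, e ⊆ V := fun e he => (mem_powersetCard.1 he).1
  have hPc : (b + 1) * P.card = V.card * N := by
    obtain ⟨m, hm⟩ : ∃ m, V.card = m + 1 := ⟨V.card - 1, by omega⟩
    rw [hP, card_powersetCard, hN, hm, Nat.add_sub_cancel, Nat.add_one_mul_choose_eq, mul_comm]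
  have hK : (P \ H).card + H.card = P.card := card_sdiff_add_card_eq_card hH
  have hsum : ∑ v ∈ V, dg H v = (b + 1) * H.card := by
    have h := sum_sum_eq (fun e he => hPV e (hH he)) (fun _ => 1)
    simp only [one_mul] at h
    rw [← h, mul_comm, ← smul_eq_mul, ← sum_const]
    refine sum_congr rfl fun e he => ?_
    rw [← card_eq_sum_ones, (mem_powersetCard.1 (hH he)).2]
  rcases (P \ H).eq_empty_or_nonempty with hemp | hne
  · rw [hemp, card_empty, zero_add] at hK
    rw [hK, hPc]
    exact Nat.mul_lt_mul_of_pos_left hD (by omega)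
  · have h1 : (P \ H).card * ((b + 1) * D) < ∑ v ∈ V, dg H v * dg (P \ H) v := by
      rw [← sum_sum_eq (fun e he => hPV e (mem_sdiff.1 he).1), ← smul_eq_mul, ← sum_const]
      exact sum_lt_sum_of_nonempty hne fun S hS => hore S (mem_sdiff.1 hS).1 (mem_sdiff.1 hS).2
    have h2 : ∑ v ∈ V, dg H v * dg (P \ H) v + ∑ v ∈ V, dg H v ^ 2
        ≤ N * ((b + 1) * H.card) := by
      rw [← hsum, mul_sum, ← sum_add_distrib]
      refine sum_le_sum fun v _ => ?_
      have h3 : dg (P \ H) v + dg H v ≤ N := by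
        refine le_trans (le_of_eq ?_) (dg_le (subset_refl P) v)
        unfold dg
        rw [← card_union_of_disjoint, ← filter_union, sdiff_union_of_subset hH]
        exact disjoint_filter_filter sdiff_disjoint
      calc _ = dg H v * (dg (P \ H) v + dg H v) := by ring
        _ ≤ dg H v * N := Nat.mul_le_mul_left _ h3
        _ = _ := mul_comm _ _
    have h4 : ((b + 1) * H.card) ^ 2 ≤ V.card * ∑ v ∈ V, dg H v ^ 2 := by
      rw [← hsum]; exact sq_sum_le_card_mul_sum_sq
    by_contra hcon
    push Not at hcon
    set K := (P \ H).card
    set Q := ∑ v ∈ V, dg H v ^ 2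
    set L := ∑ v ∈ V, dg H v * dg (P \ H) v
    set E := (b + 1) * H.card with hE
    have h5 : (b + 1) * K + E = V.card * N := by rw [← hPc, ← hK, hE]; ring
    have h6 : V.card * (K * ((b + 1) * D)) < V.card * L :=
      Nat.mul_lt_mul_of_pos_left h1 (by omega)
    have h7 : V.card * (L + Q) ≤ V.card * (N * E) := Nat.mul_le_mul_left _ h2
    have h8 : ((b + 1) * K) * E ≤ ((b + 1) * K) * (V.card * D) := Nat.mul_le_mul_left _ hcon
    have h9 : V.card * (N * E) = ((b + 1) * K) * E + E ^ 2 := by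
      rw [← mul_assoc, ← h5]; ring
    have h10 : V.card * (K * ((b + 1) * D)) = ((b + 1) * K) * (V.card * D) := by ring
    rw [mul_add] at h7
    omega

/-! ### Binomial estimates -/

lemma twelve_le (a : ℕ) : 12 ≤ 3 * (a + 2) ^ 2 := by
  have := Nat.pow_le_pow_left (Nat.le_add_left 2 a) 2
  omega

lemma mul_choose_add_le (m a t : ℕ) :
    t * m.choose a + m.choose (a + 1) ≤ (m + t).choose (a + 1) := by
  induction t with
  | zero => simp
  | succ t ih =>
    rw [← add_assoc, Nat.choose_succ_succ']
    have := Nat.choose_le_choose a (Nat.le_add_right m t)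
    rw [add_mul]
    omega

lemma choose_le_add_mul (m b u : ℕ) :
    (m + u).choose (b + 1) ≤ m.choose (b + 1) + u * (m + u - 1).choose b := by
  induction u with
  | zero => simp
  | succ u ih =>
    rw [← add_assoc, Nat.choose_succ_succ', Nat.add_sub_cancel]
    have := Nat.mul_le_mul_left u (Nat.choose_le_choose b (Nat.sub_le (m + u) 1))
    rw [add_mul]
    omega

lemma mul_choose_le (m a u : ℕ) : (m + u) * (m + u).choose a
    ≤ (m + u) * m.choose a + u * a * (m + u).choose a := by
  rcases a with _ | b
  · simp
  · rcases Nat.eq_zero_or_pos (m + u) with h0 | h0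
    · simp [h0]
    · have h1 := Nat.mul_le_mul_left (m + u) (choose_le_add_mul m b u)
      obtain ⟨M, hM⟩ : ∃ M, m + u = M + 1 := ⟨m + u - 1, by omega⟩
      have h2 := Nat.add_one_mul_choose_eq M b
      rw [hM] at h1 ⊢
      rw [Nat.add_sub_cancel] at h1
      calc _ ≤ _ := h1
        _ = (M + 1) * m.choose (b + 1) + u * ((M + 1) * M.choose b) := by ring
        _ = _ := by rw [h2]; ring

/-- The numerical heart of the bound `n ≥ 3 r² t`, for `r = a + 2`: removing `t - 1` points
shrinks the codegree bound `C(n - 2, r - 2)` at most by the factor `1 - 2 / (3 r)`. -/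
lemma numeric_bound {n a t : ℕ} (ht : 1 ≤ t) (hn : 3 * (a + 2) ^ 2 * t ≤ n) :
    (a + 2) * ((3 * a + 4) * t ^ 2 * (n - 2).choose a) ≤ n * (t * (n - (t + 1)).choose a) := by
  obtain ⟨u, rfl⟩ : ∃ u, t = u + 1 := ⟨t - 1, by omega⟩
  have h12 : 12 * (u + 1) ≤ 3 * (a + 2) ^ 2 * (u + 1) := Nat.mul_le_mul_right _ (twelve_le a)
  obtain ⟨m, rfl⟩ : ∃ m, n = m + u + 2 := ⟨n - u - 2, by omega⟩
  have e1 : m + u + 2 - 2 = m + u := by omega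
  have e2 : m + u + 2 - (u + 1 + 1) = m := by omega
  rw [e1, e2]
  have hM := mul_choose_le m a u
  have hM2 : 2 ≤ m + u := by omega
  set M := m + u
  set c := M.choose a
  set x := m.choose a
  have key : M * ((a + 2) * (3 * a + 4) * (u + 1)) + (M + 2) * (u * a) ≤ (M + 2) * M := by
    have h1 : M * (3 * (a + 2) ^ 2 * (u + 1)) ≤ M * (M + 2) := Nat.mul_le_mul_left _ hn
    have h2 : (M + 2) * (u * a) ≤ (2 * M) * ((u + 1) * (a + 2)) :=
      Nat.mul_le_mul (by omega) (Nat.mul_le_mul (by omega) (by omega))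
    nlinarith
  have h3 : (a + 2) * (3 * a + 4) * (u + 1) * c ≤ (M + 2) * x := by
    have h4 := Nat.mul_le_mul_right c key
    have h5 := Nat.mul_le_mul_left (M + 2) hM
    refine le_of_mul_le_mul_left (a := M) ?_ (by omega : 0 < M)
    nlinarith
  calc _ = (u + 1) * ((a + 2) * (3 * a + 4) * (u + 1) * c) := by ring
    _ ≤ (u + 1) * ((M + 2) * x) := Nat.mul_le_mul_left _ h3
    _ = _ := by ring

/-! ### Induction on the size of the matching -/

/-- The matching theorem for a vertex set `V` inside an arbitrary type, which lets the induction
delete vertices. The uniformity is `a + 2` and the matching has `t + 1` edges; `a + 2 ≤ |V|` matters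
only for `t = 0`. -/
theorem ore_matching {a t : ℕ} {V : Finset α} {H : Finset (Finset α)}
    (hH : H ⊆ powersetCard (a + 2) V) (hV : 3 * (a + 2) ^ 2 * t ≤ V.card) (hV2 : a + 2 ≤ V.card)
    (hore : ∀ S ∈ powersetCard (a + 2) V, S ∉ H →
      (a + 2) * ((V.card - 1).choose (a + 1) - (V.card - (t + 1)).choose (a + 1))
        < ∑ v ∈ S, dg H v)
    {I : Finset ι} (hI : I.card = t + 1) : Rainbow I fun _ => H := by
  induction t generalizing V H I with
  | zero =>
    have hne : H.Nonempty := by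
      by_contra hemp
      rw [not_nonempty_iff_eq_empty] at hemp
      subst hemp
      obtain ⟨S, hS⟩ := powersetCard_nonempty.2 hV2
      have := hore S hS (by simp)
      simp [dg] at this
    obtain ⟨e, he⟩ := hne
    obtain ⟨i, rfl⟩ := card_eq_one.1 hI
    refine ⟨fun _ => e, fun _ _ => he, fun j hj l hl hjl => ?_⟩
    rw [mem_singleton] at hj hl
    exact absurd (hj.trans hl.symm) hjl
  | succ t ih =>
    have h12 : 12 * (t + 1) ≤ 3 * (a + 2) ^ 2 * (t + 1) := Nat.mul_le_mul_right _ (twelve_le a)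
    have hav : a + t + 4 ≤ V.card := by nlinarith
    by_cases hA : ∃ x, (a + 2) * (t + 1) * (V.card - 2).choose a < dg H x
    · obtain ⟨x, hx⟩ := hA
      have hxV : x ∈ V := by
        have h0 : 0 < dg H x := lt_of_le_of_lt (Nat.zero_le _) hx
        obtain ⟨e, he⟩ := card_pos.1 h0
        rw [mem_filter] at he
        exact (mem_powersetCard.1 (hH he.1)).1 he.2
      obtain ⟨i, hi⟩ : I.Nonempty := card_pos.1 (by omega)
      refine rainbow_of_large_degree (fun _ _ => hH) hI.le hi hx ?_
      have hVc := card_erase_of_mem hxV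
      refine ih (V := V.erase x) ?_ ?_ ?_ ?_ ?_
      · intro e he
        rw [mem_filter] at he
        have h := mem_powersetCard.1 (hH he.1)
        exact mem_powersetCard.2 ⟨subset_erase.2 ⟨h.1, he.2⟩, h.2⟩
      · have := twelve_le a
        rw [hVc]; rw [mul_add] at hV; omega
      · omega
      · intro S hS hSH
        have hS' := mem_powersetCard.1 hS
        have hxS : x ∉ S := fun h => notMem_erase x V (hS'.1 h)
        have hlt := hore S (mem_powersetCard.2 ⟨hS'.1.trans (erase_subset _ _), hS'.2⟩)
          (fun h => hSH (mem_filter.2 ⟨h, hxS⟩))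
        have hsum : ∑ v ∈ S, dg H v
            ≤ ∑ v ∈ S, dg (H.filter fun e => x ∉ e) v + (a + 2) * (V.card - 2).choose a := by
          rw [← hS'.2, ← smul_eq_mul, ← sum_const, ← sum_add_distrib]
          refine sum_le_sum fun v hv => ?_
          have h1 := codg_le hH (x := x) (y := v) (fun h => hxS (h ▸ hv))
          have h2 : dg (H.filter fun e => x ∈ e) v + dg (H.filter fun e => x ∉ e) v = dg H v := by
            unfold dg
            rw [filter_comm, filter_comm (fun e => x ∉ e)]
            exact card_filter_add_card_filter_not _
          omega
        obtain ⟨m, hm⟩ : ∃ m, V.card = m + 2 := ⟨V.card - 2, by omega⟩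
        rw [hVc]
        have e1 : V.card - 1 = m + 1 := by omega
        have e2 : V.card - 2 = m := by omega
        have e3 : V.card - 1 - 1 = m := by omega
        have e4 : V.card - 1 - (t + 1) = V.card - (t + 1 + 1) := by omega
        rw [e1, Nat.choose_succ_succ'] at hlt
        rw [e2] at hsum
        rw [e3, e4]
        have hle : (V.card - (t + 1 + 1)).choose (a + 1) ≤ m.choose (a + 1) :=
          Nat.choose_le_choose _ (by omega)
        rw [Nat.add_sub_assoc hle, mul_add] at hlt
        omega
      · rw [card_erase_of_mem hi, hI]; rfl
    · push Not at hA
      refine rainbow_of_small_degrees (rainbowBound a) (fun _ _ => hH) hI hV (fun _ _ => hA) ?_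
      intro _ _
      have hpos : 0 < (V.card - (t + 1 + 1)).choose (a + 1) := Nat.choose_pos (by omega)
      have hle : (V.card - (t + 1 + 1)).choose (a + 1) ≤ (V.card - 1).choose (a + 1) :=
        Nat.choose_le_choose _ (by omega)
      have h1 := lt_card_of_ore (b := a + 1) hH hV2 (by omega) hore
      have h2 := mul_choose_add_le (V.card - (t + 1 + 1)) a (t + 1)
      have e1 : V.card - (t + 1 + 1) + (t + 1) = V.card - 1 := by omega
      rw [e1] at h2
      have h3 := numeric_bound (by omega) hV
      have h4 : V.card * ((t + 1) * (V.card - (t + 1 + 1)).choose a) ≤ V.card *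
          ((V.card - 1).choose (a + 1) - (V.card - (t + 1 + 1)).choose (a + 1)) :=
        Nat.mul_le_mul_left _ (by omega)
      exact Nat.lt_of_mul_lt_mul_left (lt_of_le_of_lt (h3.trans h4) h1)

end

theorem stmt10 (n r s : ℕ) (hs : 2 ≤ s) (hr : 2 ≤ r) (hn : 3*r^2*(s-1) ≤ n)
    (H : Finset (Finset (Fin n))) (hunif : ∀ e ∈ H, e.card = r)
    (hore : ∀ S : Finset (Fin n), S.card = r → S ∉ H →
      r * ((n-1).choose (r-1) - (n-s).choose (r-1)) < ∑ v ∈ S, hdeg H v) :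
    ∃ M ⊆ H, M.card = s ∧ ∀ e ∈ M, ∀ f ∈ M, e ≠ f → Disjoint e f := by
  obtain ⟨a, rfl⟩ : ∃ a, r = a + 2 := ⟨r - 2, by omega⟩
  obtain ⟨t, rfl⟩ : ∃ t, s = t + 1 := ⟨s - 1, by omega⟩
  rw [Nat.add_sub_cancel] at hn
  have hc : (univ : Finset (Fin n)).card = n := by simp
  obtain ⟨e, he, hd⟩ := ore_matching (a := a) (t := t) (V := univ) (H := H) (I := range (t + 1))
    (fun f hf => mem_powersetCard.2 ⟨subset_univ _, hunif f hf⟩) (by rw [hc]; exact hn)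
    (by rw [hc]; nlinarith)
    (fun S hS hSH => by rw [hc]; exact hore S (mem_powersetCard.1 hS).2 hSH) (card_range _)
  refine ⟨(range (t + 1)).image e, image_subset_iff.2 he, ?_, ?_⟩
  · rw [card_image_of_injOn, card_range]
    intro i hi j hj hij
    by_contra hne
    -- edges are nonempty, so disjoint edges are distinct
    have h1 := hd i hi j hj hne
    rw [← hij, disjoint_self_iff_empty] at h1
    have h2 := hunif _ (he i hi)
    rw [h1] at h2
    simp at h2
  · intro f hf g hg hfg
    obtain ⟨i, hi, rfl⟩ := mem_image.1 hf
    obtain ⟨j, hj, rfl⟩ := mem_image.1 hg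
    exact hd i hi j hj fun h => hfg (congrArg e h)
end

section
/- Let r ≥ 3 and n > 3r²s. Suppose H_1, …, H_s are properly edge-colored r-uniform hypergraphs on the same n-vertex set, each with σ_r(H_i) > r·(C(n-1, r-1) − C(n-s, r-1)). Then there exist pairwise disjoint edges e_1 ∈ H_1, …, e_s ∈ H_s with pairwise distinct colors. -/
/-!
Write `s = m + 1`, `C = C(n-2, r-2)`. The proof is by induction on `s`, with three ingredients.

* A vertex `x` of degree above `r m C + m` in some `H i` can be deleted together with `H i`: at
  most `C` edges of `H i` through `x` contain another given vertex, and the edges through `x` have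
  pairwise distinct colours, so any rainbow matching of the other families avoiding `x` extends.
  By Pascal's rule the Ore condition for `(n, s)` passes to `(n - 1, s - 1)`.
* If every `H i` has at least `s` vertices of degree above `2 m C + m`, choose distinct such
  vertices `v i`. The links of the `v i`, restricted to the remaining vertices, are
  `(r - 1)`-uniform, injectively coloured, and have more than `m (C + 1)` edges. For such families
  an edge-count criterion (`linkCriterion`) yields a rainbow matching; it is proved by induction
  on the uniformity, using this very reduction to links.
* Otherwise some `H i` has all degrees at most `r m C + m` and at most `m` degrees above
  `2 m C + m`. Take a rainbow matching of the other families. If it cannot be extended, every edge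
  of `H i` meets its `r m` vertices or has one of its `m` colours, so `H i` has few edges
  (`exists_small_family`). On the other hand the Ore condition forces the average degree of `H i`
  to be at least `D = C(n-1, r-1) - C(n-s, r-1)` (`ore_average`), and the two bounds are
  incompatible when `n > 3 r² s` (`ore_arith`).
-/

open Finset

/-! ### Rainbow matchings and counting in stars -/

section Rainbow

variable {α ι : Type*} [DecidableEq α] [DecidableEq ι]

/-- The families `G i`, `i ∈ I`, admit a rainbow matching: pairwise disjoint representatives
`e i ∈ G i` whose colours are pairwise distinct. -/
def HasRainbow (I : Finset ι) (G : ι → Finset (Finset α)) (col : ι → Finset α → ℕ) : Prop :=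
  ∃ e : ι → Finset α, (∀ i ∈ I, e i ∈ G i) ∧
    (∀ i ∈ I, ∀ j ∈ I, i ≠ j → Disjoint (e i) (e j)) ∧
    (∀ i ∈ I, ∀ j ∈ I, i ≠ j → col i (e i) ≠ col j (e j))

/-- The degree of `x` in `F`, over an arbitrary vertex type. -/
def vdeg (F : Finset (Finset α)) (x : α) : ℕ := (F.filter fun e => x ∈ e).card

theorem card_star_le {n k : ℕ} {X : Finset α} (hX : X.card ≤ n) {F : Finset (Finset α)}
    (hF : F ⊆ X.powersetCard k) {x : α} (hx : ∀ e ∈ F, x ∈ e) :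
    F.card ≤ (n - 1).choose (k - 1) := by
  rcases F.eq_empty_or_nonempty with rfl | ⟨e₀, he₀⟩
  · simp
  have hxX : x ∈ X := (mem_powersetCard.1 (hF he₀)).1 (hx _ he₀)
  calc F.card ≤ ((X.erase x).powersetCard (k - 1)).card := by
        refine card_le_card_of_injOn (fun e => e.erase x) ?_ ?_
        · intro e he
          have := mem_powersetCard.1 (hF he)
          exact mem_powersetCard.2
            ⟨erase_subset_erase _ this.1, by rw [card_erase_of_mem (hx e he), this.2]⟩
        · intro e he f hf h
          have h' : e.erase x = f.erase x := h
          rw [← insert_erase (hx e he), ← insert_erase (hx f hf), h']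
    _ = (X.card - 1).choose (k - 1) := by rw [card_powersetCard, card_erase_of_mem hxX]
    _ ≤ _ := Nat.choose_le_choose _ (by omega)

theorem card_star_two_le {n k : ℕ} {X : Finset α} (hX : X.card ≤ n) {F : Finset (Finset α)}
    (hF : F ⊆ X.powersetCard k) {x y : α} (hxy : x ≠ y) (hx : ∀ e ∈ F, x ∈ e)
    (hy : ∀ e ∈ F, y ∈ e) : F.card ≤ (n - 2).choose (k - 2) := by
  rcases F.eq_empty_or_nonempty with rfl | ⟨e₀, he₀⟩
  · simp
  have hxX : x ∈ X := (mem_powersetCard.1 (hF he₀)).1 (hx _ he₀)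
  have hinj : Set.InjOn (fun e : Finset α => e.erase x) F := by
    intro e he f hf h
    have h' : e.erase x = f.erase x := h
    rw [← insert_erase (hx e he), ← insert_erase (hx f hf), h']
  rw [← card_image_of_injOn hinj]
  refine card_star_le (X := X.erase x) (n := n - 1) (k := k - 1) (x := y) ?_ ?_ ?_
  · rw [card_erase_of_mem hxX]; omega
  · intro f hf
    obtain ⟨e, he, rfl⟩ := mem_image.1 hf
    have := mem_powersetCard.1 (hF he)
    exact mem_powersetCard.2
      ⟨erase_subset_erase _ this.1, by rw [card_erase_of_mem (hx e he), this.2]⟩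
  · intro f hf
    obtain ⟨e, he, rfl⟩ := mem_image.1 hf
    exact mem_erase.2 ⟨hxy.symm, hy e he⟩

theorem card_hit_le_sum (F : Finset (Finset α)) (W : Finset α) :
    (F.filter fun e => ¬ Disjoint e W).card ≤ ∑ w ∈ W, vdeg F w := by
  refine (card_le_card ?_).trans (card_biUnion_le (s := W) (t := fun w => F.filter fun e => w ∈ e))
  intro e he
  obtain ⟨he, h⟩ := mem_filter.1 he
  obtain ⟨w, hwe, hwW⟩ := not_disjoint_iff.1 h
  exact mem_biUnion.2 ⟨w, hwW, mem_filter.2 ⟨he, hwe⟩⟩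

theorem card_star_hit_le {n k : ℕ} {X : Finset α} (hX : X.card ≤ n) {F : Finset (Finset α)}
    (hF : F ⊆ X.powersetCard k) {x : α} (hx : ∀ e ∈ F, x ∈ e) {W : Finset α} (hxW : x ∉ W) :
    (F.filter fun e => ¬ Disjoint e W).card ≤ W.card * (n - 2).choose (k - 2) := by
  refine (card_hit_le_sum F W).trans (sum_le_card_nsmul _ _ _ fun w hw => ?_)
  refine card_star_two_le hX ((filter_subset _ _).trans hF) (x := x) (y := w) ?_ ?_ ?_
  · rintro rfl; exact hxW hw
  · intro e he; exact hx e (mem_filter.1 he).1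
  · intro e he; exact (mem_filter.1 he).2

/-- A rainbow matching of all families but one extends by an edge of the remaining family
that avoids the vertices and the colours already used. -/
theorem HasRainbow.extend {I : Finset ι} {G : ι → Finset (Finset α)} {col : ι → Finset α → ℕ}
    {i : ι} {e : ι → Finset α} {f : Finset α}
    (h₁ : ∀ j ∈ I.erase i, e j ∈ G j)
    (h₂ : ∀ j ∈ I.erase i, ∀ l ∈ I.erase i, j ≠ l → Disjoint (e j) (e l))
    (h₃ : ∀ j ∈ I.erase i, ∀ l ∈ I.erase i, j ≠ l → col j (e j) ≠ col l (e l))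
    (hf : f ∈ G i) (hW : Disjoint f ((I.erase i).biUnion e))
    (hQ : col i f ∉ (I.erase i).image fun j => col j (e j)) : HasRainbow I G col := by
  have hd : ∀ j ∈ I.erase i, Disjoint f (e j) := fun j hj =>
    (disjoint_biUnion_right _ _ _).1 hW j hj
  have hc : ∀ j ∈ I.erase i, col i f ≠ col j (e j) := fun j hj h =>
    hQ (mem_image.2 ⟨j, hj, h.symm⟩)
  refine ⟨Function.update e i f, ?_, ?_, ?_⟩
  · intro j hj
    by_cases hji : j = i
    · subst hji; simpa using hf
    · simpa [hji] using h₁ j (mem_erase.2 ⟨hji, hj⟩)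
  · intro j hj l hl hjl
    by_cases hji : j = i
    · subst hji
      have hlj : l ≠ j := hjl.symm
      simpa [hlj] using hd l (mem_erase.2 ⟨hlj, hl⟩)
    · by_cases hli : l = i
      · subst hli
        simpa [hji] using (hd j (mem_erase.2 ⟨hji, hj⟩)).symm
      · simpa [hji, hli] using h₂ j (mem_erase.2 ⟨hji, hj⟩) l (mem_erase.2 ⟨hli, hl⟩) hjl
  · intro j hj l hl hjl
    by_cases hji : j = i
    · subst hji
      have hlj : l ≠ j := hjl.symm
      simpa [hlj] using hc l (mem_erase.2 ⟨hlj, hl⟩)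
    · by_cases hli : l = i
      · subst hli
        simpa [hji] using (hc j (mem_erase.2 ⟨hji, hj⟩)).symm
      · simpa [hji, hli] using h₃ j (mem_erase.2 ⟨hji, hj⟩) l (mem_erase.2 ⟨hli, hl⟩) hjl

theorem exists_injOn_choice {I : Finset ι} (hI : I.Nonempty) (S : ι → Finset α)
    (h : ∀ i ∈ I, I.card ≤ (S i).card) :
    ∃ v : ι → α, (∀ i ∈ I, v i ∈ S i) ∧ Set.InjOn v I := by
  obtain ⟨i₀, hi₀⟩ := hI
  obtain ⟨f, hf, hfS⟩ := (all_card_le_biUnion_card_iff_exists_injective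
    (fun i : {i // i ∈ I} => S i)).1 (by
      intro J
      rcases J.eq_empty_or_nonempty with rfl | ⟨j, hj⟩
      · simp
      calc J.card ≤ (univ : Finset {i // i ∈ I}).card := card_le_univ _
        _ = I.card := by simp
        _ ≤ (S j).card := h j j.2
        _ ≤ _ := card_le_card (subset_biUnion_of_mem (fun i : {i // i ∈ I} => S i) hj))
  refine ⟨fun i => if hi : i ∈ I then f ⟨i, hi⟩ else f ⟨i₀, hi₀⟩, ?_, ?_⟩
  · intro i hi
    simpa [hi] using hfS ⟨i, hi⟩
  · intro i hi j hj hij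
    have hi' : i ∈ I := hi
    have hj' : j ∈ I := hj
    simp only [hi', hj', dif_pos] at hij
    exact congrArg Subtype.val (hf hij)

/-! ### Reduction to links and the alternative of a small family -/

/-- The edge-count criterion for `k`-uniform families, each of whose colourings is injective.
The vertex set may have fewer than `n` elements, so that the criterion passes to sub-hypergraphs
without changing `n`. The summand `+ 1` accounts for the colours already used. -/
def LinkCriterion (α ι : Type*) [DecidableEq α] [DecidableEq ι] (k : ℕ) : Prop :=
  ∀ (n : ℕ) (X : Finset α) (I : Finset ι) (G : ι → Finset (Finset α)) (col : ι → Finset α → ℕ),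
    X.card ≤ n → 3 * k ^ 2 * I.card < n → (∀ i ∈ I, G i ⊆ X.powersetCard k) →
    (∀ i ∈ I, Set.InjOn (col i) (G i)) →
    (∀ i ∈ I, (I.card - 1) * ((n - 1).choose (k - 1) + 1) < (G i).card) → HasRainbow I G col

/-- A vertex of very large degree in one family extends any rainbow matching of the other
families that avoids this vertex. -/
theorem hasRainbow_of_large_degree {k n m : ℕ} {X : Finset α} {I : Finset ι}
    {G : ι → Finset (Finset α)} {col : ι → Finset α → ℕ} (hX : X.card ≤ n)
    (hI : I.card = m + 1) (hG : ∀ i ∈ I, G i ⊆ X.powersetCard k)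
    (hproper : ∀ i ∈ I, ∀ e ∈ G i, ∀ f ∈ G i, e ≠ f → ¬ Disjoint e f → col i e ≠ col i f)
    {i : ι} (hi : i ∈ I) {x : α}
    (hrec : HasRainbow (I.erase i) (fun j => (G j).filter fun e => x ∉ e) col)
    (hdeg : m * k * (n - 2).choose (k - 2) + m < vdeg (G i) x) : HasRainbow I G col := by
  obtain ⟨e, h₁, h₂, h₃⟩ := hrec
  have hcard : (I.erase i).card = m := by rw [card_erase_of_mem hi, hI]; rfl
  have hW : ((I.erase i).biUnion e).card ≤ m * k := by
    rw [← hcard]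
    refine card_biUnion_le_card_mul _ _ _ fun j hj => ?_
    exact (mem_powersetCard.1 (hG j (mem_of_mem_erase hj) (mem_filter.1 (h₁ j hj)).1)).2.le
  have hxW : x ∉ (I.erase i).biUnion e := by
    intro h
    obtain ⟨j, hj, hxj⟩ := mem_biUnion.1 h
    exact (mem_filter.1 (h₁ j hj)).2 hxj
  set W := (I.erase i).biUnion e with hWdef
  set Q := (I.erase i).image fun j => col j (e j) with hQdef
  have hQ : Q.card ≤ m := hcard ▸ card_image_le
  set F := (G i).filter fun f => x ∈ f with hF
  have hb₁ : (F.filter fun f => ¬ Disjoint f W).card ≤ m * k * (n - 2).choose (k - 2) :=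
    (card_star_hit_le hX ((filter_subset _ _).trans (hG i hi))
      (fun f hf => (mem_filter.1 hf).2) hxW).trans (Nat.mul_le_mul_right _ hW)
  have hb₂ : (F.filter fun f => col i f ∈ Q).card ≤ m := by
    refine le_trans (card_le_card_of_injOn (col i) (fun f hf => (mem_filter.1 hf).2) ?_) hQ
    intro f hf g hg hfg
    by_contra hne
    have hf' := mem_filter.1 (mem_filter.1 hf).1
    have hg' := mem_filter.1 (mem_filter.1 hg).1
    exact hproper i hi f hf'.1 g hg'.1 hne (not_disjoint_iff.2 ⟨x, hf'.2, hg'.2⟩) hfg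
  obtain ⟨f, hfF, hf⟩ : ∃ f ∈ F, Disjoint f W ∧ col i f ∉ Q := by
    by_contra! hcon
    have hsub : F ⊆ (F.filter fun f => ¬ Disjoint f W) ∪ F.filter fun f => col i f ∈ Q := by
      intro f hf
      by_cases hd : Disjoint f W
      · exact mem_union_right _ (mem_filter.2 ⟨hf, hcon f hf hd⟩)
      · exact mem_union_left _ (mem_filter.2 ⟨hf, hd⟩)
    have := (card_le_card hsub).trans (card_union_le _ _)
    have : vdeg (G i) x = F.card := rfl
    omega
  exact HasRainbow.extend (fun j hj => (mem_filter.1 (h₁ j hj)).1) h₂ h₃ (mem_filter.1 hfF).1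
    hf.1 hf.2

/-- Distinct vertices `v i` of fairly large degree, one for each family, give a rainbow matching:
the criterion applies to the links of the `v i`, restricted to the other vertices. -/
theorem hasRainbow_of_centres {k n m : ℕ} (hk : 2 ≤ k) (hlink : LinkCriterion α ι (k - 1))
    {X : Finset α} {I : Finset ι}
    {G : ι → Finset (Finset α)} {col : ι → Finset α → ℕ} (hX : X.card ≤ n)
    (hI : I.card = m + 1) (hn : 3 * k ^ 2 * (m + 1) < n) (hG : ∀ i ∈ I, G i ⊆ X.powersetCard k)
    (hproper : ∀ i ∈ I, ∀ e ∈ G i, ∀ f ∈ G i, e ≠ f → ¬ Disjoint e f → col i e ≠ col i f)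
    {v : ι → α} (hvX : ∀ i ∈ I, v i ∈ X) (hvinj : Set.InjOn v I)
    (hdeg : ∀ i ∈ I, 2 * m * (n - 2).choose (k - 2) + m < vdeg (G i) (v i)) :
    HasRainbow I G col := by
  set V := I.image v with hV
  set S : ι → Finset (Finset α) := fun i =>
    ((G i).filter fun e => v i ∈ e).filter fun e => Disjoint e (V.erase (v i)) with hS
  have hSmem : ∀ i e, e ∈ S i → e ∈ G i ∧ v i ∈ e ∧ Disjoint e (V.erase (v i)) := by
    intro i e he
    obtain ⟨he, hd⟩ := mem_filter.1 he
    exact ⟨(mem_filter.1 he).1, (mem_filter.1 he).2, hd⟩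
  have hIne : I.Nonempty := card_pos.1 (by omega)
  have hcard : ∀ i ∈ I, m * ((n - 1 - 1).choose (k - 1 - 1) + 1) <
      ((S i).image fun e => e.erase (v i)).card := by
    intro i hi
    have hinj : Set.InjOn (fun e : Finset α => e.erase (v i)) (S i) := by
      intro e he f hf h
      have h' : e.erase (v i) = f.erase (v i) := h
      rw [← insert_erase (hSmem i e he).2.1, ← insert_erase (hSmem i f hf).2.1, h']
    rw [card_image_of_injOn hinj]
    have h1 := card_filter_add_card_filter_not (s := (G i).filter fun e => v i ∈ e)
      (fun e => Disjoint e (V.erase (v i)))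
    have h2 := card_star_hit_le hX ((filter_subset (fun e => v i ∈ e) _).trans (hG i hi))
      (fun f hf => (mem_filter.1 hf).2) (notMem_erase (v i) V)
    have h3 : (V.erase (v i)).card ≤ m := by
      have hvV : v i ∈ V := mem_image_of_mem v hi
      rw [card_erase_of_mem hvV]
      have : V.card ≤ I.card := card_image_le
      omega
    have h4 := Nat.mul_le_mul_right ((n - 2).choose (k - 2)) h3
    have h5 := hdeg i hi
    have h6 : vdeg (G i) (v i) = ((G i).filter fun e => v i ∈ e).card := rfl
    have h7 : (S i).card = (((G i).filter fun e => v i ∈ e).filter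
      fun e => Disjoint e (V.erase (v i))).card := rfl
    have e1 : n - 1 - 1 = n - 2 := by omega
    have e2 : k - 1 - 1 = k - 2 := by omega
    rw [e1, e2]
    nlinarith
  have hrb : HasRainbow I (fun i => (S i).image fun e => e.erase (v i))
      (fun i e => col i (insert (v i) e)) := by
    refine hlink (n - 1) (X \ V) I _ _ ?_ ?_ ?_ ?_ ?_
    · obtain ⟨i, hi⟩ := hIne
      have h1 : (X \ V).card < X.card := by
        refine card_lt_card ((ssubset_iff_of_subset sdiff_subset).2 ⟨v i, hvX i hi, ?_⟩)
        exact fun h => (mem_sdiff.1 h).2 (mem_image_of_mem v hi)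
      omega
    · rw [hI]
      obtain ⟨k, rfl⟩ : ∃ l, k = l + 2 := ⟨k - 2, by omega⟩
      have : k + 2 - 1 = k + 1 := by omega
      rw [this]
      have : 3 * (k + 1) ^ 2 * (m + 1) + 1 ≤ 3 * (k + 2) ^ 2 * (m + 1) := by nlinarith
      omega
    · intro i hi g hg
      obtain ⟨e, he, rfl⟩ := mem_image.1 hg
      obtain ⟨heG, hve, hd⟩ := hSmem i e he
      have := mem_powersetCard.1 (hG i hi heG)
      refine mem_powersetCard.2 ⟨?_, by rw [card_erase_of_mem hve, this.2]⟩
      intro y hy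
      obtain ⟨hyv, hye⟩ := mem_erase.1 hy
      exact mem_sdiff.2 ⟨this.1 hye, fun hyV => disjoint_left.1 hd hye (mem_erase.2 ⟨hyv, hyV⟩)⟩
    · intro i hi g hg g' hg' hgg
      obtain ⟨e, he, rfl⟩ := mem_image.1 hg
      obtain ⟨e', he', rfl⟩ := mem_image.1 hg'
      obtain ⟨heG, hve, -⟩ := hSmem i e he
      obtain ⟨heG', hve', -⟩ := hSmem i e' he'
      have hgg' : col i (insert (v i) (e.erase (v i))) = col i (insert (v i) (e'.erase (v i))) := hgg
      rw [insert_erase hve, insert_erase hve'] at hgg'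
      by_contra hne
      refine hproper i hi e heG e' heG' ?_ (not_disjoint_iff.2 ⟨v i, hve, hve'⟩) hgg'
      rintro rfl
      exact hne rfl
    · intro i hi
      rw [hI]
      exact hcard i hi
  obtain ⟨f, h₁, h₂, h₃⟩ := hrb
  have hfm : ∀ i ∈ I, insert (v i) (f i) ∈ S i := by
    intro i hi
    obtain ⟨e, he, hef⟩ := mem_image.1 (h₁ i hi)
    rw [← hef, insert_erase (hSmem i e he).2.1]
    exact he
  have hvf : ∀ i ∈ I, ∀ j ∈ I, i ≠ j → v i ∉ f j := by
    intro i hi j hj hij hmem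
    refine disjoint_left.1 (hSmem j _ (hfm j hj)).2.2 (mem_insert_of_mem hmem) ?_
    exact mem_erase.2 ⟨fun h => hij (hvinj hi hj h), mem_image_of_mem v hi⟩
  refine ⟨fun i => insert (v i) (f i), fun i hi => (hSmem i _ (hfm i hi)).1, ?_, h₃⟩
  intro i hi j hj hij
  rw [disjoint_insert_left, disjoint_insert_right, mem_insert, not_or]
  exact ⟨⟨fun h => hij (hvinj hi hj h), hvf i hi j hj hij⟩, hvf j hj i hi hij.symm,
    h₂ i hi j hj hij⟩

/-- If there is no rainbow matching, although the families other than any given one have one,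
even after deletion of a vertex, then some family is small apart from its edges in at most `m`
colours. Indeed, with `C = (n - 2).choose (k - 2)`, its other edges all meet a set of at most
`m * k` vertices; at most `m` of these have degree above `2 * m * C + m`, and none has degree
above `m * k * C + m`, which exceeds the former value by `(k - 2) * m * C`. -/
theorem exists_small_family {k n m : ℕ} (hk : 2 ≤ k) (hlink : LinkCriterion α ι (k - 1))
    {X : Finset α} {I : Finset ι}
    {G : ι → Finset (Finset α)} {col : ι → Finset α → ℕ} (hX : X.card ≤ n)
    (hI : I.card = m + 1) (hn : 3 * k ^ 2 * (m + 1) < n) (hG : ∀ i ∈ I, G i ⊆ X.powersetCard k)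
    (hproper : ∀ i ∈ I, ∀ e ∈ G i, ∀ f ∈ G i, e ≠ f → ¬ Disjoint e f → col i e ≠ col i f)
    (hrec : ∀ i ∈ I, HasRainbow (I.erase i) G col)
    (hrec' : ∀ i ∈ I, ∀ x ∈ X,
      HasRainbow (I.erase i) (fun j => (G j).filter fun e => x ∉ e) col)
    (hno : ¬ HasRainbow I G col) :
    ∃ i ∈ I, ∃ Q : Finset ℕ, Q.card ≤ m ∧
      (G i).card ≤ m * k * (2 * m * (n - 2).choose (k - 2) + m) +
        m * ((k - 2) * m * (n - 2).choose (k - 2)) + ((G i).filter fun e => col i e ∈ Q).card := by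
  set C := (n - 2).choose (k - 2) with hC
  set T := 2 * m * C + m with hT
  have hmax : ∀ i ∈ I, ∀ x ∈ X, vdeg (G i) x ≤ m * k * C + m := by
    intro i hi x hx
    by_contra! h
    exact hno (hasRainbow_of_large_degree hX hI hG hproper hi (hrec' i hi x hx) h)
  obtain ⟨i, hi, hfew⟩ : ∃ i ∈ I, (X.filter fun x => T < vdeg (G i) x).card ≤ m := by
    by_contra! hcon
    obtain ⟨v, hv, hinj⟩ := exists_injOn_choice (I := I) (card_pos.1 (by omega))
      (fun i => X.filter fun x => T < vdeg (G i) x) (fun i hi => by have := hcon i hi; omega)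
    exact hno (hasRainbow_of_centres hk hlink hX hI hn hG hproper
      (fun i hi => (mem_filter.1 (hv i hi)).1) hinj (fun i hi => (mem_filter.1 (hv i hi)).2))
  obtain ⟨e, h₁, h₂, h₃⟩ := hrec i hi
  have hcard : (I.erase i).card = m := by rw [card_erase_of_mem hi, hI]; rfl
  set W := (I.erase i).biUnion e with hWdef
  set Q := (I.erase i).image fun j => col j (e j) with hQdef
  have hW : W.card ≤ m * k := by
    rw [← hcard]
    refine card_biUnion_le_card_mul _ _ _ fun j hj => ?_
    exact (mem_powersetCard.1 (hG j (mem_of_mem_erase hj) (h₁ j hj))).2.le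
  have hWX : W ⊆ X := biUnion_subset.2 fun j hj =>
    (mem_powersetCard.1 (hG j (mem_of_mem_erase hj) (h₁ j hj))).1
  refine ⟨i, hi, Q, hcard ▸ card_image_le, ?_⟩
  have hsub : G i ⊆ ((G i).filter fun f => ¬ Disjoint f W) ∪ (G i).filter fun f => col i f ∈ Q := by
    intro f hf
    by_cases hd : Disjoint f W
    · refine mem_union_right _ (mem_filter.2 ⟨hf, ?_⟩)
      by_contra hq
      exact hno (HasRainbow.extend h₁ h₂ h₃ hf hd hq)
    · exact mem_union_left _ (mem_filter.2 ⟨hf, hd⟩)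
  have hsum : ∑ w ∈ W, vdeg (G i) w ≤ m * k * T + m * ((k - 2) * m * C) := by
    calc ∑ w ∈ W, vdeg (G i) w
        ≤ ∑ w ∈ W, (T + if T < vdeg (G i) w then (k - 2) * m * C else 0) := by
          refine sum_le_sum fun w hw => ?_
          split_ifs with h
          · have := hmax i hi w (hWX hw)
            have e : m * k * C + m = T + (k - 2) * m * C := by
              obtain ⟨l, rfl⟩ : ∃ l, k = l + 2 := ⟨k - 2, by omega⟩
              simp only [hT, Nat.add_sub_cancel]
              ring
            omega
          · omega
      _ = W.card * T + (W.filter fun w => T < vdeg (G i) w).card * ((k - 2) * m * C) := by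
          rw [sum_add_distrib, sum_const, smul_eq_mul, ← sum_filter, sum_const, smul_eq_mul]
      _ ≤ _ := by
          gcongr
          exact (card_le_card (filter_subset_filter _ hWX)).trans hfew
  have h4 := (card_le_card hsub).trans (card_union_le _ _)
  have h5 := card_hit_le_sum (G i) W
  omega


/-! ### Binomial estimates -/

theorem le_choose {N q : ℕ} (hq : 1 ≤ q) (hqN : q + 1 ≤ N) : N ≤ N.choose q := by
  induction N generalizing q with
  | zero => omega
  | succ N ih =>
    obtain ⟨q, rfl⟩ : ∃ p, q = p + 1 := ⟨q - 1, by omega⟩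
    rw [Nat.choose_succ_succ']
    rcases Nat.lt_or_ge N (q + 1 + 1) with h | h
    · have : N = q + 1 := by omega
      subst this
      simp
    · have h1 := ih (q := q + 1) (by omega) h
      have h2 : 0 < N.choose q := Nat.choose_pos (by omega)
      omega

theorem choose_add_mul_le (N m p : ℕ) (hm : m ≤ N) :
    (N - m).choose (p + 1) + m * (N - m).choose p ≤ N.choose (p + 1) := by
  induction m with
  | zero => simp
  | succ m ih =>
    have h1 := ih (by omega)
    have h2 : N - m = N - (m + 1) + 1 := by omega
    have h3 : (N - m).choose (p + 1) =
        (N - (m + 1)).choose p + (N - (m + 1)).choose (p + 1) := by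
      rw [h2, Nat.choose_succ_succ']
    have h4 : (N - (m + 1)).choose p ≤ (N - m).choose p := Nat.choose_le_choose _ (by omega)
    have h5 := Nat.mul_le_mul_left m h4
    rw [add_mul]
    omega

/-- The Bernoulli-type bound `C(N - j, q) ≥ C(N, q) (1 - j q / N)`. -/
theorem mul_choose_le_s13 (N j q : ℕ) (hj : j ≤ N) :
    N * N.choose q ≤ N * (N - j).choose q + j * q * N.choose q := by
  rcases q with _ | q
  · simp
  rcases N with _ | N
  · simp
  have h : (N + 1).choose (q + 1) ≤ (N + 1 - j).choose (q + 1) + j * N.choose q := by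
    induction j with
    | zero => simp
    | succ j ih =>
      have h1 := ih (by omega)
      have h2 : N + 1 - j = N - j + 1 := by omega
      have h3 : N + 1 - (j + 1) = N - j := by omega
      rw [h2, Nat.choose_succ_succ' (N - j) q] at h1
      rw [h3, add_mul]
      have h4 : (N - j).choose q ≤ N.choose q := Nat.choose_le_choose _ (by omega)
      omega
  have h5 := Nat.add_one_mul_choose_eq N q
  have h6 := Nat.mul_le_mul_left (N + 1) h
  nlinarith

/-- The left side is the edge bound of `exists_small_family` without its colour term, divided by `m`.
Hence that bound does not exceed the count required by `LinkCriterion`. -/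
theorem link_arith {k n m : ℕ} (hk : 2 ≤ k) (hn : 3 * k ^ 2 * (m + 1) < n) :
    k * (2 * m * (n - 2).choose (k - 2) + m) + (k - 2) * m * (n - 2).choose (k - 2) ≤
      (n - 1).choose (k - 1) := by
  obtain ⟨l, rfl⟩ : ∃ l, k = l + 2 := ⟨k - 2, by omega⟩
  obtain ⟨N, rfl⟩ : ∃ N, n = N + 2 := ⟨n - 2, by
    have : 12 * (m + 1) ≤ 3 * (l + 2) ^ 2 * (m + 1) :=
      Nat.mul_le_mul_right _ (by nlinarith)
    omega⟩
  have e1 : l + 2 - 2 = l := by omega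
  have e2 : l + 2 - 1 = l + 1 := by omega
  have e3 : N + 2 - 2 = N := by omega
  have e4 : N + 2 - 1 = N + 1 := by omega
  rw [e1, e2, e3, e4]
  have h := Nat.add_one_mul_choose_eq N l
  rcases Nat.eq_zero_or_pos l with rfl | hl
  · simp at h ⊢
    omega
  · have hlN : l + 1 ≤ N := by nlinarith
    have hC := le_choose hl hlN
    set C := N.choose l
    set C' := (N + 1).choose (l + 1)
    have hkm : (l + 2) * m ≤ C := by nlinarith
    have h1 : (3 * (l + 2) ^ 2 * (m + 1)) * C ≤ (N + 1) * C :=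
      Nat.mul_le_mul_right _ (by omega)
    have h2 : (l + 1) * ((l + 2) * m) ≤ (l + 1) * C := Nat.mul_le_mul_left _ hkm
    refine Nat.le_of_mul_le_mul_right (c := l + 1) ?_ (by omega)
    have h3 : 0 ≤ l * C := Nat.zero_le _
    have h4 : 0 ≤ l * m * C := Nat.zero_le _
    have h5 : 0 ≤ l ^ 2 * C := Nat.zero_le _
    have h6 : 0 ≤ m * C := Nat.zero_le _
    rw [← h]
    nlinarith

/-- The left side is `r` times the edge bound of `exists_small_family`, plus the bound `m * n` on
`r` times the number of edges in `m` colours; the right side is the lower bound on `r` times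
the number of edges given by `ore_average`. -/
theorem ore_arith_s13 {r n m : ℕ} (hr : 3 ≤ r) (hm : 1 ≤ m) (hn : 3 * r ^ 2 * (m + 1) < n) :
    r * (m * r * (2 * m * (n - 2).choose (r - 2) + m) +
      m * ((r - 2) * m * (n - 2).choose (r - 2))) + m * n <
    n * ((n - 1).choose (r - 1) - (n - (m + 1)).choose (r - 1)) := by
  obtain ⟨l, rfl⟩ : ∃ l, r = l + 2 := ⟨r - 2, by omega⟩
  have hnm : 12 * (m + 1) ≤ 3 * (l + 2) ^ 2 * (m + 1) := Nat.mul_le_mul_right _ (by nlinarith)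
  obtain ⟨N, rfl⟩ : ∃ N, n = N + 2 := ⟨n - 2, by omega⟩
  obtain ⟨j, rfl⟩ : ∃ j, m = j + 1 := ⟨m - 1, by omega⟩
  have e1 : l + 2 - 2 = l := by omega
  have e2 : l + 2 - 1 = l + 1 := by omega
  have e3 : N + 2 - 2 = N := by omega
  have e4 : N + 2 - 1 = N + 1 := by omega
  have e5 : N + 2 - (j + 1 + 1) = N - j := by omega
  rw [e1, e2, e3, e4, e5]
  have h1 := choose_add_mul_le (N + 1) (j + 1) l (by omega)
  have e6 : N + 1 - (j + 1) = N - j := by omega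
  rw [e6] at h1
  have h2 := mul_choose_le_s13 N j l (by omega)
  have hlN : l + 1 ≤ N := by nlinarith
  have hC := le_choose (by omega) hlN
  set C := N.choose l
  set E := (N - j).choose l
  have hD : (j + 1) * E ≤ (N + 1).choose (l + 1) - (N - j).choose (l + 1) := by omega
  refine lt_of_lt_of_le ?_ (Nat.mul_le_mul_left _ hD)
  have h3 : (N + 2) * C ≤ (N + 2) * E + (j + 1) * l * C := by
    refine Nat.le_of_mul_le_mul_left (c := N) ?_ (by omega)
    have h4 := Nat.mul_le_mul_left (N + 2) h2
    have h5 : (N + 2) * j ≤ N * (j + 1) := by nlinarith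
    have h6 := Nat.mul_le_mul_right (l * C) h5
    nlinarith
  have h7 : (l + 2) * ((l + 2) * (2 * (j + 1) * C + (j + 1)) + l * (j + 1) * C) + (N + 2) <
      (N + 2) * E := by
    have h8 : (3 * (l + 2) ^ 2 * (j + 1 + 1)) * C ≤ (N + 2) * C :=
      Nat.mul_le_mul_right _ (by omega)
    have h9 : 3 * ((l + 2) ^ 2 * (j + 1)) ≤ N + 2 := by nlinarith
    have hl2 : 9 ≤ (l + 2) ^ 2 := by nlinarith
    have h10 : 9 * C ≤ (l + 2) ^ 2 * C := Nat.mul_le_mul_right _ hl2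
    have h11 : (l + 2) ^ 2 * (j + 1) + (N + 2) < 3 * ((l + 2) ^ 2 * C) := by omega
    have h12 : 0 ≤ (j + 1) * C * (l + 4) := Nat.zero_le _
    clear_value C E
    linarith
  clear_value C E
  have h13 := Nat.mul_lt_mul_of_pos_left h7 (Nat.succ_pos j)
  calc _ = (j + 1) * ((l + 2) * ((l + 2) * (2 * (j + 1) * C + (j + 1)) + l * (j + 1) * C)
        + (N + 2)) := by ring
    _ < (j + 1) * ((N + 2) * E) := h13
    _ = _ := by ring

/-! ### The edge-count criterion -/

/-- For singletons a greedy choice works: at most `m` are excluded by vertices and at most `m`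
by colours. -/
theorem linkCriterion_one : LinkCriterion α ι 1 := by
  intro n X I G col hX hn hG hinj hcard
  replace hn : 0 < n := by omega
  induction hs : I.card generalizing I with
  | zero =>
    obtain rfl := card_eq_zero.1 hs
    exact ⟨fun _ => ∅, by simp, by simp, by simp⟩
  | succ m ih =>
    obtain ⟨i, hi⟩ : I.Nonempty := card_pos.1 (by omega)
    have hcI : (I.erase i).card = m := by rw [card_erase_of_mem hi, hs]; rfl
    have hc : ∀ j ∈ I, m * 2 < (G j).card := by
      intro j hj
      have := hcard j hj
      rw [hs] at this
      simpa using this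
    obtain ⟨e, h₁, h₂, h₃⟩ := ih (I.erase i) (fun j hj => hG j (mem_of_mem_erase hj))
      (fun j hj => hinj j (mem_of_mem_erase hj)) (by
        intro j hj
        have := hc j (mem_of_mem_erase hj)
        rw [hcI]
        simp only [Nat.sub_self, Nat.choose_zero_right]
        omega) hcI
    set W := (I.erase i).biUnion e with hWdef
    set Q := (I.erase i).image fun j => col j (e j) with hQdef
    have hQ : Q.card ≤ m := hcI ▸ card_image_le
    have hW : W.card ≤ m := by
      rw [← hcI, ← mul_one (I.erase i).card]
      refine card_biUnion_le_card_mul _ _ _ fun j hj => ?_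
      exact (mem_powersetCard.1 (hG j (mem_of_mem_erase hj) (h₁ j hj))).2.le
    have hb₁ : ((G i).filter fun f => ¬ Disjoint f W).card ≤ m := by
      refine (card_hit_le_sum _ _).trans ((sum_le_card_nsmul _ _ 1 fun w _ => ?_).trans ?_)
      · refine (card_star_le hX ((filter_subset _ _).trans (hG i hi)) (x := w) ?_).trans (by simp)
        intro f hf
        exact (mem_filter.1 hf).2
      · simpa using hW
    have hb₂ : ((G i).filter fun f => col i f ∈ Q).card ≤ m := by
      refine le_trans (card_le_card_of_injOn (col i) (fun f hf => (mem_filter.1 hf).2) ?_) hQ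
      exact (hinj i hi).mono fun f hf => (mem_filter.1 hf).1
    obtain ⟨f, hfG, hf⟩ : ∃ f ∈ G i, Disjoint f W ∧ col i f ∉ Q := by
      by_contra! hcon
      have hsub : G i ⊆ ((G i).filter fun f => ¬ Disjoint f W) ∪
          (G i).filter fun f => col i f ∈ Q := by
        intro f hf
        by_cases hd : Disjoint f W
        · exact mem_union_right _ (mem_filter.2 ⟨hf, hcon f hf hd⟩)
        · exact mem_union_left _ (mem_filter.2 ⟨hf, hd⟩)
      have h4 := (card_le_card hsub).trans (card_union_le _ _)
      have h5 := hc i hi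
      omega
    exact HasRainbow.extend h₁ h₂ h₃ hfG hf.1 hf.2

/-- Deleting a vertex destroys at most `C(n-1, k-1)` edges of each family, which is covered by
lowering the number of families by one; so a minimal failure would have a small family. -/
theorem LinkCriterion.succ {k : ℕ} (hk : 2 ≤ k) (hlink : LinkCriterion α ι (k - 1)) :
    LinkCriterion α ι k := by
  intro n X I G col hX hn hG hinj hcard
  induction hs : I.card generalizing I G with
  | zero =>
    obtain rfl := card_eq_zero.1 hs
    exact ⟨fun _ => ∅, by simp, by simp, by simp⟩
  | succ m ih =>
    by_contra hno
    rw [hs] at hn hcard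
    simp only [Nat.add_sub_cancel] at hcard
    have hcI : ∀ i ∈ I, (I.erase i).card = m := fun i hi => by
      rw [card_erase_of_mem hi, hs]; rfl
    have hn' : 3 * k ^ 2 * m < n := by
      have : 3 * k ^ 2 * m ≤ 3 * k ^ 2 * (m + 1) := Nat.mul_le_mul_left _ (by omega)
      omega
    have key := exists_small_family hk hlink hX hs hn hG
      (fun i hi e he f hf hne _ h => hne (hinj i hi he hf h)) ?_ ?_ hno
    · obtain ⟨i, hi, Q, hQ, hle⟩ := key
      have hb : ((G i).filter fun f => col i f ∈ Q).card ≤ m := by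
        refine le_trans (card_le_card_of_injOn (col i) (fun f hf => (mem_filter.1 hf).2) ?_) hQ
        exact (hinj i hi).mono fun f hf => (mem_filter.1 hf).1
      have h1 := hcard i hi
      have h2 := Nat.mul_le_mul_left m (link_arith hk hn)
      have h3 : m * (k * (2 * m * (n - 2).choose (k - 2) + m) +
          (k - 2) * m * (n - 2).choose (k - 2)) =
          m * k * (2 * m * (n - 2).choose (k - 2) + m) +
          m * ((k - 2) * m * (n - 2).choose (k - 2)) := by ring
      rw [h3] at h2
      rw [mul_add, mul_one] at h1
      omega
    · intro i hi
      refine ih (I.erase i) G (by rw [hcI i hi]; exact hn')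
        (fun j hj => hG j (mem_of_mem_erase hj)) (fun j hj => hinj j (mem_of_mem_erase hj))
        (fun j hj => ?_) (hcI i hi)
      rw [hcI i hi]
      refine lt_of_le_of_lt ?_ (hcard j (mem_of_mem_erase hj))
      exact Nat.mul_le_mul_right _ (by omega)
    · intro i hi x _
      refine ih (I.erase i) (fun j => (G j).filter fun e => x ∉ e) (by rw [hcI i hi]; exact hn')
        (fun j hj => (filter_subset _ _).trans (hG j (mem_of_mem_erase hj)))
        (fun j hj => (hinj j (mem_of_mem_erase hj)).mono fun f hf => (mem_filter.1 hf).1)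
        (fun j hj => ?_) (hcI i hi)
      have hjI := mem_of_mem_erase hj
      have hm : 0 < m := hcI i hi ▸ card_pos.2 ⟨j, hj⟩
      obtain ⟨p, rfl⟩ : ∃ p, m = p + 1 := ⟨m - 1, by omega⟩
      rw [hcI i hi, Nat.add_sub_cancel]
      have h1 := hcard j hjI
      have h2 := card_filter_add_card_filter_not (s := G j) (fun e => x ∈ e)
      have h3 := card_star_le hX ((filter_subset (fun e => x ∈ e) _).trans (hG j hjI))
        (fun f hf => (mem_filter.1 hf).2)
      rw [add_mul, one_mul] at h1
      omega

theorem linkCriterion (k : ℕ) (hk : 1 ≤ k) : LinkCriterion α ι k := by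
  induction k, hk using Nat.le_induction with
  | base => exact linkCriterion_one
  | succ k hk ih => exact LinkCriterion.succ (by omega) ih

/-! ### The Ore condition -/

theorem sum_vdeg {r : ℕ} {X : Finset α} {F : Finset (Finset α)} (hF : F ⊆ X.powersetCard r) :
    ∑ v ∈ X, vdeg F v = r * F.card := by
  have h := sum_card_bipartiteAbove_eq_sum_card_bipartiteBelow (s := X) (t := F)
    (fun (v : α) (e : Finset α) => v ∈ e)
  have h' : ∑ e ∈ F, (X.filter fun v => v ∈ e).card = ∑ e ∈ F, r := by
    refine sum_congr rfl fun e he => ?_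
    have := mem_powersetCard.1 (hF he)
    rw [filter_mem_eq_inter, inter_eq_right.2 this.1, this.2]
  rw [sum_const, smul_eq_mul, mul_comm] at h'
  exact h.trans h'

/-- The Ore-type condition bounds the average degree from below. Summing `deg v - D` over all
incidences of non-edges gives `∑ (K - deg v) (deg v - D) ≥ 0`, where `K` is the number of `r`-sets
through a vertex; each summand is at most `(K - D) (deg v - D)`. -/
theorem ore_average {r D : ℕ} (hr : 1 ≤ r) {X : Finset α} {F : Finset (Finset α)}
    (hF : F ⊆ X.powersetCard r) (hD : D < (X.card - 1).choose (r - 1))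
    (hore : ∀ S ∈ X.powersetCard r, S ∉ F → r * D ≤ ∑ v ∈ S, vdeg F v) :
    X.card * D ≤ r * F.card := by
  set K := (X.card - 1).choose (r - 1) with hK
  set N := X.powersetCard r \ F with hN
  have hNdeg : ∀ v ∈ X, ((N.filter fun S => v ∈ S).card : ℤ) = K - vdeg F v := by
    intro v hv
    have h1 := card_filter_powersetCard_subset {v} X r (by simpa using hv) (by simpa using hr)
    simp only [singleton_subset_iff, card_singleton] at h1
    have h2 : (N.filter fun S => v ∈ S) =
        ((X.powersetCard r).filter fun S => v ∈ S) \ F.filter fun S => v ∈ S := by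
      ext S
      simp only [hN, mem_filter, mem_sdiff]
      tauto
    have h3 := card_sdiff_add_card_eq_card (filter_subset_filter (fun S => v ∈ S) hF)
    rw [← h2, h1] at h3
    have h4 : vdeg F v = (F.filter fun S => v ∈ S).card := rfl
    rw [h4]
    omega
  have hdouble : ∑ S ∈ N, ∑ v ∈ S, ((vdeg F v : ℤ) - D) =
      ∑ v ∈ X, ((K : ℤ) - vdeg F v) * ((vdeg F v : ℤ) - D) := by
    rw [sum_comm' (t' := X) (s' := fun v => N.filter fun S => v ∈ S)]
    · refine sum_congr rfl fun v hv => ?_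
      rw [sum_const, nsmul_eq_mul, hNdeg v hv]
    · intro S v
      simp only [mem_filter]
      refine ⟨fun h => ⟨h, ?_⟩, fun h => h.1⟩
      exact (mem_powersetCard.1 (mem_sdiff.1 h.1).1).1 h.2
  have hnonneg : 0 ≤ ∑ S ∈ N, ∑ v ∈ S, ((vdeg F v : ℤ) - D) := by
    refine sum_nonneg fun S hS => ?_
    obtain ⟨hSX, hSF⟩ := mem_sdiff.1 hS
    have h1 := hore S hSX hSF
    rw [sum_sub_distrib, sum_const, (mem_powersetCard.1 hSX).2, nsmul_eq_mul]
    have h2 : ((r * D : ℕ) : ℤ) ≤ ((∑ v ∈ S, vdeg F v : ℕ) : ℤ) := by exact_mod_cast h1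
    push_cast at h2
    linarith
  have hle : ∑ v ∈ X, ((K : ℤ) - vdeg F v) * ((vdeg F v : ℤ) - D) ≤
      ∑ v ∈ X, ((K : ℤ) - D) * ((vdeg F v : ℤ) - D) :=
    sum_le_sum fun v _ => by nlinarith [sq_nonneg ((vdeg F v : ℤ) - D)]
  rw [← mul_sum, sum_sub_distrib, sum_const, nsmul_eq_mul] at hle
  have hKD : (0 : ℤ) < (K : ℤ) - D := by
    have : (D : ℤ) < K := by exact_mod_cast hD
    linarith
  have hfin := nonneg_of_mul_nonneg_right (hnonneg.trans (hdouble.le.trans hle)) hKD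
  have hs : (∑ v ∈ X, (vdeg F v : ℤ)) = ((r * F.card : ℕ) : ℤ) := by
    rw [← sum_vdeg hF]; push_cast; rfl
  rw [hs] at hfin
  have : ((X.card * D : ℕ) : ℤ) ≤ ((r * F.card : ℕ) : ℤ) := by push_cast at hfin ⊢; linarith
  exact_mod_cast this

/-- Each colour class of a proper colouring is a matching, so it has at most `n / r` edges. -/
theorem colour_loss {r n : ℕ} {X : Finset α} {F : Finset (Finset α)} {c : Finset α → ℕ}
    (hX : X.card ≤ n) (hF : F ⊆ X.powersetCard r)
    (hproper : ∀ e ∈ F, ∀ f ∈ F, e ≠ f → ¬ Disjoint e f → c e ≠ c f) (Q : Finset ℕ) :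
    r * (F.filter fun e => c e ∈ Q).card ≤ Q.card * n := by
  have h1 : (F.filter fun e => c e ∈ Q) ⊆ Q.biUnion fun q => F.filter fun e => c e = q := by
    intro e he
    obtain ⟨he, hq⟩ := mem_filter.1 he
    exact mem_biUnion.2 ⟨c e, hq, mem_filter.2 ⟨he, rfl⟩⟩
  have h2 : ∀ q ∈ Q, r * (F.filter fun e => c e = q).card ≤ n := by
    intro q _
    set M := F.filter fun e => c e = q with hM
    have hdisj : (M : Set (Finset α)).PairwiseDisjoint id := by
      intro e he f hf hne
      have he' := mem_filter.1 he
      have hf' := mem_filter.1 hf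
      by_contra hd
      exact hproper e he'.1 f hf'.1 hne hd (he'.2.trans hf'.2.symm)
    have h3 : (M.biUnion id).card = M.card * r := by
      rw [card_biUnion hdisj, sum_const_nat]
      intro e he
      exact (mem_powersetCard.1 (hF (mem_filter.1 he).1)).2
    have h4 : M.biUnion id ⊆ X := biUnion_subset.2 fun e he =>
      (mem_powersetCard.1 (hF (mem_filter.1 he).1)).1
    have h5 := card_le_card h4
    rw [mul_comm]
    omega
  calc r * (F.filter fun e => c e ∈ Q).card
      ≤ r * ∑ q ∈ Q, (F.filter fun e => c e = q).card :=
        Nat.mul_le_mul_left _ ((card_le_card h1).trans card_biUnion_le)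
    _ = ∑ q ∈ Q, r * (F.filter fun e => c e = q).card := mul_sum _ _ _
    _ ≤ Q.card * n := sum_le_card_nsmul _ _ _ h2

/-- The Ore-type theorem over an arbitrary finite vertex set and index set, the generality that
deletion of a vertex together with a family requires. -/
theorem hasRainbow_of_ore {r : ℕ} (hr : 3 ≤ r) (s n : ℕ) (X : Finset α) (I : Finset ι)
    (G : ι → Finset (Finset α)) (col : ι → Finset α → ℕ)
    (hX : X.card = n) (hI : I.card = s) (hn : 3 * r ^ 2 * s < n)
    (hG : ∀ i ∈ I, G i ⊆ X.powersetCard r)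
    (hproper : ∀ i ∈ I, ∀ e ∈ G i, ∀ f ∈ G i, e ≠ f → ¬ Disjoint e f → col i e ≠ col i f)
    (hore : ∀ i ∈ I, ∀ S ∈ X.powersetCard r, S ∉ G i →
      r * ((n - 1).choose (r - 1) - (n - s).choose (r - 1)) < ∑ v ∈ S, vdeg (G i) v) :
    HasRainbow I G col := by
  induction s generalizing n X I G with
  | zero =>
    obtain rfl := card_eq_zero.1 hI
    exact ⟨fun _ => ∅, by simp, by simp, by simp⟩
  | succ m ih =>
    by_contra hno
    have hcI : ∀ i ∈ I, (I.erase i).card = m := fun i hi => by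
      rw [card_erase_of_mem hi, hI]; rfl
    have hr2 : 9 ≤ r ^ 2 := by nlinarith
    have hrr : 3 * r ≤ 3 * r ^ 2 := by nlinarith
    have hnm : 3 * r ^ 2 * (m + 1) = 3 * r ^ 2 * m + 3 * r ^ 2 := by ring
    have hm9 : 27 * m ≤ 3 * r ^ 2 * m := Nat.mul_le_mul_right _ (by omega)
    have key := exists_small_family (by omega : 2 ≤ r)
      (linkCriterion (r - 1) (by omega)) hX.le hI hn hG hproper ?_ ?_ hno
    · obtain ⟨i, hi, Q, hQ, hle⟩ := key
      have hloss := (colour_loss hX.le (hG i hi) (hproper i hi) Q).trans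
        (Nat.mul_le_mul_right n hQ)
      rcases Nat.eq_zero_or_pos m with rfl | hm
      · -- for a single family the bounds force it to be empty, while non-edges have positive sum
        have h0 : (G i).card = 0 := by
          have : ((G i).filter fun e => col i e ∈ Q).card = 0 := by
            have : r * ((G i).filter fun e => col i e ∈ Q).card = 0 := by omega
            rcases Nat.mul_eq_zero.1 this with h | h
            · omega
            · exact h
          simp only [zero_mul, zero_add] at hle
          omega
        have hemp := card_eq_zero.1 h0
        obtain ⟨S, hS⟩ : (X.powersetCard r).Nonempty := powersetCard_nonempty.2 (by omega)
        have h1 := hore i hi S hS (by simp [hemp])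
        simp [vdeg, hemp] at h1
      · have hpos : 0 < (n - (m + 1)).choose (r - 1) := Nat.choose_pos (by omega)
        have hle' : (n - (m + 1)).choose (r - 1) ≤ (n - 1).choose (r - 1) :=
          Nat.choose_le_choose _ (by omega)
        have h1 := ore_average (D := (n - 1).choose (r - 1) - (n - (m + 1)).choose (r - 1))
          (by omega) (hG i hi) (by rw [hX]; omega) (fun S hS hSG => (hore i hi S hS hSG).le)
        have h2 := ore_arith_s13 hr hm hn
        have h3 := Nat.mul_le_mul_left r hle
        rw [mul_add] at h3
        rw [hX] at h1
        omega
    · intro i hi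
      refine ih n X (I.erase i) G hX (hcI i hi) (by omega)
        (fun j hj => hG j (mem_of_mem_erase hj)) (fun j hj => hproper j (mem_of_mem_erase hj))
        (fun j hj S hS hSG => ?_)
      refine lt_of_le_of_lt ?_ (hore j (mem_of_mem_erase hj) S hS hSG)
      have : (n - (m + 1)).choose (r - 1) ≤ (n - m).choose (r - 1) :=
        Nat.choose_le_choose _ (by omega)
      exact Nat.mul_le_mul_left _ (by omega)
    · intro i hi x hx
      refine ih (n - 1) (X.erase x) (I.erase i) (fun j => (G j).filter fun e => x ∉ e)
        (by rw [card_erase_of_mem hx, hX]) (hcI i hi) (by omega) ?_ ?_ ?_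
      · intro j hj e he
        obtain ⟨he, hxe⟩ := mem_filter.1 he
        have := mem_powersetCard.1 (hG j (mem_of_mem_erase hj) he)
        exact mem_powersetCard.2 ⟨subset_erase.2 ⟨this.1, hxe⟩, this.2⟩
      · intro j hj e he f hf
        exact hproper j (mem_of_mem_erase hj) e (mem_filter.1 he).1 f (mem_filter.1 hf).1
      · intro j hj S hS hSG
        have hjI := mem_of_mem_erase hj
        obtain ⟨hSX, hSr⟩ := mem_powersetCard.1 hS
        obtain ⟨hSX, hxS⟩ := subset_erase.1 hSX
        have h1 := hore j hjI S (mem_powersetCard.2 ⟨hSX, hSr⟩)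
          (fun h => hSG (mem_filter.2 ⟨h, hxS⟩))
        have h2 : ∑ v ∈ S, vdeg (G j) v ≤
            ∑ v ∈ S, (vdeg ((G j).filter fun e => x ∉ e) v + (n - 2).choose (r - 2)) := by
          refine sum_le_sum fun v hv => ?_
          have hxv : x ≠ v := by rintro rfl; exact hxS hv
          have h3 := card_filter_add_card_filter_not (s := (G j).filter fun e => v ∈ e)
            (fun e => x ∈ e)
          have h4 : (((G j).filter fun e => v ∈ e).filter fun e => x ∈ e).card ≤
              (n - 2).choose (r - 2) :=
            card_star_two_le hX.le
              (((filter_subset _ _).trans (filter_subset _ _)).trans (hG j hjI)) hxv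
              (fun f hf => (mem_filter.1 hf).2)
              (fun f hf => (mem_filter.1 (mem_filter.1 hf).1).2)
          have h5 : vdeg ((G j).filter fun e => x ∉ e) v =
              (((G j).filter fun e => v ∈ e).filter fun e => x ∉ e).card := by
            rw [vdeg, filter_comm]
          have h6 : vdeg (G j) v = ((G j).filter fun e => v ∈ e).card := rfl
          omega
        rw [sum_add_distrib, sum_const, hSr, smul_eq_mul] at h2
        -- Pascal's rule: lowering `n` and `s` by one lowers the threshold by `C(n-2, r-2)`.
        have hpascal : (n - 1).choose (r - 1) =
            (n - 2).choose (r - 2) + (n - 2).choose (r - 1) := by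
          have e1 : n - 1 = n - 2 + 1 := by omega
          have e2 : r - 1 = r - 2 + 1 := by omega
          rw [e1, e2, Nat.choose_succ_succ']
        have e3 : n - 1 - 1 = n - 2 := by omega
        have e4 : n - 1 - m = n - (m + 1) := by omega
        rw [e3, e4]
        have hm : 0 < m := hcI i hi ▸ card_pos.2 ⟨j, hj⟩
        have h9 : (n - (m + 1)).choose (r - 1) ≤ (n - 2).choose (r - 1) :=
          Nat.choose_le_choose _ (by omega)
        have h10 := Nat.mul_add r ((n - 2).choose (r - 2))
          ((n - 2).choose (r - 1) - (n - (m + 1)).choose (r - 1))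
        have h11 : (n - 2).choose (r - 2) +
            ((n - 2).choose (r - 1) - (n - (m + 1)).choose (r - 1)) =
            (n - 1).choose (r - 1) - (n - (m + 1)).choose (r - 1) := by omega
        rw [h11] at h10
        omega

end Rainbow

theorem stmt13 (n r s : ℕ) (hr : 3 ≤ r) (hn : 3*r^2*s < n)
    (H : Fin s → Finset (Finset (Fin n))) (col : Fin s → Finset (Fin n) → ℕ)
    (hunif : ∀ i, ∀ e ∈ H i, e.card = r)
    (hproper : ∀ i, ∀ e ∈ H i, ∀ f ∈ H i, e ≠ f → ¬ Disjoint e f → col i e ≠ col i f)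
    (hore : ∀ i, ∀ S : Finset (Fin n), S.card = r → S ∉ H i →
      r * ((n-1).choose (r-1) - (n-s).choose (r-1)) < ∑ v ∈ S, hdeg (H i) v) :
    ∃ e : Fin s → Finset (Fin n), (∀ i, e i ∈ H i) ∧
      (∀ i j, i ≠ j → Disjoint (e i) (e j)) ∧
      (∀ i j, i ≠ j → col i (e i) ≠ col j (e j)) := by
  obtain ⟨e, h₁, h₂, h₃⟩ := hasRainbow_of_ore hr s n univ univ H col (by simp) (by simp) hn
    (fun i _ e he => mem_powersetCard.2 ⟨subset_univ _, hunif i e he⟩)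
    (fun i _ => hproper i)
    (fun i _ S hS hSH => hore i S (mem_powersetCard.1 hS).2 hSH)
  exact ⟨e, fun i => h₁ i (mem_univ _), fun i j => h₂ i (mem_univ _) j (mem_univ _),
    fun i j => h₃ i (mem_univ _) j (mem_univ _)⟩
end
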